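/- Let 0<c₁<⋯<c_m be non-integer reals. For every p∈(1,∞) there is a constant C depending only on c₁,…,c_m, m, p such that for every collection {f_k}_{k=1}^{∞} of functions on ℤ^m, ‖ ( ∑_{k=1}^{∞} |Ã_{2^k} f_k|² )^{1/2} ‖_{ℓ^p(ℤ^m)} ≤ C ‖ ( ∑_{k=1}^{∞} |f_k|² )^{1/2} ‖_{ℓ^p(ℤ^m)}, where Ã_N g(x) = (1/N) ∑_{n=1}^{N} 1_{n>N/2} g(x−(⌊n^{c₁}⌋,…,⌊n^{c_m}⌋)). -/

import Mathlib

/-!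
The averages are positive operators, so it suffices to bound `|f_k|` and finitely many scales
(`AvBound`), with a constant independent of their number.

**Reduction to a smooth kernel.** Up to a factor `4 ^ m` the average at scale `2 ^ (k + 1)` is
dominated by convolution with a kernel smoothed at unit scale by the Fejér bump and truncated to the
box `bx` (`avg_le_Kk`). Since the Fourier transform of the bump lives on `[-1/2, 1/2]`, the
multiplier of the smoothed kernel is the exponential sum `Sx` of the phase `∑ θᵢ n ^ cᵢ` itself,
*without* floors, restricted to one period of the torus.

**Exponential sums.** As the exponents are distinct and not integers, the falling factorials of `m`
consecutive orders form an invertible matrix (`ffall_nondeg`), so at each point some derivative of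
the phase of bounded order is as large as possible. Van der Corput differencing down to the
Kusmin–Landau estimate then gives a power saving in `max_i P ^ cᵢ |θᵢ|` (`expsum_curve`).

**Martingale decomposition.** With respect to the anisotropic dyadic cubes of side lengths about
`2 ^ (j cᵢ)`, the identity is split as `E_k + ∑_s (E_{k-s} - E_{k-s+1})`. Comparing the exponential
sum with box averages at an intermediate scale (`Sx_split`) and using that martingale differences
have mean zero on small cells (`etaConv_l2`) shows that the composition of the `k`-th convolution
with the `s`-th piece has `ℓ²` norm `O(2 ^ (-δ s))`, uniformly in `k` (`piece_l2`).

**Conclusion.** For fixed `s`, a Calderón–Zygmund decomposition for `ℓ²`-valued functions gives a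
weak type `(1,1)` bound for the diagonal operator, growing only linearly in `s`: a bad function on
cells of generation `j` is annihilated for `k ≥ j + s` and stays near its support for `k < j`
(`weak11`). Interpolating with `ℓ²` and summing over `s` settles `1 < p < 2` (`avBound_low`). The
case `p = 2` is Jensen's inequality, and `p > 2` follows by duality, the adjoint of an average being
its conjugate by `x ↦ -x` (`avBound_high`).
-/

open MeasureTheory Filter Finset
open scoped ENNReal NNReal

noncomputable section

/-- The upper-half discrete averages
`Ã_N f (x) = (1/N) ∑_{n=1}^{N} 1_{n > N/2} f(x − (⌊n^{c₁}⌋, …, ⌊n^{c_m}⌋))`. -/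
def Atil (m : ℕ) (c : Fin m → ℝ) (N : ℕ) (f : (Fin m → ℤ) → ℂ)
    (x : Fin m → ℤ) : ℂ :=
  (N : ℂ)⁻¹ * ∑ n ∈ Finset.Icc 1 N,
    if N < 2 * n then f (x - fun i => ⌊(n : ℝ) ^ c i⌋) else 0

/-- The `ℓ^p(ℤ^m)` norm of a complex-valued function. -/
def lpZ (m : ℕ) (p : ℝ) (f : (Fin m → ℤ) → ℂ) : ℝ≥0∞ :=
  (∑' x : Fin m → ℤ, (‖f x‖₊ : ℝ≥0∞) ^ p) ^ p⁻¹

/-- The `ℓ^p(ℤ^m)` norm of an `ℝ≥0∞`-valued function. -/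
def lpZE (m : ℕ) (p : ℝ) (g : (Fin m → ℤ) → ℝ≥0∞) : ℝ≥0∞ :=
  (∑' x : Fin m → ℤ, g x ^ p) ^ p⁻¹

/-! ### The additive character and van der Corput's inequality -/

/-- The additive character `e(x) = exp(2πix)`. -/
def ex (x : ℝ) : ℂ := Complex.exp (((2 * Real.pi * x : ℝ) : ℂ) * Complex.I)

theorem ex_add (x y : ℝ) : ex (x + y) = ex x * ex y := by
  unfold ex; rw [← Complex.exp_add]; congr 1; push_cast; ring

theorem ex_zero : ex 0 = 1 := by simp [ex]

theorem norm_ex (x : ℝ) : ‖ex x‖ = 1 := by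
  unfold ex; exact Complex.norm_exp_ofReal_mul_I _

theorem conj_ex (x : ℝ) : (starRingEnd ℂ) (ex x) = ex (-x) := by
  unfold ex; rw [← Complex.exp_conj]; congr 1
  rw [map_mul, Complex.conj_ofReal, Complex.conj_I]; push_cast; ring

theorem ex_mul_conj (x : ℝ) : ex x * ex (-x) = 1 := by
  rw [← ex_add]; simp [ex_zero]

theorem ex_sum {ι : Type*} (s : Finset ι) (f : ι → ℝ) : ex (∑ i ∈ s, f i) = ∏ i ∈ s, ex (f i) := by
  classical
  induction s using Finset.induction_on with
  | empty => simp [ex_zero]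
  | insert a s ha ih => rw [sum_insert ha, prod_insert ha, ex_add, ih]

theorem norm_ex_sub_one (x : ℝ) : ‖ex x - 1‖ = 2 * |Real.sin (Real.pi * x)| := by
  unfold ex
  rw [mul_comm, Complex.norm_exp_I_mul_ofReal_sub_one, Real.norm_eq_abs, abs_mul]
  norm_num; ring_nf

theorem norm_ex_sub_one_le (x : ℝ) : ‖ex x - 1‖ ≤ 2 * Real.pi * |x| := by
  rw [norm_ex_sub_one]
  have := Real.abs_sin_le_abs (x := Real.pi * x)
  rw [abs_mul, abs_of_pos Real.pi_pos] at this
  linarith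

theorem norm_ex_sub_ex_le (x y : ℝ) : ‖ex x - ex y‖ ≤ 2 * Real.pi * |x - y| := by
  have : ex x - ex y = ex y * (ex (x - y) - 1) := by
    rw [mul_sub, ← ex_add]; simp
  rw [this, norm_mul, norm_ex, one_mul]
  exact norm_ex_sub_one_le _

theorem le_norm_ex_sub_one {x : ℝ} (h0 : 0 ≤ x) (h1 : x ≤ 1 / 2) : 4 * x ≤ ‖ex x - 1‖ := by
  rw [norm_ex_sub_one]
  have hp := Real.pi_pos
  have h := Real.mul_le_sin (x := Real.pi * x) (by positivity) (by nlinarith)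
  have h2 : 2 / Real.pi * (Real.pi * x) = 2 * x := by field_simp
  rw [h2] at h
  have := le_abs_self (Real.sin (Real.pi * x))
  linarith

/-! ### Exponential sums -/

/-- Van der Corput's inequality, the Cauchy–Schwarz step behind differencing. -/
theorem vdc_ineq (z : ℕ → ℂ) (M H : ℕ) :
    (H : ℝ) * ‖∑ n ∈ range M, z n‖ ^ 2 ≤
      2 * (M + H) * ∑ d ∈ range H, ‖∑ n ∈ range (M - d), z (n + d) * (starRingEnd ℂ) (z n)‖ := by
  set S := ∑ n ∈ range M, z n with hS
  set Cc : ℕ → ℂ := fun d => ∑ n ∈ range (M - d), z (n + d) * (starRingEnd ℂ) (z n) with hC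
  rcases Nat.eq_zero_or_pos H with hH | hH
  · subst hH; simp
  -- the translate of `z` by `h`, extended by zero
  set Y : ℕ → ℕ → ℂ := fun n h => if h ≤ n ∧ n - h < M then z (n - h) else 0 with hY
  have hsum : ∀ h < H, ∑ n ∈ range (M + H), Y n h = S := by
    intro h hh
    have : M + H = h + (M + H - h) := by omega
    rw [this, sum_range_add]
    have h1 : ∑ x ∈ range h, Y x h = 0 := by
      apply sum_eq_zero; intro x hx; rw [mem_range] at hx; simp only [hY]
      rw [if_neg]; omega
    rw [h1, zero_add]
    have h2 : M + H - h = M + (H - h) := by omega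
    rw [h2, sum_range_add, hS]
    have h3 : ∑ x ∈ range (H - h), Y (h + (M + x)) h = 0 := by
      apply sum_eq_zero; intro x hx; simp only [hY]; rw [if_neg]; omega
    rw [h3, add_zero]
    apply sum_congr rfl; intro x hx; rw [mem_range] at hx; simp only [hY]
    rw [if_pos (by omega)]; congr 1; omega
  have hcor : ∀ h h', h ≤ h' → h' < H →
      ∑ n ∈ range (M + H), Y n h * (starRingEnd ℂ) (Y n h') = Cc (h' - h) := by
    intro h h' hle hh
    have : M + H = h' + (M + H - h') := by omega
    rw [this, sum_range_add]
    have h1 : ∑ x ∈ range h', Y x h * (starRingEnd ℂ) (Y x h') = 0 := by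
      apply sum_eq_zero; intro x hx; rw [mem_range] at hx
      have : Y x h' = 0 := by simp only [hY]; rw [if_neg]; omega
      rw [this]; simp
    rw [h1, zero_add]
    have h2 : M + H - h' = (M - (h' - h)) + (M + H - h' - (M - (h' - h))) := by omega
    rw [h2, sum_range_add]
    have h3 : ∑ x ∈ range (M + H - h' - (M - (h' - h))), Y (h' + (M - (h' - h) + x)) h *
        (starRingEnd ℂ) (Y (h' + (M - (h' - h) + x)) h') = 0 := by
      apply sum_eq_zero; intro x hx
      have : Y (h' + (M - (h' - h) + x)) h = 0 := by simp only [hY]; rw [if_neg]; omega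
      rw [this]; simp
    rw [h3, add_zero, hC]
    apply sum_congr rfl; intro x hx; rw [mem_range] at hx; simp only [hY]
    rw [if_pos (by omega), if_pos (by omega)]
    congr 2
    · omega
    · congr 1; omega
  have hcor' : ∀ h h', h < H → h' < H →
      ‖∑ n ∈ range (M + H), Y n h * (starRingEnd ℂ) (Y n h')‖ =
        ‖Cc (if h ≤ h' then h' - h else h - h')‖ := by
    intro h h' hh hh'
    split_ifs with hle
    · rw [hcor h h' hle hh']
    · rw [← hcor h' h (by omega) hh, ← RCLike.norm_conj, map_sum]
      congr 1; apply sum_congr rfl; intro x _; simp [mul_comm]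
  have hHS : (H : ℂ) * S = ∑ n ∈ range (M + H), ∑ h ∈ range H, Y n h := by
    rw [sum_comm, sum_congr rfl (fun h hh => hsum h (mem_range.1 hh))]; simp
  have hcs : ‖(H : ℂ) * S‖ ^ 2 ≤ (M + H) * ∑ n ∈ range (M + H), ‖∑ h ∈ range H, Y n h‖ ^ 2 := by
    rw [hHS]
    calc _ ≤ (∑ n ∈ range (M + H), ‖∑ h ∈ range H, Y n h‖) ^ 2 := by
          gcongr; exact norm_sum_le _ _
      _ ≤ _ := by
          have := sq_sum_le_card_mul_sum_sq (s := range (M + H))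
            (f := fun n => ‖∑ h ∈ range H, Y n h‖)
          simpa using this
  have hexp : ∑ n ∈ range (M + H), ‖∑ h ∈ range H, Y n h‖ ^ 2 ≤
      ∑ h ∈ range H, ∑ h' ∈ range H, ‖Cc (if h ≤ h' then h' - h else h - h')‖ := by
    have e1 : ((∑ n ∈ range (M + H), ‖∑ h ∈ range H, Y n h‖ ^ 2 : ℝ) : ℂ) =
        ∑ h ∈ range H, ∑ h' ∈ range H, ∑ n ∈ range (M + H), Y n h * (starRingEnd ℂ) (Y n h') := by
      push_cast
      rw [sum_congr rfl (fun n _ => (Complex.mul_conj' _).symm)]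
      rw [sum_congr rfl (fun h _ => sum_comm), sum_comm]
      apply sum_congr rfl; intro n _
      rw [map_sum, sum_mul_sum]
    have e2 := congrArg norm e1
    rw [Complex.norm_real, Real.norm_of_nonneg (by positivity)] at e2
    rw [e2]
    refine (norm_sum_le _ _).trans (sum_le_sum fun h hh => (norm_sum_le _ _).trans
      (sum_le_sum fun h' hh' => ?_))
    rw [hcor' h h' (mem_range.1 hh) (mem_range.1 hh')]
  have hrow : ∀ h ∈ range H, ∑ h' ∈ range H, ‖Cc (if h ≤ h' then h' - h else h - h')‖ ≤
      2 * ∑ d ∈ range H, ‖Cc d‖ := by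
    intro h hh
    rw [mem_range] at hh
    rw [← sum_filter_add_sum_filter_not (range H) (fun h' => h ≤ h'), two_mul]
    apply add_le_add
    · rw [sum_congr rfl (g := fun h' => ‖Cc (h' - h)‖) (fun x hx => by
        rw [if_pos (mem_filter.1 hx).2])]
      rw [← sum_image (f := fun d => ‖Cc d‖) (g := fun h' => h' - h)]
      · apply sum_le_sum_of_subset_of_nonneg
        · intro d hd; simp only [mem_image, mem_filter, mem_range] at hd ⊢; omega
        · intros; positivity
      · intro a ha b hb hab; simp at ha hb hab; omega
    · rw [sum_congr rfl (g := fun h' => ‖Cc (h - h')‖) (fun x hx => by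
        rw [if_neg (mem_filter.1 hx).2])]
      rw [← sum_image (f := fun d => ‖Cc d‖) (g := fun h' => h - h')]
      · apply sum_le_sum_of_subset_of_nonneg
        · intro d hd; simp only [mem_image, mem_filter, mem_range] at hd ⊢; omega
        · intros; positivity
      · intro a ha b hb hab; simp at ha hb hab; omega
  have hfin : ‖(H : ℂ) * S‖ ^ 2 ≤ (M + H) * (H * (2 * ∑ d ∈ range H, ‖Cc d‖)) := by
    refine hcs.trans ?_
    gcongr
    refine hexp.trans ((sum_le_sum hrow).trans ?_)
    simp
  rw [norm_mul, Complex.norm_natCast, mul_pow] at hfin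
  have hHpos : (0 : ℝ) < H := by exact_mod_cast hH
  have : (H : ℝ) * (H * ‖S‖ ^ 2) ≤ H * (2 * (M + H) * ∑ d ∈ range H, ‖Cc d‖) := by
    nlinarith [hfin]
  exact le_of_mul_le_mul_left this hHpos

/-! ### Exponential sums: the first derivative test -/

/-- Summation by parts. -/
theorem abel_sum (g z : ℕ → ℂ) (M : ℕ) :
    ∑ n ∈ range (M + 1), g n * (z (n + 1) - z n) =
      g M * z (M + 1) - g 0 * z 0 - ∑ n ∈ range M, (g (n + 1) - g n) * z (n + 1) := by
  induction M with
  | zero => simp; ring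
  | succ M ih => rw [sum_range_succ, ih, sum_range_succ _ M]; ring

/-- Kusmin–Landau type bound: slowly varying, small increments force cancellation. -/
theorem kusmin_landau (a : ℕ → ℝ) (M : ℕ) {lam V : ℝ} (hl : 0 < lam) (hV : 0 ≤ V)
    (h1 : ∀ n < M, lam ≤ a (n + 1) - a n) (h2 : ∀ n < M, a (n + 1) - a n ≤ 1 / 2)
    (h3 : ∀ n, n + 1 < M → |(a (n + 2) - a (n + 1)) - (a (n + 1) - a n)| ≤ V) :
    ‖∑ n ∈ range M, ex (a n)‖ ≤ 1 / lam + M * V / lam ^ 2 := by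
  rcases M with _ | M
  · simp; positivity
  set d : ℕ → ℝ := fun n => a (n + 1) - a n with hd
  set g : ℕ → ℂ := fun n => (ex (d n) - 1)⁻¹ with hg
  have hlow : ∀ n < M + 1, 4 * lam ≤ ‖ex (d n) - 1‖ := fun n hn =>
    (by linarith [h1 n hn] : 4 * lam ≤ 4 * d n).trans
      (le_norm_ex_sub_one (by linarith [h1 n hn]) (h2 n hn))
  have hne : ∀ n < M + 1, ex (d n) - 1 ≠ 0 := fun n hn h0 => by
    have := hlow n hn; rw [h0, norm_zero] at this; linarith
  -- each term is a difference with a slowly varying coefficient, to which summation by parts applies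
  have hz : ∀ n < M + 1, ex (a n) = g n * (ex (a (n + 1)) - ex (a n)) := by
    intro n hn
    have : ex (a (n + 1)) = ex (a n) * ex (d n) := by rw [← ex_add]; congr 1; simp [hd]
    rw [this, hg]
    have := hne n hn
    field_simp
  have hgn : ∀ n < M + 1, ‖g n‖ ≤ 1 / (4 * lam) := by
    intro n hn
    rw [hg, norm_inv, ← one_div]
    exact one_div_le_one_div_of_le (by positivity) (hlow n hn)
  have hgd : ∀ n, n < M → ‖g (n + 1) - g n‖ ≤ V / lam ^ 2 := by
    intro n hn
    have e : g (n + 1) - g n = (ex (d n) - ex (d (n + 1))) * (g (n + 1) * g n) := by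
      have i1 := hne n (by omega)
      have i2 := hne (n + 1) (by omega)
      simp only [hg]; field_simp; ring
    have h4 : |d n - d (n + 1)| ≤ V := by rw [abs_sub_comm]; exact h3 n (by omega)
    have h5 := norm_ex_sub_ex_le (d n) (d (n + 1))
    rw [e, norm_mul, norm_mul]
    calc _ ≤ (2 * Real.pi * V) * (1 / (4 * lam) * (1 / (4 * lam))) := by
          have hp := Real.pi_pos
          have i1 := hgn n (by omega)
          have i2 := hgn (n + 1) (by omega)
          apply mul_le_mul
          · exact h5.trans (by gcongr)
          · gcongr
          · positivity
          · positivity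
      _ = (Real.pi / 8) * (V / lam ^ 2) := by field_simp; ring
      _ ≤ 1 * (V / lam ^ 2) := by
          gcongr; linarith [Real.pi_le_four]
      _ = _ := one_mul _
  rw [sum_congr rfl (fun n hn => hz n (mem_range.1 hn))]
  rw [abel_sum g (fun n => ex (a n)) M]
  calc _ ≤ ‖g M * ex (a (M + 1))‖ + ‖g 0 * ex (a 0)‖
        + ‖∑ n ∈ range M, (g (n + 1) - g n) * ex (a (n + 1))‖ :=
        (norm_sub_le _ _).trans (by gcongr; exact norm_sub_le _ _)
    _ ≤ 1 / (4 * lam) + 1 / (4 * lam) + M * (V / lam ^ 2) := by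
        gcongr
        · rw [norm_mul, norm_ex, mul_one]; exact hgn M (by omega)
        · rw [norm_mul, norm_ex, mul_one]; exact hgn 0 (by omega)
        · refine (norm_sum_le _ _).trans ((sum_le_card_nsmul _ _ (V / lam ^ 2) ?_).trans ?_)
          · intro n hn; rw [norm_mul, norm_ex, mul_one]; exact hgd n (mem_range.1 hn)
          · simp
    _ ≤ _ := by
        push_cast
        have : 1 / (4 * lam) + 1 / (4 * lam) ≤ 1 / lam := by
          rw [div_add_div _ _ (by positivity) (by positivity), div_le_div_iff₀ (by positivity) hl]
          nlinarith [sq_nonneg lam]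
        have : (M : ℝ) * (V / lam ^ 2) ≤ (M + 1) * V / lam ^ 2 := by
          rw [mul_div_assoc]; gcongr; linarith
        linarith

/-- `F` is a tower of successive derivatives (`F i' = F (i+1)`) on `[a, a+M]`, and the derivative of
order `r` has size about `X N^{-r}`, with the matching upper bound in order `r+1`. -/
structure Tower (F : ℕ → ℝ → ℝ) (a M N X B : ℝ) (r : ℕ) : Prop where
  deriv : ∀ i, ∀ x ∈ Set.Icc a (a + M), HasDerivAt (F i) (F (i + 1) x) x
  lower : ∀ x ∈ Set.Icc a (a + M), X / N ^ r ≤ F r x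
  upper : ∀ x ∈ Set.Icc a (a + M), F r x ≤ B * (X / N ^ r)
  upper' : ∀ x ∈ Set.Icc a (a + M), |F (r + 1) x| ≤ B * (X / N ^ (r + 1))

theorem mvt_diff {f f' : ℝ → ℝ} {x h : ℝ} (hh : 0 ≤ h)
    (hd : ∀ y ∈ Set.Icc x (x + h), HasDerivAt f (f' y) y) :
    ∃ y ∈ Set.Icc x (x + h), f (x + h) - f x = h * f' y := by
  rcases hh.eq_or_lt with h0 | h0
  · exact ⟨x, by simp [← h0], by simp [← h0]⟩
  · obtain ⟨y, hy, he⟩ := exists_hasDerivAt_eq_slope f f' (by linarith : x < x + h)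
      (fun y hy => (hd y hy).continuousAt.continuousWithinAt)
      (fun y hy => hd y (Set.Ioo_subset_Icc_self hy))
    refine ⟨y, Set.Ioo_subset_Icc_self hy, ?_⟩
    rw [he, add_sub_cancel_left]; field_simp

/-- Differencing a tower lowers the order by one and multiplies the size parameter by `h / N`. -/
theorem Tower.diff {F : ℕ → ℝ → ℝ} {a M N X B : ℝ} {r : ℕ} (hT : Tower F a M N X B (r + 1))
    (hN : 0 < N) {h : ℝ} (hh : 0 ≤ h) :
    Tower (fun i x => F i (x + h) - F i x) a (M - h) N (h * X / N) B r where
  deriv i x hx := by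
    have h1 := hT.deriv i x ⟨hx.1, by linarith [hx.2]⟩
    have h2 := hT.deriv i (x + h) ⟨by linarith [hx.1], by linarith [hx.2]⟩
    exact (HasDerivAt.comp_add_const x h h2).sub h1
  lower x hx := by
    obtain ⟨y, hy, he⟩ := mvt_diff (f := F r) (f' := F (r + 1)) hh
      (fun y hy => hT.deriv r y ⟨by linarith [hx.1, hy.1], by linarith [hx.2, hy.2]⟩)
    simp only [he]
    have := hT.lower y ⟨by linarith [hx.1, hy.1], by linarith [hx.2, hy.2]⟩
    calc h * X / N / N ^ r = h * (X / N ^ (r + 1)) := by rw [pow_succ]; field_simp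
      _ ≤ _ := by gcongr
  upper x hx := by
    obtain ⟨y, hy, he⟩ := mvt_diff (f := F r) (f' := F (r + 1)) hh
      (fun y hy => hT.deriv r y ⟨by linarith [hx.1, hy.1], by linarith [hx.2, hy.2]⟩)
    simp only [he]
    have := hT.upper y ⟨by linarith [hx.1, hy.1], by linarith [hx.2, hy.2]⟩
    calc _ ≤ h * (B * (X / N ^ (r + 1))) := by gcongr
      _ = _ := by rw [pow_succ]; field_simp
  upper' x hx := by
    obtain ⟨y, hy, he⟩ := mvt_diff (f := F (r + 1)) (f' := F (r + 2)) hh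
      (fun y hy => hT.deriv (r + 1) y ⟨by linarith [hx.1, hy.1], by linarith [hx.2, hy.2]⟩)
    simp only [he]
    have := hT.upper' y ⟨by linarith [hx.1, hy.1], by linarith [hx.2, hy.2]⟩
    rw [abs_mul, abs_of_nonneg hh]
    calc _ ≤ h * (B * (X / N ^ (r + 2))) := by gcongr
      _ = _ := by rw [pow_succ N (r + 1)]; field_simp

theorem norm_sum_ex_le (M : ℕ) (f : ℕ → ℝ) : ‖∑ n ∈ range M, ex (f n)‖ ≤ M := by
  refine (norm_sum_le _ _).trans ?_
  simp [norm_ex]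

/-- First derivative case of the exponential sum estimate. -/
theorem expsum_one (B ε : ℝ) (hB : 1 ≤ B) (hε : 0 < ε) :
    ∃ C, 0 < C ∧ ∀ (F : ℕ → ℝ → ℝ) (a : ℝ) (M : ℕ) (N X : ℝ), 1 ≤ N → (M : ℝ) ≤ N → 1 ≤ X →
      X ≤ N ^ (1 - ε) → Tower F a M N X B 1 →
      ‖∑ n ∈ range M, ex (F 0 (a + n))‖ ≤ C * N * X ^ (-1 : ℝ) := by
  refine ⟨max (1 + B) ((2 * B) ^ (1 / ε)), by positivity, ?_⟩
  intro F a M N X hN hM hX hXN hT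
  have hN0 : 0 < N := by linarith
  have hX0 : 0 < X := by linarith
  rw [Real.rpow_neg_one]
  rcases le_or_gt (B * (X / N)) (1 / 2) with hc | hc
  · have hk := kusmin_landau (fun n => F 0 (a + n)) M (lam := X / N) (V := B * (X / N ^ 2))
      (by positivity) (by positivity) ?_ ?_ ?_
    · refine hk.trans ?_
      calc 1 / (X / N) + M * (B * (X / N ^ 2)) / (X / N) ^ 2
          ≤ 1 / (X / N) + N * (B * (X / N ^ 2)) / (X / N) ^ 2 := by gcongr
        _ = (1 + B) * N * X⁻¹ := by field_simp
        _ ≤ _ := by gcongr; exact le_max_left _ _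
    all_goals intro n hn
    · have hn' : (n : ℝ) + 1 ≤ M := by exact_mod_cast hn
      obtain ⟨y, hy, he⟩ := mvt_diff (f := F 0) (f' := F 1) (x := a + n) (zero_le_one)
        (fun y hy => hT.deriv 0 y ⟨by linarith [hy.1, (Nat.cast_nonneg n : (0:ℝ) ≤ n)], by linarith [hy.2]⟩)
      have := hT.lower y ⟨by linarith [hy.1, (Nat.cast_nonneg n : (0:ℝ) ≤ n)], by linarith [hy.2]⟩
      push_cast
      rw [← add_assoc, he]
      simpa using this
    · have hn' : (n : ℝ) + 1 ≤ M := by exact_mod_cast hn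
      obtain ⟨y, hy, he⟩ := mvt_diff (f := F 0) (f' := F 1) (x := a + n) (zero_le_one)
        (fun y hy => hT.deriv 0 y ⟨by linarith [hy.1, (Nat.cast_nonneg n : (0:ℝ) ≤ n)], by linarith [hy.2]⟩)
      have := hT.upper y ⟨by linarith [hy.1, (Nat.cast_nonneg n : (0:ℝ) ≤ n)], by linarith [hy.2]⟩
      push_cast
      rw [← add_assoc, he]
      rw [pow_one] at this
      linarith
    · have hn' : (n : ℝ) + 1 + 1 ≤ M := by exact_mod_cast hn
      have hn0 : (0:ℝ) ≤ n := Nat.cast_nonneg n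
      obtain ⟨y, hy, he⟩ := mvt_diff (f := fun x => F 0 (x + 1) - F 0 x)
        (f' := fun x => F 1 (x + 1) - F 1 x) (x := a + n) (zero_le_one)
        (fun y hy => (HasDerivAt.comp_add_const y 1 (hT.deriv 0 (y + 1)
            ⟨by linarith [hy.1], by linarith [hy.2]⟩)).sub
          (hT.deriv 0 y ⟨by linarith [hy.1], by linarith [hy.2]⟩))
      obtain ⟨w, hw, he'⟩ := mvt_diff (f := F 1) (f' := F 2) (x := y) (zero_le_one)
        (fun w hw => hT.deriv 1 w ⟨by linarith [hy.1, hw.1], by linarith [hy.2, hw.2]⟩)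
      have := hT.upper' w ⟨by linarith [hy.1, hw.1], by linarith [hy.2, hw.2]⟩
      push_cast
      have e1 : a + ((n : ℝ) + 2) = a + n + 1 + 1 := by ring
      have e2 : a + ((n : ℝ) + 1) = a + n + 1 := by ring
      rw [e1, e2, he, he']
      simpa using this
  -- here `X` is comparable to `N`, so `X ≤ N ^ (1 - ε)` bounds `N` and the trivial estimate suffices
  · have h1 : N ^ ε ≤ 2 * B := by
      have h2 : N ^ (1 - ε) = N / N ^ ε := by rw [Real.rpow_sub hN0, Real.rpow_one]
      rw [h2] at hXN
      have hNe : 0 < N ^ ε := by positivity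
      rw [le_div_iff₀ hNe] at hXN
      have h3 : N < 2 * B * X := by
        have : N * (1 / 2) < N * (B * (X / N)) := by gcongr
        have e : N * (B * (X / N)) = B * X := by field_simp
        linarith
      have h4 : X * N ^ ε ≤ X * (2 * B) := by linarith
      exact le_of_mul_le_mul_left h4 hX0
    have h5 : N ≤ (2 * B) ^ (1 / ε) := by
      calc N = (N ^ ε) ^ (1 / ε) := by
            rw [← Real.rpow_mul hN0.le, mul_one_div_cancel hε.ne', Real.rpow_one]
        _ ≤ _ := by gcongr
    have h6 : X ≤ N := hXN.trans (by
      calc N ^ (1 - ε) ≤ N ^ (1 : ℝ) := Real.rpow_le_rpow_of_exponent_le hN (by linarith)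
        _ = N := Real.rpow_one N)
    calc _ ≤ (M : ℝ) := norm_sum_ex_le M _
      _ ≤ N := hM
      _ = X * N * X⁻¹ := by field_simp
      _ ≤ _ := by gcongr; exact (h6.trans h5).trans (le_max_right _ _)

/-! ### Exponential sums: induction on the order of the derivative -/

theorem sum_rpow_neg_half' (n : ℕ) :
    ∑ d ∈ Ico 1 (n + 1), ((d : ℝ)) ^ (-(1 / 2) : ℝ) ≤ 2 * √(n : ℝ) := by
  induction n with
  | zero => simp
  | succ n ih =>
    rw [sum_Ico_succ_top (by omega)]
    have hn : (0 : ℝ) ≤ n := Nat.cast_nonneg n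
    have e : (((n + 1 : ℕ)) : ℝ) ^ (-(1 / 2) : ℝ) = (√((n : ℝ) + 1))⁻¹ := by
      push_cast; rw [Real.rpow_neg (by positivity), ← Real.sqrt_eq_rpow]
    rw [e]
    push_cast
    have h2 : 0 < √((n : ℝ) + 1) := Real.sqrt_pos.2 (by linarith)
    have h1 : 0 ≤ √(n : ℝ) := Real.sqrt_nonneg _
    have h3 := Real.sq_sqrt hn
    have h4 := Real.sq_sqrt (by linarith : (0:ℝ) ≤ n + 1)
    have h5 : (√((n : ℝ) + 1))⁻¹ ≤ 2 * √((n : ℝ) + 1) - 2 * √(n : ℝ) := by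
      rw [inv_le_iff_one_le_mul₀ h2]
      nlinarith [sq_nonneg (√((n : ℝ) + 1) - √(n : ℝ))]
    linarith

theorem sum_rpow_neg_half (H : ℕ) :
    ∑ d ∈ Ico 1 H, ((d : ℝ)) ^ (-(1 / 2) : ℝ) ≤ 2 * (H : ℝ) ^ (1 / 2 : ℝ) := by
  rcases H with _ | n
  · simp
  · refine (sum_rpow_neg_half' n).trans ?_
    rw [← Real.sqrt_eq_rpow]; push_cast; gcongr; linarith

theorem sum_rpow_neg {δ : ℝ} (h1 : δ ≤ 1 / 2) (H : ℕ) :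
    ∑ d ∈ Ico 1 H, ((d : ℝ)) ^ (-δ) ≤ 2 * (H : ℝ) ^ (1 - δ) := by
  rcases Nat.eq_zero_or_pos H with h0 | h0
  · subst h0; simp; positivity
  have hH : (0 : ℝ) < H := by exact_mod_cast h0
  calc ∑ d ∈ Ico 1 H, ((d : ℝ)) ^ (-δ)
      ≤ ∑ d ∈ Ico 1 H, (H : ℝ) ^ (1 / 2 - δ) * ((d : ℝ)) ^ (-(1 / 2) : ℝ) := by
        apply sum_le_sum; intro d hd; rw [mem_Ico] at hd
        have hd0 : (0 : ℝ) < d := by exact_mod_cast hd.1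
        have : (-δ) = (1 / 2 - δ) + (-(1 / 2)) := by ring
        rw [this, Real.rpow_add hd0]
        gcongr
        exact hd.2.le
    _ ≤ (H : ℝ) ^ (1 / 2 - δ) * (2 * (H : ℝ) ^ (1 / 2 : ℝ)) := by
        rw [← mul_sum]; gcongr; exact sum_rpow_neg_half H
    _ = _ := by
        rw [mul_left_comm, ← Real.rpow_add hH]; congr 2; ring

/-- The statement that exponential sums whose phase has an order-`r` derivative of size `X N^{-r}`
gain a power of `X`. -/
def ExpSumBound (r : ℕ) (B ε : ℝ) : Prop :=
  ∃ C δ : ℝ, 0 < C ∧ 0 < δ ∧ δ ≤ 1 / 2 ∧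
    ∀ (F : ℕ → ℝ → ℝ) (a : ℝ) (M : ℕ) (N X : ℝ), 1 ≤ N → (M : ℝ) ≤ N → 1 ≤ X →
      X ≤ N ^ ((r : ℝ) - ε) → Tower F a M N X B r →
      ‖∑ n ∈ range M, ex (F 0 (a + n))‖ ≤ C * N * X ^ (-δ)

theorem expSumBound_one (B ε : ℝ) (hB : 1 ≤ B) (hε : 0 < ε) : ExpSumBound 1 B ε := by
  obtain ⟨C, hC, h⟩ := expsum_one B ε hB hε
  refine ⟨C, 1 / 2, hC, by norm_num, le_rfl, ?_⟩
  intro F a M N X hN hM hX hXN hT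
  refine (h F a M N X hN hM hX (by simpa using hXN) hT).trans ?_
  gcongr
  norm_num

set_option maxHeartbeats 1000000 in
/-- Van der Corput's inequality with about `N X^{-σ}` shifts reduces the order `r + 1` to the order `r`:
the phase differenced by `d` has size parameter `d X / N`, to which the inductive bound applies. -/
theorem expSumBound_succ (r : ℕ) (hr : 1 ≤ r) (B ε : ℝ) (hε : 0 < ε) (hε1 : ε ≤ 1)
    (ih : ExpSumBound r B (ε / 2)) : ExpSumBound (r + 1) B ε := by
  obtain ⟨C0, δ0, hC0, hδ0, hδ0', ih⟩ := ih
  have hr' : (1 : ℝ) ≤ r := by exact_mod_cast hr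
  -- `σ` is chosen so that `X ≤ N ^ (r + 1 - ε)` gives `X ^ (1 - σ) ≤ N ^ (r - ε / 2)`
  set σ : ℝ := (1 - ε / 2) / (r + 1 - ε) with hσ
  have hden : 0 < (r : ℝ) + 1 - ε := by linarith
  have hσ0 : 0 < σ := by apply div_pos <;> linarith
  have hσ1 : σ < 1 := by rw [hσ, div_lt_one hden]; linarith
  have hσe : σ * (r + 1 - ε) = 1 - ε / 2 := by rw [hσ]; field_simp
  set C1 := max C0 1 with hC1
  have hC11 : 1 ≤ C1 := le_max_right _ _
  set δ := min (ε / (4 * (r + 1))) ((1 - σ) * δ0 / 2) with hδ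
  have hδpos : 0 < δ := by
    apply lt_min
    · positivity
    · have : 0 < 1 - σ := by linarith
      positivity
  have hδle : 2 * δ ≤ (1 - σ) * δ0 := by have := min_le_right (ε / (4 * (r + 1))) ((1 - σ) * δ0 / 2); linarith
  have hδle' : 2 * δ * (r + 1) ≤ ε / 2 := by
    have := min_le_left (ε / (4 * ((r : ℝ) + 1))) ((1 - σ) * δ0 / 2)
    rw [← hδ, le_div_iff₀ (by positivity)] at this; linarith
  refine ⟨8 + 16 * C1, δ, by positivity, hδpos, ?_, ?_⟩
  · have : (1 - σ) * δ0 ≤ 1 * δ0 := by gcongr; linarith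
    linarith
  intro F a M N X hN hM hX hXN hT
  have hN0 : 0 < N := by linarith
  have hX0 : 0 < X := by linarith
  push_cast at hXN
  set t := N * X ^ (-σ) with ht
  have htN : t ≤ N := by
    have : X ^ (-σ) ≤ 1 := Real.rpow_le_one_of_one_le_of_nonpos hX (by linarith)
    calc t ≤ N * 1 := by rw [ht]; gcongr
      _ = N := mul_one N
  have hNt : N ^ (ε / 2) ≤ t := by
    have h1 : X ^ σ ≤ N ^ (1 - ε / 2) := by
      calc X ^ σ ≤ (N ^ ((r : ℝ) + 1 - ε)) ^ σ := by gcongr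
        _ = _ := by rw [← Real.rpow_mul hN0.le]; congr 1; linarith
    rw [ht, Real.rpow_neg hX0.le, ← div_eq_mul_inv, le_div_iff₀ (by positivity)]
    calc _ ≤ N ^ (ε / 2) * N ^ (1 - ε / 2) := by gcongr
      _ = N := by rw [← Real.rpow_add hN0]; simp
  have ht1 : 1 ≤ t := (Real.one_le_rpow hN (by positivity)).trans hNt
  -- the number of shifts in van der Corput's inequality
  set H := ⌊t⌋₊ with hH
  have hHt : (H : ℝ) ≤ t := Nat.floor_le (by linarith)
  have hH1 : 1 ≤ H := Nat.le_floor (by simpa using ht1)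
  have hH1' : (1 : ℝ) ≤ H := by exact_mod_cast hH1
  have htH : t / 2 ≤ H := by have := Nat.lt_floor_add_one t; rw [← hH] at this; linarith
  have hcor : ∀ d ∈ Ico 1 H, ‖∑ n ∈ range (M - d), ex (F 0 (a + ((n + d : ℕ) : ℝ))) *
      (starRingEnd ℂ) (ex (F 0 (a + n)))‖ ≤ C1 * N * (d * X / N) ^ (-δ0) := by
    intro d hd
    rw [mem_Ico] at hd
    have hd0 : (0 : ℝ) < d := by exact_mod_cast hd.1
    have hdH : (d : ℝ) ≤ t := le_trans (by exact_mod_cast hd.2.le) hHt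
    have hpos : 0 < d * X / N := by positivity
    rcases le_or_gt M d with hMd | hMd
    · rw [Nat.sub_eq_zero_of_le hMd]; simp; positivity
    have hcast : ((M - d : ℕ) : ℝ) = M - d := by push_cast [hMd.le]; ring
    set G : ℕ → ℝ → ℝ := fun i x => F i (x + d) - F i x with hG
    have e : ∀ n ∈ range (M - d), ex (F 0 (a + ((n + d : ℕ) : ℝ))) *
      (starRingEnd ℂ) (ex (F 0 (a + n))) = ex (G 0 (a + n)) := by
      intro n _
      rw [conj_ex, ← ex_add]; congr 1; push_cast; simp only [hG, ← add_assoc]; ring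
    rw [sum_congr rfl e]
    rcases lt_or_ge (d * X / N) 1 with h1 | h1
    · calc _ ≤ ((M - d : ℕ) : ℝ) := norm_sum_ex_le _ _
        _ ≤ 1 * N * 1 := by rw [hcast]; linarith
        _ ≤ _ := by
          gcongr
          exact Real.one_le_rpow_of_pos_of_le_one_of_nonpos hpos h1.le (by linarith)
    · refine (ih G a (M - d) N (d * X / N) hN (by rw [hcast]; linarith) h1 ?_ ?_).trans ?_
      · calc d * X / N ≤ t * X / N := by gcongr
          _ = X ^ (1 - σ) := by
            rw [ht, sub_eq_neg_add, Real.rpow_add hX0, Real.rpow_one]; field_simp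
          _ ≤ (N ^ ((r : ℝ) + 1 - ε)) ^ (1 - σ) := by gcongr
          _ = _ := by
            rw [← Real.rpow_mul hN0.le]; congr 1; linarith
      · rw [hcast]; exact hT.diff hN0 hd0.le
      · gcongr; exact le_max_left _ _
  have hv := vdc_ineq (fun n => ex (F 0 (a + n))) M H
  rw [range_eq_Ico H, sum_eq_sum_Ico_succ_bot (by omega : 0 < H)] at hv
  set S := ‖∑ n ∈ range M, ex (F 0 (a + n))‖ with hS
  have h0 : ‖∑ n ∈ range (M - 0), ex (F 0 (a + ((n + 0 : ℕ) : ℝ))) *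
      (starRingEnd ℂ) (ex (F 0 (a + n)))‖ ≤ N := by
    refine (norm_sum_le _ _).trans ?_
    simp [norm_ex, hM]
  have hsum := sum_le_sum hcor
  have hsum2 : ∑ d ∈ Ico 1 H, C1 * N * ((d : ℝ) * X / N) ^ (-δ0) ≤
      C1 * N * ((X / N) ^ (-δ0) * (2 * (H : ℝ) ^ (1 - δ0))) := by
    rw [← mul_sum]
    gcongr
    calc _ = (X / N) ^ (-δ0) * ∑ d ∈ Ico 1 H, (d : ℝ) ^ (-δ0) := by
          rw [mul_sum]; apply sum_congr rfl; intro d _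
          rw [mul_div_assoc, mul_comm, Real.mul_rpow (by positivity) (by positivity)]
      _ ≤ _ := by gcongr; exact sum_rpow_neg hδ0' H
  have hmain : (H : ℝ) * S ^ 2 ≤ 2 * (N + N) * (N + C1 * N * ((X / N) ^ (-δ0) * (2 * (H : ℝ) ^ (1 - δ0)))) := by
    refine hv.trans ?_
    have hHN : (H : ℝ) ≤ N := hHt.trans htN
    refine mul_le_mul (by linarith) ?_ (by positivity) (by positivity)
    exact add_le_add h0 (hsum.trans hsum2)
  have hHpos : (0 : ℝ) < H := by linarith
  have hHinv : 1 / (H : ℝ) ≤ 2 * X ^ (-(2 * δ)) := by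
    have h1 : X ^ (2 * δ) ≤ t := by
      refine le_trans ?_ hNt
      calc X ^ (2 * δ) ≤ (N ^ ((r : ℝ) + 1)) ^ (2 * δ) := by
            gcongr
            exact hXN.trans (Real.rpow_le_rpow_of_exponent_le hN (by linarith))
        _ = N ^ (2 * δ * (r + 1)) := by rw [← Real.rpow_mul hN0.le]; congr 1; ring
        _ ≤ _ := Real.rpow_le_rpow_of_exponent_le hN hδle'
    rw [Real.rpow_neg hX0.le, ← div_eq_mul_inv, div_le_div_iff₀ hHpos (by positivity)]
    linarith
  have hXH : (X * H / N) ^ (-δ0) ≤ 2 * X ^ (-(2 * δ)) := by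
    have h1 : X ^ (1 - σ) / 2 ≤ X * H / N := by
      have : X ^ (1 - σ) = X * t / N := by
        rw [ht, sub_eq_neg_add, Real.rpow_add hX0, Real.rpow_one]; field_simp
      rw [this]
      calc X * t / N / 2 = X * (t / 2) / N := by ring
        _ ≤ _ := by gcongr
    calc (X * H / N) ^ (-δ0) ≤ (X ^ (1 - σ) / 2) ^ (-δ0) :=
          Real.rpow_le_rpow_of_nonpos (by positivity) h1 (by linarith)
      _ = X ^ (-((1 - σ) * δ0)) * 2 ^ δ0 := by
          rw [Real.div_rpow (by positivity) (by positivity), ← Real.rpow_mul hX0.le,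
            Real.rpow_neg (by positivity) δ0, div_inv_eq_mul]; congr 2; ring
      _ ≤ X ^ (-(2 * δ)) * 2 ^ (1 : ℝ) := by
          gcongr
          · norm_num
          · linarith
      _ = _ := by rw [Real.rpow_one]; ring
  have hsq : S ^ 2 ≤ ((8 + 16 * C1) * N * X ^ (-δ)) ^ 2 := by
    have e1 : (H : ℝ) ^ (1 - δ0) = H * (H : ℝ) ^ (-δ0) := by
      rw [sub_eq_add_neg, Real.rpow_add hHpos, Real.rpow_one]
    have e2 : (X / N) ^ (-δ0) * (H : ℝ) ^ (-δ0) = (X * H / N) ^ (-δ0) := by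
      rw [← Real.mul_rpow (by positivity) (by positivity)]; congr 1; ring
    have e3 : 2 * (N + N) * (N + C1 * N * ((X / N) ^ (-δ0) * (2 * (H : ℝ) ^ (1 - δ0)))) =
        H * (4 * N ^ 2 * (1 / H + 2 * C1 * (X * H / N) ^ (-δ0))) := by
      rw [e1, ← e2]; field_simp; ring
    rw [e3] at hmain
    have h2 := le_of_mul_le_mul_left hmain hHpos
    have e4 : (X ^ (-δ)) ^ 2 = X ^ (-(2 * δ)) := by
      rw [← Real.rpow_natCast, ← Real.rpow_mul hX0.le]; congr 1; push_cast; ring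
    rw [mul_pow, mul_pow, e4]
    calc S ^ 2 ≤ 4 * N ^ 2 * (2 * X ^ (-(2 * δ)) + 2 * C1 * (2 * X ^ (-(2 * δ)))) := by
          refine h2.trans ?_; gcongr
      _ = (8 + 16 * C1) * N ^ 2 * X ^ (-(2 * δ)) := by ring
      _ ≤ _ := by
          gcongr
          nlinarith
  exact le_of_sq_le_sq hsq (by positivity)

theorem expSumBound (r : ℕ) (hr : 1 ≤ r) (B ε : ℝ) (hB : 1 ≤ B) (hε : 0 < ε) (hε1 : ε ≤ 1) :
    ExpSumBound r B ε := by
  induction r, hr using Nat.le_induction generalizing ε with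
  | base => exact expSumBound_one B ε hB hε
  | succ n hn ih => exact expSumBound_succ n hn B ε hε hε1 (ih (ε / 2) (by linarith) (by linarith))

/-! ### Exponential sums along the curve `(n ^ c₁, …, n ^ c_m)` -/

/-- Falling factorial `c (c-1) ⋯ (c-r+1)` of a real number. -/
def ffall (c : ℝ) (r : ℕ) : ℝ := ∏ j ∈ range r, (c - j)

/-- The derivatives of the phase `∑ θᵢ x^{cᵢ}` on `x > 0`. -/
def phase {m : ℕ} (c θ : Fin m → ℝ) (r : ℕ) (x : ℝ) : ℝ :=
  ∑ i, θ i * (ffall (c i) r * x ^ (c i - r))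

theorem phase_zero {m : ℕ} (c θ : Fin m → ℝ) (x : ℝ) : phase c θ 0 x = ∑ i, θ i * x ^ c i := by
  simp [phase, ffall]

theorem phase_neg {m : ℕ} (c θ : Fin m → ℝ) (r : ℕ) (x : ℝ) :
    phase c (fun i => - θ i) r x = - phase c θ r x := by
  simp [phase]

theorem ffall_succ (c : ℝ) (r : ℕ) : ffall c (r + 1) = ffall c r * (c - r) := by
  unfold ffall; rw [prod_range_succ]

theorem phase_hasDerivAt {m : ℕ} (c θ : Fin m → ℝ) (r : ℕ) {x : ℝ} (hx : 0 < x) :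
    HasDerivAt (phase c θ r) (phase c θ (r + 1) x) x := by
  unfold phase
  refine HasDerivAt.fun_sum fun i _ => ?_
  have h := ((Real.hasDerivAt_rpow_const (p := c i - r) (Or.inl hx.ne')).const_mul
    (ffall (c i) r)).const_mul (θ i)
  refine h.congr_deriv ?_
  rw [ffall_succ]
  push_cast
  rw [show c i - ((r : ℝ) + 1) = c i - r - 1 by ring]
  ring

theorem ffall_add (c : ℝ) (r l : ℕ) :
    ffall c (r + l) = ffall c r * (descPochhammer ℝ l).eval (c - r) := by
  rw [descPochhammer_eval_eq_prod_range, ffall, ffall, prod_range_add]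
  congr 1; apply prod_congr rfl; intro j _; push_cast; ring

/-- Since the exponents are distinct and not integers, the matrix of falling factorials of `m`
consecutive orders is invertible, so some derivative in this range is large. -/
theorem ffall_nondeg {m : ℕ} (hm : 0 < m) (c : Fin m → ℝ) (hinj : Function.Injective c)
    (hni : ∀ i, ∀ k : ℤ, c i ≠ (k : ℝ)) (r : ℕ) :
    ∃ κ : ℝ, 0 < κ ∧ ∀ a : Fin m → ℝ, ∃ l : Fin m, κ * ‖a‖ ≤ |∑ i, ffall (c i) (r + l) * a i| := by
  set A : Matrix (Fin m) (Fin m) ℝ := Matrix.of fun l i => ffall (c i) (r + l) with hA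
  have hff : ∀ i, ffall (c i) r ≠ 0 := by
    intro i; rw [ffall, prod_ne_zero_iff]; intro j _ h
    exact hni i j (by push_cast; linarith)
  have hinjA : Function.Injective A.mulVecLin := by
    rw [injective_iff_map_eq_zero]
    intro a ha
    have hdet : (Matrix.of fun i l : Fin m => (descPochhammer ℝ (l : ℕ)).eval (c i - r)).det ≠ 0 := by
      rw [← Matrix.det_eval_matrixOfPolynomials_eq_det_vandermonde (fun i => c i - r)
        (fun l : Fin m => descPochhammer ℝ (l : ℕ)) (fun i => descPochhammer_natDegree ℝ i)
        (fun i => monic_descPochhammer ℝ i)]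
      rw [Matrix.det_vandermonde_ne_zero_iff]
      intro i j hij; apply hinj; simpa using hij
    have h0 : (fun i => ffall (c i) r * a i) = 0 := by
      apply Matrix.eq_zero_of_vecMul_eq_zero hdet
      ext l
      have := congrFun ha l
      simp only [Matrix.mulVecLin_apply, Matrix.mulVec, dotProduct, hA, Matrix.of_apply,
        Pi.zero_apply] at this
      simp only [Matrix.vecMul, dotProduct, Matrix.of_apply, Pi.zero_apply]
      rw [← this]
      apply sum_congr rfl; intro i _; rw [ffall_add]; ring
    ext i
    have := congrFun h0 i
    simpa [hff i] using this
  obtain ⟨K, hK, hanti⟩ := A.mulVecLin.exists_antilipschitzWith (LinearMap.ker_eq_bot.2 hinjA)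
  have hK' : (0 : ℝ) < K := hK
  refine ⟨(K : ℝ)⁻¹, by positivity, fun a => ?_⟩
  have h1 := hanti.le_mul_dist a 0
  rw [map_zero, dist_zero_right, dist_zero_right] at h1
  have : Nonempty (Fin m) := ⟨⟨0, hm⟩⟩
  obtain ⟨l, hl⟩ := Finite.exists_max (fun l => |A.mulVecLin a l|)
  refine ⟨l, ?_⟩
  have h2 : ‖A.mulVecLin a‖ ≤ |A.mulVecLin a l| := by
    rw [pi_norm_le_iff_of_nonneg (abs_nonneg _)]; exact hl
  rw [inv_mul_le_iff₀ hK']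
  refine h1.trans ?_
  gcongr
  exact h2

/-- All derivatives of the phase have at most the expected size on `[P, 3P]`. -/
theorem phase_abs_le {m : ℕ} (c θ : Fin m → ℝ) (hpos : ∀ i, 0 < c i) (r : ℕ) {P x X : ℝ}
    (hP : 0 < P) (hx1 : P ≤ x) (hx2 : x ≤ 3 * P) (hX : ∀ i, P ^ c i * |θ i| ≤ X) :
    |phase c θ r x| ≤ (∑ i, |ffall (c i) r| * 3 ^ c i) * (X / P ^ r) := by
  unfold phase
  rw [sum_mul]
  refine (abs_sum_le_sum_abs _ _).trans (sum_le_sum fun i _ => ?_)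
  have hx : 0 < x := by linarith
  rw [abs_mul, abs_mul, Real.rpow_sub hx, Real.rpow_natCast, abs_of_pos (a := x ^ c i / x ^ r) (by positivity)]
  have h1 : x ^ c i ≤ 3 ^ c i * P ^ c i := by
    rw [← Real.mul_rpow (by norm_num) hP.le]; exact Real.rpow_le_rpow hx.le hx2 (hpos i).le
  calc |θ i| * (|ffall (c i) r| * (x ^ c i / x ^ r))
      ≤ |θ i| * (|ffall (c i) r| * (3 ^ c i * P ^ c i / P ^ r)) := by gcongr
    _ = |ffall (c i) r| * 3 ^ c i * ((P ^ c i * |θ i|) / P ^ r) := by ring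
    _ ≤ _ := by gcongr; exact hX i

/-- Cutting a sum into `K` pieces of length at most `q`. -/
theorem chunk_sum (f : ℝ → ℂ) (q : ℕ) (b β : ℝ)
    (h : ∀ (a : ℝ) (M : ℕ), b ≤ a → M ≤ q → ‖∑ n ∈ range M, f (a + n)‖ ≤ β ∨ 2 * b + 1 < a + M) (K : ℕ) :
    ∀ (a : ℝ) (M : ℕ), b ≤ a → M ≤ K * q → a + M ≤ 2 * b + 1 → ‖∑ n ∈ range M, f (a + n)‖ ≤ K * β := by
  induction K with
  | zero => intro a M _ hM _; have : M = 0 := by omega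
            subst this; simp
  | succ K ih =>
    intro a M ha hM hb
    have hβ : 0 ≤ β := by
      rcases h a 0 ha (by omega) with h | h
      · simpa using h
      · push_cast at h; have : (0:ℝ) ≤ M := Nat.cast_nonneg M
        linarith
    rcases le_or_gt M q with hq | hq
    · rcases h a M ha hq with h | h
      · refine h.trans ?_; push_cast; nlinarith [(Nat.cast_nonneg K : (0:ℝ) ≤ K)]
      · linarith
    · obtain ⟨M', rfl⟩ := Nat.exists_eq_add_of_lt hq
      rw [add_assoc, sum_range_add]
      push_cast at hb
      refine (norm_add_le _ _).trans ?_
      have h1 := h a q ha le_rfl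
      have h2 := ih (a + q) (M' + 1) (by linarith [(Nat.cast_nonneg q : (0:ℝ) ≤ q)])
        (by rw [Nat.add_mul, one_mul] at hM; omega) (by push_cast; linarith)
      have e : ∀ n, f (a + ((q + n : ℕ) : ℝ)) = f (a + q + n) := by intro n; push_cast; rw [add_assoc]
      simp only [e]
      rcases h1 with h1 | h1
      · push_cast; linarith
      · have : (0:ℝ) ≤ M' := Nat.cast_nonneg M'
        linarith

set_option maxHeartbeats 1000000 in
/-- Power saving for the exponential sums along the curve, on short pieces of `[P, 2P+1]`. -/
theorem expsum_chunk {m : ℕ} (hm : 0 < m) (c : Fin m → ℝ) (hpos : ∀ i, 0 < c i)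
    (hinj : Function.Injective c) (hni : ∀ i, ∀ k : ℤ, c i ≠ (k : ℝ)) :
    ∃ C δ η : ℝ, 0 < C ∧ 0 < δ ∧ δ ≤ 1 / 2 ∧ 0 < η ∧ ∀ P : ℕ, 1 ≤ P → ∀ θ : Fin m → ℝ, (∀ i, |θ i| ≤ 1) →
      ∀ X : ℝ, 1 ≤ X → (∃ i, X ≤ (P : ℝ) ^ c i * |θ i|) → ∀ (a : ℝ) (M : ℕ), P ≤ a →
      a + M ≤ 3 * P → M ≤ η * P → M ≤ P →
      ‖∑ n ∈ range M, ex (phase c θ 0 (a + n))‖ ≤ C * P * X ^ (-δ) := by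
  have : Nonempty (Fin m) := ⟨⟨0, hm⟩⟩
  obtain ⟨imax, himax⟩ := Finite.exists_max c
  -- orders from `r0` on exceed every exponent by at least one, so `X ≤ P ^ (r - 1)` there
  set r0 := ⌈c imax⌉₊ + 1 with hr0
  obtain ⟨κ, hκ, hnd⟩ := ffall_nondeg hm c hinj hni r0
  set B0 : ℝ := 1 + ∑ r ∈ range (r0 + m + 1), ∑ i, |ffall (c i) r| * 3 ^ c i with hB0
  have hB01 : 1 ≤ B0 := by
    rw [hB0]; have : 0 ≤ ∑ r ∈ range (r0 + m + 1), ∑ i, |ffall (c i) r| * 3 ^ c i := by positivity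
    linarith
  have hB0r : ∀ r < r0 + m + 1, ∑ i, |ffall (c i) r| * 3 ^ c i ≤ B0 := by
    intro r hr
    have := single_le_sum (f := fun r => ∑ i, |ffall (c i) r| * 3 ^ c i)
      (fun r _ => by positivity) (mem_range.2 hr)
    rw [hB0]; linarith
  set κ1 : ℝ := min (κ / 3 ^ (r0 + m)) 1 with hκ1
  have hκpos : 0 < κ1 := by rw [hκ1]; apply lt_min <;> positivity
  set κ' := κ1 / 2 with hκ'
  have hκ'pos : 0 < κ' := by positivity
  have hκ'1 : κ' ≤ 1 := by have : κ1 ≤ 1 := min_le_right _ _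
                           linarith
  set B := B0 / κ' with hB
  have hB1 : 1 ≤ B := by rw [hB, le_div_iff₀ hκ'pos]; linarith
  have hex : ∀ l : Fin m, ExpSumBound (r0 + l) B 1 := fun l =>
    expSumBound (r0 + l) (by omega) B 1 hB1 one_pos le_rfl
  choose Cf δf hCf hδf hδf2 hmain using hex
  obtain ⟨lm, hlm⟩ := Finite.exists_min δf
  refine ⟨(1 + ∑ l, Cf l) * κ' ^ (-(1 : ℝ)), δf lm, κ' / B0, ?_, hδf lm, hδf2 lm, by positivity, ?_⟩
  · have : 0 ≤ ∑ l, Cf l := sum_nonneg fun l _ => (hCf l).le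
    positivity
  intro P hP θ hθ X1 hX1 hXi a M ha haM hMη hMP
  have hP1 : (1 : ℝ) ≤ P := by exact_mod_cast hP
  have hP0 : (0 : ℝ) < P := by linarith
  have ha0 : 0 < a := by linarith
  have hM0 : (0 : ℝ) ≤ M := Nat.cast_nonneg M
  set X : ℝ := ‖(fun i => (P : ℝ) ^ c i * θ i)‖ with hX
  have hXle : ∀ i, (P : ℝ) ^ c i * |θ i| ≤ X := by
    intro i
    have := norm_le_pi_norm (fun i => (P : ℝ) ^ c i * θ i) i
    rwa [Real.norm_eq_abs, abs_mul, abs_of_pos (a := (P : ℝ) ^ c i) (by positivity)] at this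
  have hX1X : X1 ≤ X := by obtain ⟨i, hi⟩ := hXi; exact hi.trans (hXle i)
  have hX0 : 0 < X := by linarith
  have hCsum : ∀ l, Cf l ≤ 1 + ∑ l, Cf l := fun l => by
    have := single_le_sum (f := Cf) (fun l _ => (hCf l).le) (mem_univ l); linarith
  have hC1 : 1 ≤ 1 + ∑ l, Cf l := by
    have : 0 ≤ ∑ l, Cf l := sum_nonneg fun l _ => (hCf l).le
    linarith
  -- it suffices to bound by a power of `κ' X`
  have hred : ∀ δ, δf lm ≤ δ → δ ≤ 1 → 1 ≤ κ' * X → (κ' * X) ^ (-δ) ≤ κ' ^ (-(1:ℝ)) * X1 ^ (-δf lm) := by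
    intro δ h1 h2 h3
    calc (κ' * X) ^ (-δ) ≤ (κ' * X) ^ (-δf lm) := Real.rpow_le_rpow_of_exponent_le h3 (by linarith)
      _ = κ' ^ (-δf lm) * X ^ (-δf lm) := Real.mul_rpow hκ'pos.le hX0.le
      _ ≤ κ' ^ (-(1:ℝ)) * X1 ^ (-δf lm) := by
          apply mul_le_mul
          · exact Real.rpow_le_rpow_of_exponent_ge hκ'pos hκ'1 (by linarith [hδf2 lm])
          · exact Real.rpow_le_rpow_of_nonpos (by linarith) hX1X (by linarith [hδf lm])
          · positivity
          · positivity
  rcases lt_or_ge (κ' * X) 1 with hsmall | hbig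
  · calc _ ≤ (M : ℝ) := norm_sum_ex_le M _
      _ ≤ 1 * P * 1 := by have hMP' : (M : ℝ) ≤ P := by exact_mod_cast hMP
                          linarith
      _ ≤ (1 + ∑ l, Cf l) * P * (κ' ^ (-(1:ℝ)) * X1 ^ (-δf lm)) := by
          have h1 : κ' * X1 ≤ 1 := le_trans (by gcongr) hsmall.le
          have h2 : 1 ≤ (κ' * X1) ^ (-δf lm) :=
            Real.one_le_rpow_of_pos_of_le_one_of_nonpos (by positivity) h1 (by linarith [hδf lm])
          rw [Real.mul_rpow hκ'pos.le (by linarith)] at h2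
          have h3 : κ' ^ (-δf lm) ≤ κ' ^ (-(1:ℝ)) :=
            Real.rpow_le_rpow_of_exponent_ge hκ'pos hκ'1 (by linarith [hδf2 lm])
          gcongr
          exact h2.trans (by gcongr)
      _ = _ := by ring
  obtain ⟨l, hl⟩ := hnd (fun i => θ i * a ^ c i)
  set r := r0 + (l : ℕ) with hr
  have hrm : r + 1 < r0 + m + 1 := by have := l.2; omega
  have hlow : κ1 * (X / P ^ r) ≤ |phase c θ r a| := by
    have e : phase c θ r a = (∑ i, ffall (c i) r * (θ i * a ^ c i)) / a ^ r := by
      unfold phase; rw [sum_div]; apply sum_congr rfl; intro i _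
      rw [Real.rpow_sub ha0, Real.rpow_natCast]; ring
    have h1 : X ≤ ‖(fun i => θ i * a ^ c i)‖ := by
      rw [hX, pi_norm_le_iff_of_nonneg (norm_nonneg _)]
      intro i
      refine le_trans ?_ (norm_le_pi_norm (fun i => θ i * a ^ c i) i)
      rw [Real.norm_eq_abs, Real.norm_eq_abs, abs_mul, abs_mul, mul_comm,
        abs_of_pos (a := (P : ℝ) ^ c i) (by positivity), abs_of_pos (a := a ^ c i) (by positivity)]
      gcongr
      exact (hpos i).le
    rw [e, abs_div, abs_of_pos (a := a ^ r) (by positivity), le_div_iff₀ (by positivity)]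
    refine le_trans ?_ hl
    have h2 : a ^ r ≤ 3 ^ (r0 + m) * P ^ r := by
      calc a ^ r ≤ (3 * P) ^ r := by gcongr; linarith
        _ = 3 ^ r * P ^ r := mul_pow _ _ _
        _ ≤ _ := by gcongr; norm_num; omega
    calc κ1 * (X / P ^ r) * a ^ r ≤ (κ / 3 ^ (r0 + m)) * (X / P ^ r) * (3 ^ (r0 + m) * P ^ r) := by
          gcongr; exact min_le_left _ _
      _ = κ * X := by field_simp
      _ ≤ _ := by gcongr
  have hPr : (0 : ℝ) < P ^ r := by positivity
  -- on a short piece the large derivative keeps its size and hence its sign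
  have hvar : ∀ x ∈ Set.Icc a (a + M), |phase c θ r x - phase c θ r a| ≤ κ' * (X / P ^ r) := by
    intro x hx
    obtain ⟨y, hy, he⟩ := mvt_diff (f := phase c θ r) (f' := phase c θ (r + 1)) (x := a) (h := x - a)
      (by linarith [hx.1]) (fun y hy => phase_hasDerivAt c θ r (by linarith [hy.1]))
    rw [add_sub_cancel] at he hy
    rw [he, abs_mul, abs_of_nonneg (by linarith [hx.1])]
    have h1 := phase_abs_le c θ hpos (r + 1) hP0 (x := y) (by linarith [hy.1]) (by linarith [hy.2, hx.2]) hXle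
    calc (x - a) * |phase c θ (r + 1) y| ≤ (κ' / B0 * P) * (B0 * (X / P ^ (r + 1))) := by
          apply mul_le_mul
          · linarith [hx.2]
          · refine h1.trans ?_; gcongr; exact hB0r _ hrm
          · positivity
          · positivity
      _ = κ' * (X / P ^ r) := by rw [pow_succ]; field_simp
  have hup : ∀ x ∈ Set.Icc a (a + M), ∀ r' < r0 + m + 1, |phase c θ r' x| ≤ B0 * (X / P ^ r') := by
    intro x hx r' hr'
    refine (phase_abs_le c θ hpos r' hP0 (x := x) (by linarith [hx.1]) (by linarith [hx.2]) hXle).trans ?_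
    gcongr; exact hB0r _ hr'
  have hXP : κ' * X ≤ (P : ℝ) ^ (((r0 + (l : ℕ) : ℕ) : ℝ) - 1) := by
    calc κ' * X ≤ 1 * X := by gcongr
      _ = X := one_mul X
      _ ≤ (P : ℝ) ^ c imax := by
          rw [hX, pi_norm_le_iff_of_nonneg (by positivity)]
          intro i
          rw [Real.norm_eq_abs, abs_mul, abs_of_pos (a := (P : ℝ) ^ c i) (by positivity)]
          calc _ ≤ (P : ℝ) ^ c imax * 1 := by
                gcongr
                · exact himax i
                · exact hθ i
            _ = _ := mul_one _
      _ ≤ _ := by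
          apply Real.rpow_le_rpow_of_exponent_le hP1
          push_cast [hr0]
          have := Nat.le_ceil (c imax)
          have : (0 : ℝ) ≤ (l : ℕ) := Nat.cast_nonneg _
          linarith
  have hkX : κ' * X / P ^ r = κ' * (X / P ^ r) := by ring
  have hBX : ∀ Y : ℝ, B * (κ' * X / Y) = B0 * (X / Y) := by intro Y; rw [hB]; field_simp
  have hfin : ‖∑ n ∈ range M, ex (phase c θ 0 (a + n))‖ ≤ Cf l * P * (κ' * X) ^ (-δf l) := by
    rcases le_or_gt 0 (phase c θ r a) with hs | hs
    · refine hmain l (phase c θ) a M P (κ' * X) hP1 (by exact_mod_cast hMP) hbig hXP ⟨?_, ?_, ?_, ?_⟩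
      · intro i x hx; exact phase_hasDerivAt c θ i (by linarith [hx.1])
      · intro x hx
        rw [abs_of_nonneg hs] at hlow
        have := abs_le.1 (hvar x hx)
        rw [hkX]
        have e : κ1 * (X / P ^ r) = 2 * (κ' * (X / P ^ r)) := by rw [hκ']; ring
        linarith [this.1]
      · intro x hx
        rw [hBX]; exact (le_abs_self _).trans (hup x hx r (by omega))
      · intro x hx
        rw [hBX]; exact hup x hx (r + 1) hrm
    · have hneg : ‖∑ n ∈ range M, ex (phase c θ 0 (a + n))‖ =
          ‖∑ n ∈ range M, ex (phase c (fun i => - θ i) 0 (a + n))‖ := by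
        rw [← RCLike.norm_conj, map_sum]
        congr 1; apply sum_congr rfl; intro n _; rw [conj_ex, phase_neg]
      rw [hneg]
      refine hmain l (phase c (fun i => - θ i)) a M P (κ' * X) hP1 (by exact_mod_cast hMP) hbig hXP ⟨?_, ?_, ?_, ?_⟩
      · intro i x hx; exact phase_hasDerivAt c _ i (by linarith [hx.1])
      · intro x hx
        rw [abs_of_neg hs] at hlow
        have := abs_le.1 (hvar x hx)
        rw [hkX, phase_neg]
        have e : κ1 * (X / P ^ r) = 2 * (κ' * (X / P ^ r)) := by rw [hκ']; ring
        linarith [this.2]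
      · intro x hx
        rw [hBX, phase_neg]; exact (neg_le_abs _).trans (hup x hx r (by omega))
      · intro x hx
        rw [hBX, phase_neg, abs_neg]; exact hup x hx (r + 1) hrm
  calc _ ≤ Cf l * P * (κ' * X) ^ (-δf l) := hfin
    _ ≤ (1 + ∑ l, Cf l) * P * (κ' ^ (-(1:ℝ)) * X1 ^ (-δf lm)) := by
        gcongr
        · exact hCsum l
        · exact hred _ (hlm l) (by linarith [hδf2 l]) hbig
    _ = _ := by ring

/-- Power saving for the exponential sums along the curve. -/
theorem expsum_curve {m : ℕ} (hm : 0 < m) (c : Fin m → ℝ) (hpos : ∀ i, 0 < c i)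
    (hinj : Function.Injective c) (hni : ∀ i, ∀ k : ℤ, c i ≠ (k : ℝ)) :
    ∃ C δ : ℝ, 0 < C ∧ 0 < δ ∧ δ ≤ 1 / 2 ∧ ∀ P : ℕ, 1 ≤ P → ∀ θ : Fin m → ℝ, (∀ i, |θ i| ≤ 1) →
      ∀ X : ℝ, 1 ≤ X → (∃ i, X ≤ (P : ℝ) ^ c i * |θ i|) →
      ‖∑ n ∈ range P, ex (∑ i, θ i * ((P : ℝ) + 1 + n) ^ c i)‖ ≤ C * P * X ^ (-δ) := by
  obtain ⟨C, δ, η, hC, hδ, hδ2, hη, h⟩ := expsum_chunk hm c hpos hinj hni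
  have : Nonempty (Fin m) := ⟨⟨0, hm⟩⟩
  obtain ⟨imax, himax⟩ := Finite.exists_max c
  set Q : ℕ := ⌈2 / η⌉₊ + 1 with hQ
  have hQη : 2 / η ≤ Q := by rw [hQ]; push_cast; linarith [Nat.le_ceil (2 / η)]
  have hQ1 : (1 : ℝ) ≤ Q := by rw [hQ]; push_cast; linarith [(Nat.cast_nonneg _ : (0:ℝ) ≤ (⌈2 / η⌉₊ : ℝ))]
  refine ⟨Q * C + (Q : ℝ) ^ c imax, δ, by positivity, hδ, hδ2, ?_⟩
  intro P hP θ hθ X hX hXi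
  have hP1 : (1 : ℝ) ≤ P := by exact_mod_cast hP
  have hP0 : (0 : ℝ) < P := by linarith
  have hX0 : 0 < X := by linarith
  simp only [← phase_zero]
  rcases lt_or_ge P Q with hPQ | hPQ
  · obtain ⟨i, hi⟩ := hXi
    have hPQ' : (P : ℝ) ≤ Q := by exact_mod_cast hPQ.le
    have hXQ : X ≤ (Q : ℝ) ^ c imax := by
      calc X ≤ _ := hi
        _ ≤ (Q : ℝ) ^ c imax * 1 := by
          apply mul_le_mul _ (hθ i) (abs_nonneg _) (by positivity)
          calc (P : ℝ) ^ c i ≤ (Q : ℝ) ^ c i := Real.rpow_le_rpow hP0.le hPQ' (hpos i).le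
            _ ≤ _ := Real.rpow_le_rpow_of_exponent_le hQ1 (himax i)
        _ = _ := mul_one _
    calc _ ≤ (P : ℝ) := norm_sum_ex_le P _
      _ = 1 * P := (one_mul _).symm
      _ ≤ (Q : ℝ) ^ c imax * X ^ (-δ) * P := by
          gcongr
          calc (1 : ℝ) = X ^ (1 : ℝ) * X ^ (-(1 : ℝ)) := by rw [← Real.rpow_add hX0]; simp
            _ ≤ (Q : ℝ) ^ c imax * X ^ (-δ) := by
                rw [Real.rpow_one]
                gcongr
                linarith
      _ ≤ _ := by
          have : 0 ≤ Q * C * P * X ^ (-δ) := by positivity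
          nlinarith
  · have hPQ' : (Q : ℝ) ≤ P := by exact_mod_cast hPQ
    have hQ0 : 0 < Q := by omega
    have key := chunk_sum (fun x => ex (phase c θ 0 x)) (P / Q + 1) P (C * P * X ^ (-δ)) ?_ Q (P + 1) P
      (by linarith) ?_ (by linarith)
    · refine key.trans ?_
      have : 0 ≤ (Q : ℝ) ^ c imax * P * X ^ (-δ) := by positivity
      nlinarith
    · intro a M ha hM
      rcases le_or_gt (a + M) (2 * P + 1) with h1 | h1
      · left
        have hM' : (M : ℝ) ≤ 2 * (P / Q) := by
          have h2 : ((P / Q : ℕ) : ℝ) ≤ P / Q := Nat.cast_div_le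
          have h3 : (M : ℝ) ≤ ((P / Q : ℕ) : ℝ) + 1 := by exact_mod_cast hM
          have h4 : (1 : ℝ) ≤ P / Q := by rw [le_div_iff₀ (by linarith)]; linarith
          linarith
        refine h P hP θ hθ X hX hXi a M ha (by linarith) ?_ ?_
        · refine hM'.trans ?_
          rw [div_le_iff₀ hη] at hQη
          have : 2 * ((P : ℝ) / Q) = 2 * P / Q := by ring
          rw [this, div_le_iff₀ (by linarith)]
          nlinarith
        · have : (M : ℝ) ≤ P + 1 := by linarith
          have h5 : P / Q + 1 ≤ P := by
            have hQ2 : 2 ≤ Q := by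
              rw [hQ]; have : 0 < ⌈2 / η⌉₊ := Nat.ceil_pos.2 (by positivity)
              omega
            have : P / Q ≤ P / 2 := Nat.div_le_div_left hQ2 (by norm_num)
            omega
          exact_mod_cast hM.trans h5
      · right; exact h1
    · have := Nat.div_add_mod P Q
      have := Nat.mod_lt P hQ0
      nlinarith

/-! ### Abstract dyadic cubes and cell averages -/

/-- A nested sequence of partitions of `G` into finite cells (dyadic cubes). `Q j x` is the cell
of generation `j` containing `x`; all cells of generation `j` have `V j` elements, generation `0`
is the partition into points, and a parent is at most `D` times as large as its children. -/
structure Cubes (G : Type) where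
  Q : ℕ → G → Finset G
  V : ℕ → ℕ
  D : ℕ
  self_mem : ∀ j x, x ∈ Q j x
  eq_of_mem : ∀ {j x y}, y ∈ Q j x → Q j y = Q j x
  mono : ∀ j x, Q j x ⊆ Q (j + 1) x
  card_eq : ∀ j x, (Q j x).card = V j
  V_succ : ∀ j, V (j + 1) ≤ D * V j
  V_large : ∀ M : ℝ, ∃ j0, ∀ j ≥ j0, M ≤ V j
  zero : ∀ x, Q 0 x = {x}

namespace Cubes
variable {G : Type} (S : Cubes G)

theorem mem_comm {j : ℕ} {x y : G} : y ∈ S.Q j x ↔ x ∈ S.Q j y :=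
  ⟨fun h => by rw [S.eq_of_mem h]; exact S.self_mem _ _,
   fun h => by rw [S.eq_of_mem h]; exact S.self_mem _ _⟩

theorem mono' {i j : ℕ} (h : i ≤ j) (x : G) : S.Q i x ⊆ S.Q j x := by
  induction j, h using Nat.le_induction with
  | base => exact subset_rfl
  | succ j _ ih => exact ih.trans (S.mono j x)

theorem V_pos [Nonempty G] (j : ℕ) : 0 < S.V j := by
  obtain ⟨x⟩ := ‹Nonempty G›
  rw [← S.card_eq j x]; exact card_pos.2 ⟨x, S.self_mem j x⟩

theorem D_pos [Nonempty G] : 1 ≤ S.D := by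
  have h := S.V_succ 0
  have := S.V_pos 1
  rcases Nat.eq_zero_or_pos S.D with h0 | h0
  · rw [h0, zero_mul, zero_add] at h; omega
  · exact h0

/-- Averaging over the cells of generation `j`. -/
def E {H : Type} [AddCommGroup H] [Module ℝ H] (j : ℕ) (f : G → H) (x : G) : H :=
  (S.V j : ℝ)⁻¹ • ∑ y ∈ S.Q j x, f y

theorem E_const {H : Type} [AddCommGroup H] [Module ℝ H] {j : ℕ} {f : G → H} {x y : G}
    (h : y ∈ S.Q j x) : S.E j f y = S.E j f x := by
  unfold E; rw [S.eq_of_mem h]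

theorem E_zero {H : Type} [AddCommGroup H] [Module ℝ H] (f : G → H) : S.E 0 f = f := by
  ext x
  have h : S.V 0 = 1 := by rw [← S.card_eq 0 x, S.zero]; simp
  simp [E, S.zero, h]

theorem E_add {H : Type} [AddCommGroup H] [Module ℝ H] (j : ℕ) (f g : G → H) :
    S.E j (f + g) = S.E j f + S.E j g := by
  ext x; simp [E, sum_add_distrib]

theorem E_sub {H : Type} [AddCommGroup H] [Module ℝ H] (j : ℕ) (f g : G → H) :
    S.E j (f - g) = S.E j f - S.E j g := by
  ext x; simp [E, smul_sub]

theorem E_smul {H : Type} [AddCommGroup H] [Module ℝ H] (j : ℕ) (r : ℝ) (f : G → H) :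
    S.E j (r • f) = r • S.E j f := by
  ext x; simp only [E, Pi.smul_apply, ← smul_sum]; rw [smul_comm]

theorem E_tower [Nonempty G] {H : Type} [AddCommGroup H] [Module ℝ H] {i j : ℕ} (h : i ≤ j)
    (f : G → H) : S.E j (S.E i f) = S.E j f := by
  classical
  ext x
  have hV : (S.V i : ℝ) ≠ 0 := by exact_mod_cast (S.V_pos i).ne'
  unfold E
  congr 1
  rw [← smul_sum]
  have : ∑ y ∈ S.Q j x, ∑ z ∈ S.Q i y, f z = ∑ z ∈ S.Q j x, ∑ y ∈ S.Q i z, f z := by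
    apply sum_comm'
    intro y z
    constructor
    · rintro ⟨hy, hz⟩
      refine ⟨S.mem_comm.1 hz, ?_⟩
      rw [← S.eq_of_mem hy]; exact S.mono' h y hz
    · rintro ⟨hy, hz⟩
      refine ⟨?_, S.mem_comm.1 hy⟩
      rw [← S.eq_of_mem hz]; exact S.mono' h z hy
  rw [this]
  simp only [sum_const, S.card_eq, ← smul_sum]
  rw [← Nat.cast_smul_eq_nsmul ℝ, smul_smul, inv_mul_cancel₀ hV, one_smul]

theorem E_indicator {H : Type} [AddCommGroup H] [Module ℝ H] {j : ℕ} {Ω : Set G}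
    (hΩ : ∀ x ∈ Ω, ∀ y ∈ S.Q j x, y ∈ Ω) (f : G → H) :
    S.E j (Ω.indicator f) = Ω.indicator (S.E j f) := by
  classical
  ext x
  by_cases hx : x ∈ Ω
  · rw [Set.indicator_of_mem hx]
    unfold E; congr 1; apply sum_congr rfl; intro y hy
    rw [Set.indicator_of_mem (hΩ x hx y hy)]
  · rw [Set.indicator_of_notMem hx]
    unfold E
    rw [sum_eq_zero, smul_zero]
    intro y hy
    rw [Set.indicator_of_notMem]
    intro hy'; exact hx (hΩ y hy' x (S.mem_comm.1 hy))

theorem norm_E_le {H : Type} [NormedAddCommGroup H] [NormedSpace ℝ H] (j : ℕ) (f : G → H) (x : G) :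
    ‖S.E j f x‖ ≤ S.E j (fun y => ‖f y‖) x := by
  unfold E
  rw [norm_smul, norm_inv, Real.norm_natCast, smul_eq_mul]
  gcongr
  exact norm_sum_le _ _

theorem E_nonneg (j : ℕ) {f : G → ℝ} (hf : ∀ x, 0 ≤ f x) (x : G) : 0 ≤ S.E j f x := by
  unfold E; rw [smul_eq_mul]
  have : 0 ≤ ∑ y ∈ S.Q j x, f y := sum_nonneg fun y _ => hf y
  positivity

theorem E_le_succ [Nonempty G] (j : ℕ) {f : G → ℝ} (hf : ∀ x, 0 ≤ f x) (x : G) :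
    S.E j f x ≤ S.D * S.E (j + 1) f x := by
  unfold E
  simp only [smul_eq_mul]
  have h1 : (0 : ℝ) < S.V j := by exact_mod_cast S.V_pos j
  have h2 : (0 : ℝ) < S.V (j + 1) := by exact_mod_cast S.V_pos (j + 1)
  have h3 : (S.V (j + 1) : ℝ) ≤ S.D * S.V j := by exact_mod_cast S.V_succ j
  have h4 : ∑ y ∈ S.Q j x, f y ≤ ∑ y ∈ S.Q (j + 1) x, f y :=
    sum_le_sum_of_subset_of_nonneg (S.mono j x) fun y _ _ => hf y
  have h5 : 0 ≤ ∑ y ∈ S.Q (j + 1) x, f y := sum_nonneg fun y _ => hf y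
  calc (S.V j : ℝ)⁻¹ * ∑ y ∈ S.Q j x, f y ≤ (S.D * (S.V (j + 1) : ℝ)⁻¹) * ∑ y ∈ S.Q (j + 1) x, f y := by
        gcongr
        · exact sum_nonneg fun y _ => hf y
        rw [← div_eq_mul_inv, le_div_iff₀ h2, inv_mul_le_iff₀ h1]; linarith
    _ = _ := by ring

theorem E_support [Nonempty G] {H : Type} [AddCommGroup H] [Module ℝ H] (j : ℕ) {f : G → H}
    (hf : f.support.Finite) : (S.E j f).support.Finite := by
  classical
  refine (hf.toFinset.biUnion (S.Q j)).finite_toSet.subset ?_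
  intro x hx
  by_contra hx'
  apply hx
  unfold E
  rw [sum_eq_zero, smul_zero]
  intro y hy
  by_contra hfy
  apply hx'
  simp only [coe_biUnion, Set.Finite.coe_toFinset, Set.mem_iUnion]
  exact ⟨y, hfy, S.mem_comm.1 hy⟩

theorem tsum_cube (j : ℕ) (u : G → ℝ≥0∞) :
    ∑' x, ∑ y ∈ S.Q j x, u y = S.V j * ∑' y, u y := by
  classical
  have h : ∀ x, ∑ y ∈ S.Q j x, u y = ∑' y, if y ∈ S.Q j x then u y else 0 := by
    intro x
    rw [tsum_eq_sum (s := S.Q j x)]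
    · exact sum_congr rfl fun y hy => by rw [if_pos hy]
    · intro y hy; rw [if_neg hy]
  simp only [h]
  rw [ENNReal.tsum_comm, ← ENNReal.tsum_mul_left]
  congr 1; ext y
  rw [tsum_eq_sum (s := S.Q j y)]
  · rw [sum_congr rfl fun x hx => if_pos (S.mem_comm.1 hx), sum_const, S.card_eq, nsmul_eq_mul]
  · intro x hx; rw [if_neg (fun h => hx (S.mem_comm.1 h))]

theorem enorm_E_le {H : Type} [NormedAddCommGroup H] [NormedSpace ℝ H] (j : ℕ)
    (f : G → H) (x : G) :
    ‖S.E j f x‖ₑ ≤ (S.V j : ℝ≥0∞)⁻¹ * ∑ y ∈ S.Q j x, ‖f y‖ₑ := by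
  have hV : (S.V j : ℝ) ≠ 0 := by
    have := S.card_eq j x
    rw [← this]; exact_mod_cast (card_pos.2 ⟨x, S.self_mem j x⟩).ne'
  unfold E
  rw [enorm_smul, enorm_inv hV, Real.enorm_natCast]
  gcongr
  exact enorm_sum_le _ _

theorem tsum_E_le [Nonempty G] {H : Type} [NormedAddCommGroup H] [NormedSpace ℝ H] (j : ℕ)
    (f : G → H) : ∑' x, ‖S.E j f x‖ₑ ≤ ∑' x, ‖f x‖ₑ := by
  have hV : (S.V j : ℝ≥0∞) ≠ 0 := by exact_mod_cast (S.V_pos j).ne'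
  calc _ ≤ ∑' x, (S.V j : ℝ≥0∞)⁻¹ * ∑ y ∈ S.Q j x, ‖f y‖ₑ := ENNReal.tsum_le_tsum (S.enorm_E_le j f)
    _ = _ := by rw [ENNReal.tsum_mul_left, tsum_cube, ← mul_assoc,
                  ENNReal.inv_mul_cancel hV (ENNReal.natCast_ne_top _), one_mul]

/-- Contractivity of cell averages on `ℓ²`, from the Cauchy–Schwarz inequality on each cell. -/
theorem tsum_E_sq_le [Nonempty G] (j : ℕ) (f : G → ℝ) :
    ∑' x, ‖S.E j f x‖ₑ ^ 2 ≤ ∑' x, ‖f x‖ₑ ^ 2 := by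
  have hV0 := S.V_pos j
  have h : ∀ x, ‖S.E j f x‖ₑ ^ 2 ≤ ‖S.E j (fun y => f y ^ 2) x‖ₑ := by
    intro x
    rw [← enorm_pow]
    apply enorm_le_iff_norm_le.2
    rw [Real.norm_eq_abs, Real.norm_eq_abs, abs_of_nonneg (sq_nonneg _)]
    refine le_trans ?_ (le_abs_self _)
    unfold E
    have h1 : (0 : ℝ) < S.V j := by exact_mod_cast hV0
    have := sq_sum_le_card_mul_sum_sq (s := S.Q j x) (f := f)
    rw [S.card_eq] at this
    simp only [smul_eq_mul]
    rw [mul_pow, sq (S.V j : ℝ)⁻¹, mul_assoc]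
    gcongr
    rw [inv_mul_le_iff₀ h1]
    exact this
  calc _ ≤ _ := ENNReal.tsum_le_tsum h
    _ ≤ _ := S.tsum_E_le j _
    _ = _ := by simp [enorm_pow]

end Cubes

/-! ### Stopping cells of the Calderón–Zygmund decomposition -/

theorem enorm_sq_eq {K : ℕ} (v : EuclideanSpace ℝ (Fin K)) : ‖v‖ₑ ^ 2 = ∑ k, ‖v k‖ₑ ^ 2 := by
  have h := EuclideanSpace.norm_sq_eq v
  simp only [← ofReal_norm]
  rw [← ENNReal.ofReal_pow (norm_nonneg _), h, ENNReal.ofReal_sum_of_nonneg (fun _ _ => by positivity)]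
  exact sum_congr rfl fun k _ => ENNReal.ofReal_pow (norm_nonneg _) _

theorem enorm_comp_le {K : ℕ} (v : EuclideanSpace ℝ (Fin K)) (k : Fin K) : ‖v k‖ₑ ≤ ‖v‖ₑ := by
  rw [enorm_le_iff_norm_le]; exact PiLp.norm_apply_le v k

theorem enorm_le_sum {K : ℕ} (v : EuclideanSpace ℝ (Fin K)) : ‖v‖ₑ ≤ ∑ k, ‖v k‖ₑ := by
  have h : ‖v‖ ≤ ∑ k, ‖v k‖ := by
    rw [EuclideanSpace.norm_eq]
    apply Real.sqrt_le_iff.2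
    refine ⟨by positivity, ?_⟩
    exact sum_sq_le_sq_sum_of_nonneg fun _ _ => norm_nonneg _
  simp only [← ofReal_norm]
  rw [← ENNReal.ofReal_sum_of_nonneg (fun _ _ => norm_nonneg _)]
  exact ENNReal.ofReal_le_ofReal h

/-- The diagonal operator with components `Tk k`, acting on vector-valued functions. -/
def vecT {G : Type} {K : ℕ} (Tk : Fin K → (G → ℝ) →ₗ[ℝ] (G → ℝ))
    (F : G → EuclideanSpace ℝ (Fin K)) (x : G) : EuclideanSpace ℝ (Fin K) :=
  WithLp.toLp 2 fun k => Tk k (fun y => F y k) x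

theorem vecT_add {G : Type} {K : ℕ} (Tk : Fin K → (G → ℝ) →ₗ[ℝ] (G → ℝ))
    (F F' : G → EuclideanSpace ℝ (Fin K)) (x : G) :
    vecT Tk (fun y => F y + F' y) x = vecT Tk F x + vecT Tk F' x := by
  ext k
  simp only [vecT, PiLp.add_apply]
  have : (fun y => F y k + F' y k) = (fun y => F y k) + (fun y => F' y k) := rfl
  rw [this, map_add]; rfl

theorem vecT_sum {G : Type} {K : ℕ} (Tk : Fin K → (G → ℝ) →ₗ[ℝ] (G → ℝ)) (J : ℕ)
    (b : ℕ → G → EuclideanSpace ℝ (Fin K)) (x : G) :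
    vecT Tk (fun y => ∑ j ∈ range J, b j y) x = ∑ j ∈ range J, vecT Tk (b j) x := by
  induction J with
  | zero =>
    ext k; simp only [vecT, range_zero, sum_empty, PiLp.zero_apply]
    have : (fun _ : G => (0:ℝ)) = 0 := rfl
    rw [this, map_zero]; rfl
  | succ J ih => simp only [sum_range_succ]; rw [vecT_add, ih]

namespace Cubes
variable {G : Type} (S : Cubes G)

/-- The points whose largest cell with average of `h` above `lam` has generation `j`. -/
def czSet (h : G → ℝ) (lam : ℝ) (j : ℕ) : Set G := {x | lam < S.E j h x ∧ ∀ i > j, S.E i h x ≤ lam}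

theorem czSet_inv {h : G → ℝ} {lam : ℝ} {j : ℕ} : ∀ x ∈ S.czSet h lam j, ∀ y ∈ S.Q j x,
    y ∈ S.czSet h lam j := by
  rintro x ⟨h1, h2⟩ y hy
  refine ⟨by rwa [S.E_const hy], fun i hi => ?_⟩
  rw [S.E_const (S.mono' (le_of_lt hi) x hy)]; exact h2 i hi

theorem czSet_disj {h : G → ℝ} {lam : ℝ} {i j : ℕ} {x : G} (hi : x ∈ S.czSet h lam i)
    (hj : x ∈ S.czSet h lam j) : i = j := by
  rcases lt_trichotomy i j with hij | hij | hij
  · exact absurd (hi.2 j hij) (not_le.2 hj.1)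
  · exact hij
  · exact absurd (hj.2 i hij) (not_le.2 hi.1)

/-- Averages of a finitely supported function over large cells are uniformly small, as the cells
grow without bound. -/
theorem E_small [Nonempty G] {h : G → ℝ} (h0 : ∀ x, 0 ≤ h x) (hf : h.support.Finite) {lam : ℝ}
    (hlam : 0 < lam) : ∃ J, ∀ j ≥ J, ∀ x, S.E j h x ≤ lam := by
  classical
  obtain ⟨J, hJ⟩ := S.V_large ((∑ y ∈ hf.toFinset, h y) / lam)
  refine ⟨J, fun j hj x => ?_⟩
  have h1 := hJ j hj
  have hV : (0 : ℝ) < S.V j := by exact_mod_cast S.V_pos j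
  rw [div_le_iff₀ hlam] at h1
  unfold E; rw [smul_eq_mul, inv_mul_le_iff₀ hV]
  refine le_trans ?_ h1
  rw [← sum_filter_ne_zero]
  apply sum_le_sum_of_subset_of_nonneg
  · intro y hy; simp only [mem_filter] at hy; simp [hy.2]
  · intro y _ _; exact h0 y

theorem czSet_cover {h : G → ℝ} {lam : ℝ} {J : ℕ} (hJ : ∀ j ≥ J, ∀ x, S.E j h x ≤ lam)
    {x : G} (hx : ∀ j < J, x ∉ S.czSet h lam j) : h x ≤ lam := by
  classical
  by_contra hcon
  push Not at hcon
  have h0 : lam < S.E 0 h x := by rwa [S.E_zero]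
  have hP : lam < S.E (Nat.findGreatest (fun j => lam < S.E j h x) J) h x :=
    Nat.findGreatest_spec (P := fun j => lam < S.E j h x) (Nat.zero_le J) h0
  set j := Nat.findGreatest (fun j => lam < S.E j h x) J with hj
  have hjJ : j < J := by
    by_contra hc; exact absurd (hJ j (not_lt.1 hc) x) (not_le.2 hP)
  refine hx j hjJ ⟨hP, fun i hi => ?_⟩
  rcases le_or_gt J i with h1 | h1
  · exact hJ i h1 x
  · exact not_lt.1 (Nat.findGreatest_is_greatest (P := fun j => lam < S.E j h x) hi h1.le)

theorem czSet_cases {h : G → ℝ} {lam : ℝ} {J : ℕ} (x : G) :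
    (∀ j ∈ range J, x ∉ S.czSet h lam j) ∨
    ∃ j ∈ range J, x ∈ S.czSet h lam j ∧ ∀ i ∈ range J, i ≠ j → x ∉ S.czSet h lam i := by
  by_cases hx : ∀ j ∈ range J, x ∉ S.czSet h lam j
  · exact Or.inl hx
  · push Not at hx
    obtain ⟨j, hj, hxj⟩ := hx
    exact Or.inr ⟨j, hj, hxj, fun i _ hne hi => hne (S.czSet_disj hi hxj)⟩

theorem sum_czSet_le {h : G → ℝ} {lam : ℝ} (J : ℕ) (u : G → ℝ≥0∞) (x : G) :
    ∑ j ∈ range J, (S.czSet h lam j).indicator u x ≤ u x := by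
  rcases S.czSet_cases (h := h) (lam := lam) (J := J) x with hx | ⟨j, hj, hxj, hne⟩
  · rw [sum_eq_zero fun j hj => Set.indicator_of_notMem (hx j hj) _]; exact zero_le
  · rw [sum_eq_single_of_mem j hj fun i hi hij => Set.indicator_of_notMem (hne i hi hij) _,
      Set.indicator_of_mem hxj]

theorem sum_tsum_czSet_le {h : G → ℝ} {lam : ℝ} (J : ℕ) (u : G → ℝ≥0∞) :
    ∑ j ∈ range J, ∑' x, (S.czSet h lam j).indicator u x ≤ ∑' x, u x := by
  rw [← Summable.tsum_finsetSum (fun _ _ => ENNReal.summable)]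
  exact ENNReal.tsum_le_tsum (S.sum_czSet_le J u)

theorem card_czSet_le [Nonempty G] {H : Type} [NormedAddCommGroup H] [NormedSpace ℝ H]
    (F : G → H) {lam : ℝ} (j : ℕ) :
    ENNReal.ofReal lam * ∑' x, (S.czSet (fun y => ‖F y‖) lam j).indicator 1 x ≤
      ∑' x, (S.czSet (fun y => ‖F y‖) lam j).indicator (fun y => ‖F y‖ₑ) x := by
  set Ω := S.czSet (fun y => ‖F y‖) lam j with hΩ
  rw [← ENNReal.tsum_mul_left]
  calc _ ≤ ∑' x, ‖S.E j (Ω.indicator (fun y => ‖F y‖)) x‖ₑ := by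
        apply ENNReal.tsum_le_tsum
        intro x
        rw [S.E_indicator S.czSet_inv]
        by_cases hx : x ∈ Ω
        · rw [Set.indicator_of_mem hx, Set.indicator_of_mem hx, Pi.one_apply, mul_one,
            Real.enorm_of_nonneg (S.E_nonneg j (fun _ => norm_nonneg _) x)]
          exact ENNReal.ofReal_le_ofReal hx.1.le
        · rw [Set.indicator_of_notMem hx]; simp
    _ ≤ _ := S.tsum_E_le j _
    _ = _ := by
        congr 1; ext x
        by_cases hx : x ∈ Ω
        · rw [Set.indicator_of_mem hx, Set.indicator_of_mem hx, enorm_norm]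
        · rw [Set.indicator_of_notMem hx, Set.indicator_of_notMem hx, enorm_zero]

end Cubes

/-! ### The vector-valued weak type `(1,1)` inequality -/

/-- The hypotheses on a scalar operator of index `k` under which the Calderón–Zygmund argument
works: boundedness on `ℓ¹` and `ℓ²`, annihilation of functions whose averages over the cells of
some generation `j ≤ k - s` vanish, and locality: for `j > k`, a union of cells of generation `j`
is mapped into its translates by the finite set `Sh j`. -/
structure CZOp {G : Type} [AddCommGroup G] (S : Cubes G) (Sh : ℕ → Finset G) (s : ℕ) (A B : ℝ≥0∞)
    (k : ℕ) (T : (G → ℝ) →ₗ[ℝ] (G → ℝ)) : Prop where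
  l1 : ∀ f : G → ℝ, ∑' x, ‖T f x‖ₑ ≤ A * ∑' x, ‖f x‖ₑ
  l2 : ∀ f : G → ℝ, f.support.Finite → ∑' x, ‖T f x‖ₑ ^ 2 ≤ B * ∑' x, ‖f x‖ₑ ^ 2
  van : ∀ (b : G → ℝ) (j : ℕ), S.E j b = 0 → j + s ≤ k → T b = 0
  supp : ∀ (b : G → ℝ) (j : ℕ) (Ω : Set G), k < j → (∀ x ∈ Ω, ∀ y ∈ S.Q j x, y ∈ Ω) →
    b.support ⊆ Ω → ∀ x, T b x ≠ 0 → ∃ h ∈ Sh j, x - h ∈ Ω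

theorem E_comp {G : Type} (S : Cubes G) {K : ℕ} (j : ℕ) (F : G → EuclideanSpace ℝ (Fin K)) (k : Fin K)
    (x : G) : S.E j F x k = S.E j (fun y => F y k) x := by
  simp [Cubes.E]

theorem vecT_l2 {G : Type} [AddCommGroup G] {S : Cubes G} {Sh : ℕ → Finset G} {s : ℕ} {A B : ℝ≥0∞}
    {K : ℕ} {Tk : Fin K → (G → ℝ) →ₗ[ℝ] (G → ℝ)} (hT : ∀ k : Fin K, CZOp S Sh s A B k (Tk k))
    (F : G → EuclideanSpace ℝ (Fin K)) (hF : F.support.Finite) :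
    ∑' x, ‖vecT Tk F x‖ₑ ^ 2 ≤ B * ∑' x, ‖F x‖ₑ ^ 2 := by
  simp only [enorm_sq_eq]
  rw [Summable.tsum_finsetSum (fun _ _ => ENNReal.summable),
    Summable.tsum_finsetSum (fun _ _ => ENNReal.summable), mul_sum]
  refine sum_le_sum fun k _ => (hT k).l2 _ (hF.subset ?_)
  intro x hx hx'
  apply hx; simp [hx']

theorem card_window (K j s : ℕ) :
    (univ.filter fun k : Fin K => j ≤ (k : ℕ) ∧ (k : ℕ) < j + s).card ≤ s := by
  calc _ ≤ (Ico j (j + s)).card := by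
        apply card_le_card_of_injOn (fun k : Fin K => (k : ℕ))
        · intro k hk; simpa using hk
        · intro a _ b _ h; exact Fin.ext h
    _ = s := by simp

/-- Elementary dichotomy behind the weak type estimate. -/
theorem one_le_split {L a r : ℝ≥0∞} (hL0 : L ≠ 0) (hL : L ≠ ⊤) (h : L ≤ a + r) :
    1 ≤ 2 * L⁻¹ * r + 4 * (L⁻¹ ^ 2 * a ^ 2) := by
  have hc : L⁻¹ * L = 1 := ENNReal.inv_mul_cancel hL0 hL
  rcases le_total a r with har | har
  · refine le_trans ?_ le_self_add
    calc (1 : ℝ≥0∞) = L⁻¹ * L := hc.symm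
      _ ≤ L⁻¹ * (r + r) := by gcongr; exact h.trans (by gcongr)
      _ = _ := by ring
  · refine le_trans ?_ le_add_self
    have h1 : 1 ≤ L⁻¹ * (2 * a) := by
      calc (1 : ℝ≥0∞) = L⁻¹ * L := hc.symm
        _ ≤ L⁻¹ * (a + a) := by gcongr; exact h.trans (by gcongr)
        _ = _ := by ring
    calc (1 : ℝ≥0∞) = 1 ^ 2 := by norm_num
      _ ≤ (L⁻¹ * (2 * a)) ^ 2 := by gcongr
      _ = _ := by ring

/-- Calderón–Zygmund decomposition: the weak type `(1,1)` inequality for diagonal operators, with a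
constant growing linearly in the offset `s`. -/
theorem weak11 {G : Type} [AddCommGroup G] {S : Cubes G} {Sh : ℕ → Finset G} {s : ℕ} {A B : ℝ≥0∞}
    {A1 : ℕ} (hSh : ∀ j, (Sh j).card ≤ A1)
    {K : ℕ} {Tk : Fin K → (G → ℝ) →ₗ[ℝ] (G → ℝ)} (hT : ∀ k : Fin K, CZOp S Sh s A B k (Tk k))
    (F : G → EuclideanSpace ℝ (Fin K)) (hF : F.support.Finite) {lam : ℝ} (hlam : 0 < lam) :
    ∑' x, {x | ENNReal.ofReal lam < ‖vecT Tk F x‖ₑ}.indicator 1 x ≤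
      (A1 + 4 * s * A + 4 * B * S.D) * ((ENNReal.ofReal lam)⁻¹ * ∑' x, ‖F x‖ₑ) := by
  classical
  set h : G → ℝ := fun y => ‖F y‖ with hh
  have h0 : ∀ x, 0 ≤ h x := fun _ => norm_nonneg _
  have hfin : h.support.Finite := hF.subset fun x hx hx' => hx (by simp [hh, hx'])
  set L := ENNReal.ofReal lam with hL
  have hL0 : L ≠ 0 := by rw [hL]; simpa using hlam
  have hLt : L ≠ ⊤ := ENNReal.ofReal_ne_top
  have hc : L⁻¹ * L = 1 := ENNReal.inv_mul_cancel hL0 hLt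
  obtain ⟨J, hJ⟩ := S.E_small h0 hfin hlam
  set Ω : ℕ → Set G := S.czSet h lam with hΩ
  set b : ℕ → G → EuclideanSpace ℝ (Fin K) := fun j => (Ω j).indicator (F - S.E j F) with hb
  set g : G → EuclideanSpace ℝ (Fin K) := fun x => F x - ∑ j ∈ range J, b j x with hg
  have hFg : F = fun x => g x + ∑ j ∈ range J, b j x := by ext1 x; simp [hg]
  -- the mass carried by the exceptional set
  set Φ : ℝ≥0∞ := ∑' x, ‖F x‖ₑ with hΦ
  have hmass : ∑ j ∈ range J, ∑' x, (Ω j).indicator (fun y => ‖F y‖ₑ) x ≤ Φ :=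
    S.sum_tsum_czSet_le J _
  have hb_eq : ∀ j, b j = (Ω j).indicator F - S.E j ((Ω j).indicator F) := by
    intro j; rw [S.E_indicator S.czSet_inv]; simp only [hb]
    rw [Set.indicator_sub']
  have hind : ∀ j, ∑' x, ‖(Ω j).indicator F x‖ₑ = ∑' x, (Ω j).indicator (fun y => ‖F y‖ₑ) x := by
    intro j; congr 1; ext x
    rw [enorm_indicator_eq_indicator_enorm]
  have hb1 : ∀ j, ∑' x, ‖b j x‖ₑ ≤ 2 * ∑' x, (Ω j).indicator (fun y => ‖F y‖ₑ) x := by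
    intro j
    rw [hb_eq]
    calc _ ≤ ∑' x, (‖(Ω j).indicator F x‖ₑ + ‖S.E j ((Ω j).indicator F) x‖ₑ) :=
          ENNReal.tsum_le_tsum fun x => enorm_sub_le
      _ = _ := ENNReal.tsum_add
      _ ≤ ∑' x, ‖(Ω j).indicator F x‖ₑ + ∑' x, ‖(Ω j).indicator F x‖ₑ := by
          exact add_le_add le_rfl (S.tsum_E_le j _)
      _ = _ := by rw [hind, two_mul]
  -- the good function is bounded by `D * lam` since the parents of stopping cells are not selected
  have hgcases : ∀ x, (g x = F x ∧ h x ≤ lam ∧ ∀ j ∈ range J, x ∉ Ω j) ∨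
      ∃ j ∈ range J, x ∈ Ω j ∧ g x = S.E j F x := by
    intro x
    rcases S.czSet_cases (h := h) (lam := lam) (J := J) x with hx | ⟨j, hj, hxj, hne⟩
    · left
      refine ⟨?_, S.czSet_cover hJ fun j hj => hx j (mem_range.2 hj), hx⟩
      simp only [hg, hb]
      rw [sum_eq_zero fun j hj => Set.indicator_of_notMem (hx j hj) _, sub_zero]
    · right
      refine ⟨j, hj, hxj, ?_⟩
      simp only [hg, hb]
      rw [sum_eq_single_of_mem j hj fun i hi hij => Set.indicator_of_notMem (hne i hi hij) _,
        Set.indicator_of_mem (show x ∈ Ω j from hxj)]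
      simp
  have hD1 : (1 : ℝ) ≤ S.D := by exact_mod_cast S.D_pos
  have hgsup : ∀ x, ‖g x‖ₑ ≤ S.D * L := by
    intro x
    rw [hL, ← ENNReal.ofReal_natCast, ← ENNReal.ofReal_mul (by positivity), ← ofReal_norm]
    apply ENNReal.ofReal_le_ofReal
    rcases hgcases x with ⟨hx, hx2, _⟩ | ⟨j, _, hxj, hx⟩
    · rw [hx]; calc ‖F x‖ ≤ 1 * lam := by rw [one_mul]; exact hx2
        _ ≤ _ := by gcongr
    · rw [hx]
      refine (S.norm_E_le j F x).trans ((S.E_le_succ j h0 x).trans ?_)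
      gcongr
      exact hxj.2 (j + 1) (by omega)
  have hg1 : ∑' x, ‖g x‖ₑ ≤ Φ := by
    calc ∑' x, ‖g x‖ₑ ≤ ∑' x, ((⋃ j ∈ range J, Ω j)ᶜ.indicator (fun y => ‖F y‖ₑ) x +
          ∑ j ∈ range J, ‖S.E j ((Ω j).indicator F) x‖ₑ) := by
          apply ENNReal.tsum_le_tsum
          intro x
          rcases hgcases x with ⟨hx, _, hn⟩ | ⟨j, hj, hxj, hx⟩
          · rw [hx]; refine le_trans ?_ le_self_add
            rw [Set.indicator_of_mem]
            simpa using hn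
          · rw [hx]; refine le_trans ?_ le_add_self
            have := single_le_sum (f := fun j => ‖S.E j ((Ω j).indicator F) x‖ₑ)
              (fun _ _ => zero_le) hj
            refine le_trans ?_ this
            rw [S.E_indicator S.czSet_inv, Set.indicator_of_mem (show x ∈ S.czSet h lam j from hxj)]
      _ ≤ ∑' x, (⋃ j ∈ range J, Ω j)ᶜ.indicator (fun y => ‖F y‖ₑ) x +
          ∑ j ∈ range J, ∑' x, (Ω j).indicator (fun y => ‖F y‖ₑ) x := by
          rw [ENNReal.tsum_add, Summable.tsum_finsetSum (fun _ _ => ENNReal.summable)]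
          refine add_le_add le_rfl (sum_le_sum fun j hj => ?_)
          rw [← hind]; exact S.tsum_E_le j _
      _ = ∑' x, ((⋃ j ∈ range J, Ω j)ᶜ.indicator (fun y => ‖F y‖ₑ) x +
          ∑ j ∈ range J, (Ω j).indicator (fun y => ‖F y‖ₑ) x) := by
          rw [ENNReal.tsum_add, Summable.tsum_finsetSum (fun _ _ => ENNReal.summable)]
      _ ≤ Φ := by
          apply ENNReal.tsum_le_tsum
          intro x
          by_cases hx : x ∈ ⋃ j ∈ range J, Ω j
          · rw [Set.indicator_of_notMem (by simpa using hx), zero_add]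
            exact S.sum_czSet_le J _ x
          · rw [sum_eq_zero, add_zero]
            · exact Set.indicator_le_self _ _ x
            · intro j hj; rw [Set.indicator_of_notMem]
              intro hxj; apply hx; simp only [Set.mem_iUnion]; exact ⟨j, hj, hxj⟩
  have hgfin : g.support.Finite := by
    have : g.support ⊆ F.support ∪ ⋃ j ∈ range J, (S.E j F).support := by
      intro x hx
      rcases hgcases x with ⟨h1, _, _⟩ | ⟨j, hj, _, h1⟩
      · left; intro h2; exact hx (h1.trans h2)
      · right; simp only [Set.mem_iUnion]; exact ⟨j, hj, fun h2 => hx (h1.trans h2)⟩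
    refine (hF.union ?_).subset this
    exact Set.Finite.biUnion (range J).finite_toSet fun j _ => S.E_support j hF
  have hTg : ∑' x, ‖vecT Tk g x‖ₑ ^ 2 ≤ B * (S.D * L * Φ) := by
    refine (vecT_l2 hT g hgfin).trans ?_
    gcongr
    calc ∑' x, ‖g x‖ₑ ^ 2 ≤ ∑' x, (S.D * L) * ‖g x‖ₑ := by
          apply ENNReal.tsum_le_tsum; intro x; rw [sq]; gcongr; exact hgsup x
      _ ≤ _ := by rw [ENNReal.tsum_mul_left]; gcongr
  -- only the indices `k` with `j ≤ k < j + s` see the bad function `b j` off the exceptional set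
  set R : G → ℝ≥0∞ := fun x => ∑ j ∈ range J,
    ∑ k ∈ univ.filter (fun k : Fin K => j ≤ (k : ℕ) ∧ (k : ℕ) < j + s),
      ‖Tk k (fun y => b j y k) x‖ₑ with hR
  have hRsum : ∑' x, R x ≤ 2 * s * A * Φ := by
    simp only [hR]
    rw [Summable.tsum_finsetSum (fun _ _ => ENNReal.summable)]
    calc _ ≤ ∑ j ∈ range J, 2 * s * A * ∑' x, (Ω j).indicator (fun y => ‖F y‖ₑ) x := by
          apply sum_le_sum; intro j _
          rw [Summable.tsum_finsetSum (fun _ _ => ENNReal.summable)]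
          calc _ ≤ ∑ k ∈ univ.filter (fun k : Fin K => j ≤ (k : ℕ) ∧ (k : ℕ) < j + s),
                A * (2 * ∑' x, (Ω j).indicator (fun y => ‖F y‖ₑ) x) := by
                apply sum_le_sum; intro k _
                refine ((hT k).l1 _).trans ?_
                gcongr
                refine le_trans ?_ (hb1 j)
                exact ENNReal.tsum_le_tsum fun x => enorm_comp_le _ k
            _ ≤ s * (A * (2 * ∑' x, (Ω j).indicator (fun y => ‖F y‖ₑ) x)) := by
                rw [sum_const, nsmul_eq_mul]
                gcongr
                exact card_window K j s
            _ = _ := by ring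
      _ ≤ _ := by rw [← mul_sum]; gcongr
  -- counting function of the exceptional set, the union of the translates of the stopping cells
  set Z : G → ℝ≥0∞ := fun x => ∑ j ∈ range J, ∑ a ∈ Sh j, (Ω j).indicator 1 (x - a) with hZ
  have hZsum : ∑' x, Z x ≤ A1 * (L⁻¹ * Φ) := by
    simp only [hZ]
    rw [Summable.tsum_finsetSum (fun _ _ => ENNReal.summable)]
    calc _ ≤ ∑ j ∈ range J, A1 * (L⁻¹ * ∑' x, (Ω j).indicator (fun y => ‖F y‖ₑ) x) := by
          apply sum_le_sum; intro j _
          rw [Summable.tsum_finsetSum (fun _ _ => ENNReal.summable)]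
          have : ∀ a, ∑' x, (Ω j).indicator (1 : G → ℝ≥0∞) (x - a) = ∑' x, (Ω j).indicator 1 x :=
            fun a => (Equiv.subRight a).tsum_eq ((Ω j).indicator (1 : G → ℝ≥0∞))
          simp only [this]
          rw [sum_const, nsmul_eq_mul]
          gcongr
          · exact hSh j
          · rw [← ENNReal.mul_le_iff_le_inv hL0 hLt]
            exact S.card_czSet_le F j
      _ ≤ _ := by rw [← mul_sum, ← mul_sum]; gcongr
  have hpt : ∀ x, {x | L < ‖vecT Tk F x‖ₑ}.indicator 1 x ≤
      Z x + (2 * L⁻¹ * R x + 4 * (L⁻¹ ^ 2 * ‖vecT Tk g x‖ₑ ^ 2)) := by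
    intro x
    by_cases hx : L < ‖vecT Tk F x‖ₑ
    swap
    · rw [Set.indicator_of_notMem (show x ∉ {x | L < ‖vecT Tk F x‖ₑ} from hx)]; exact zero_le
    rw [Set.indicator_of_mem (show x ∈ {x | L < ‖vecT Tk F x‖ₑ} from hx), Pi.one_apply]
    by_cases hstar : ∃ j ∈ range J, ∃ a ∈ Sh j, x - a ∈ Ω j
    · refine le_trans ?_ le_self_add
      obtain ⟨j, hj, a, ha, hxa⟩ := hstar
      calc (1 : ℝ≥0∞) = (Ω j).indicator 1 (x - a) := by rw [Set.indicator_of_mem hxa, Pi.one_apply]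
        _ ≤ ∑ a ∈ Sh j, (Ω j).indicator 1 (x - a) :=
          single_le_sum (f := fun a => (Ω j).indicator (1 : G → ℝ≥0∞) (x - a)) (fun _ _ => zero_le) ha
        _ ≤ Z x := single_le_sum (f := fun j => ∑ a ∈ Sh j, (Ω j).indicator (1 : G → ℝ≥0∞) (x - a))
          (fun _ _ => zero_le) hj
    · refine le_trans ?_ le_add_self
      apply one_le_split hL0 hLt
      refine hx.le.trans ?_
      rw [hFg, vecT_add, vecT_sum]
      refine (enorm_add_le _ _).trans ?_
      gcongr
      refine (enorm_sum_le _ _).trans ?_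
      simp only [hR]
      apply sum_le_sum
      intro j hj
      refine (enorm_le_sum _).trans ?_
      rw [sum_filter]
      apply sum_le_sum
      intro k _
      split_ifs with hk
      · exact le_rfl
      · have hz : Tk k (fun y => b j y k) x = 0 := by
          rw [not_and_or, not_le, not_lt] at hk
          rcases hk with hk | hk
          · by_contra hne
            apply hstar
            refine ⟨j, hj, (hT k).supp (fun y => b j y k) j (Ω j) hk S.czSet_inv ?_ x hne⟩
            intro y hy
            by_contra hy'
            apply hy
            simp only [hb]
            rw [Set.indicator_of_notMem hy']; rfl
          · rw [(hT k).van _ j _ hk]; · rfl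
            ext y
            rw [← E_comp, hb_eq, S.E_sub, S.E_tower le_rfl, sub_self]; rfl
        show ‖Tk k (fun y => b j y k) x‖ₑ ≤ 0
        rw [hz, enorm_zero]
  calc _ ≤ _ := ENNReal.tsum_le_tsum hpt
    _ = ∑' x, Z x + (2 * L⁻¹ * ∑' x, R x + 4 * (L⁻¹ ^ 2 * ∑' x, ‖vecT Tk g x‖ₑ ^ 2)) := by
        rw [ENNReal.tsum_add, ENNReal.tsum_add, ENNReal.tsum_mul_left, ENNReal.tsum_mul_left,
          ENNReal.tsum_mul_left]
    _ ≤ A1 * (L⁻¹ * Φ) + (2 * L⁻¹ * (2 * s * A * Φ) + 4 * (L⁻¹ ^ 2 * (B * (S.D * L * Φ)))) := by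
        gcongr
    _ = A1 * (L⁻¹ * Φ) + (2 * L⁻¹ * (2 * s * A * Φ) + (L⁻¹ * L) * (4 * (L⁻¹ * (B * (S.D * Φ))))) := by
        ring
    _ = _ := by rw [hc]; ring

/-! ### Layer cake formulas and Marcinkiewicz interpolation -/

theorem lint_Ioo_rpow {q b : ℝ} (hq : 0 < q) (hb : 0 ≤ b) :
    ∫⁻ t in Set.Ioo 0 b, ENNReal.ofReal (t ^ (q - 1)) = ENNReal.ofReal (b ^ q / q) := by
  have hi : IntervalIntegrable (fun t : ℝ => t ^ (q - 1)) volume 0 b :=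
    intervalIntegral.intervalIntegrable_rpow' (by linarith)
  have h1 : ∫ t in (0:ℝ)..b, t ^ (q - 1) = b ^ q / q := by
    rw [integral_rpow (Or.inl (by linarith))]
    rw [sub_add_cancel, Real.zero_rpow hq.ne', sub_zero]
  rw [intervalIntegral.integral_of_le hb, integral_Ioc_eq_integral_Ioo] at h1
  rw [← h1, ofReal_integral_eq_lintegral_ofReal]
  · exact ((intervalIntegrable_iff_integrableOn_Ioo_of_le hb).1 hi)
  · refine (ae_restrict_iff' measurableSet_Ioo).2 (Eventually.of_forall fun t ht => ?_)
    exact Real.rpow_nonneg ht.1.le _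

theorem lint_Ioi_rpow {q b : ℝ} (hq : 0 < q) (hb : 0 < b) :
    ∫⁻ t in Set.Ioi b, ENNReal.ofReal (t ^ (-q - 1)) = ENNReal.ofReal (b ^ (-q) / q) := by
  have h1 : ∫ t in Set.Ioi b, t ^ (-q - 1) = b ^ (-q) / q := by
    rw [integral_Ioi_rpow_of_lt (by linarith) hb]
    rw [sub_add_cancel]; field_simp
  rw [← h1, ofReal_integral_eq_lintegral_ofReal]
  · exact integrableOn_Ioi_rpow_of_lt (by linarith) hb
  · refine (ae_restrict_iff' measurableSet_Ioi).2 (Eventually.of_forall fun t ht => ?_)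
    exact Real.rpow_nonneg (hb.trans ht).le _

/-- The layer cake formula for a single number. -/
theorem layer_a {p a : ℝ} (hp : 0 < p) (ha : 0 ≤ a) :
    ∫⁻ t in Set.Ioi (0:ℝ), ENNReal.ofReal (p * t ^ (p - 1)) * {t | t < a}.indicator 1 t =
      ENNReal.ofReal a ^ p := by
  have h1 : ∫⁻ t in Set.Ioi (0:ℝ), ENNReal.ofReal (p * t ^ (p - 1)) * {t | t < a}.indicator 1 t =
      ∫⁻ t in Set.Ioo 0 a, ENNReal.ofReal p * ENNReal.ofReal (t ^ (p - 1)) := by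
    rw [← lintegral_indicator measurableSet_Ioi, ← lintegral_indicator measurableSet_Ioo]
    congr 1; ext t
    by_cases h0 : 0 < t
    · rw [Set.indicator_of_mem (show t ∈ Set.Ioi 0 from h0)]
      by_cases h2 : t < a
      · rw [Set.indicator_of_mem (show t ∈ {t | t < a} from h2),
          Set.indicator_of_mem (show t ∈ Set.Ioo 0 a from ⟨h0, h2⟩), Pi.one_apply, mul_one,
          ENNReal.ofReal_mul hp.le]
      · rw [Set.indicator_of_notMem (show t ∉ {t | t < a} from h2),
          Set.indicator_of_notMem (show t ∉ Set.Ioo 0 a from fun h => h2 h.2), mul_zero]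
    · rw [Set.indicator_of_notMem (show t ∉ Set.Ioi 0 from h0),
        Set.indicator_of_notMem (show t ∉ Set.Ioo 0 a from fun h => h0 h.1)]
  rw [h1, lintegral_const_mul' _ _ ENNReal.ofReal_ne_top, lint_Ioo_rpow hp ha,
    ← ENNReal.ofReal_mul hp.le, ENNReal.ofReal_rpow_of_nonneg ha hp.le]
  congr 1; field_simp

/-- The contribution of the values above `γ t`, estimated by the weak type `(1,1)` bound. -/
theorem layer_b {p a γ : ℝ} (hp : 1 < p) (hγ : 0 < γ) (ha : 0 ≤ a) :
    ∫⁻ t in Set.Ioi (0:ℝ), ENNReal.ofReal (p * t ^ (p - 1)) * ((ENNReal.ofReal t)⁻¹ *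
      {t | γ * t < a}.indicator (fun _ => ENNReal.ofReal a) t) ≤
      ENNReal.ofReal (p / (p - 1) * γ ^ (1 - p)) * ENNReal.ofReal a ^ p := by
  have hp0 : 0 < p := by linarith
  have hp1 : 0 < p - 1 := by linarith
  have h1 : ∫⁻ t in Set.Ioi (0:ℝ), ENNReal.ofReal (p * t ^ (p - 1)) * ((ENNReal.ofReal t)⁻¹ *
      {t | γ * t < a}.indicator (fun _ => ENNReal.ofReal a) t) =
      ∫⁻ t in Set.Ioo 0 (a / γ), ENNReal.ofReal (p * a) * ENNReal.ofReal (t ^ (p - 1 - 1)) := by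
    rw [← lintegral_indicator measurableSet_Ioi, ← lintegral_indicator measurableSet_Ioo]
    congr 1; ext t
    by_cases h0 : 0 < t
    · rw [Set.indicator_of_mem (show t ∈ Set.Ioi 0 from h0)]
      by_cases h2 : γ * t < a
      · rw [Set.indicator_of_mem (show t ∈ {t | γ * t < a} from h2),
          Set.indicator_of_mem (show t ∈ Set.Ioo 0 (a / γ) from ⟨h0, by rw [lt_div_iff₀ hγ]; linarith⟩),
          ← ENNReal.ofReal_inv_of_pos h0, ← ENNReal.ofReal_mul (by positivity),
          ← ENNReal.ofReal_mul (by positivity), ← ENNReal.ofReal_mul (by positivity)]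
        congr 1
        rw [Real.rpow_sub_one h0.ne' (p - 1)]; field_simp
      · rw [Set.indicator_of_notMem (show t ∉ {t | γ * t < a} from h2),
          Set.indicator_of_notMem (show t ∉ Set.Ioo 0 (a / γ) from fun h => h2 (by
            have := h.2; rw [lt_div_iff₀ hγ] at this; linarith)), mul_zero, mul_zero]
    · rw [Set.indicator_of_notMem (show t ∉ Set.Ioi 0 from h0),
        Set.indicator_of_notMem (show t ∉ Set.Ioo 0 (a / γ) from fun h => h0 h.1)]
  rw [h1, lintegral_const_mul' _ _ ENNReal.ofReal_ne_top, lint_Ioo_rpow hp1 (by positivity),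
    ← ENNReal.ofReal_mul (by positivity), ENNReal.ofReal_rpow_of_nonneg ha hp0.le,
    ← ENNReal.ofReal_mul (by positivity)]
  apply le_of_eq
  congr 1
  rcases ha.eq_or_lt with rfl | ha
  · rw [Real.zero_rpow hp0.ne']; simp
  · rw [Real.div_rpow ha.le hγ.le, Real.rpow_sub_one ha.ne', show 1 - p = -(p - 1) by ring,
      Real.rpow_neg hγ.le]
    field_simp

/-- The contribution of the values at most `γ t`, estimated by the `ℓ²` bound. -/
theorem layer_c {p a γ : ℝ} (hp : 1 < p) (hp2 : p < 2) (hγ : 0 < γ) (ha : 0 ≤ a) :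
    ∫⁻ t in Set.Ioi (0:ℝ), ENNReal.ofReal (p * t ^ (p - 1)) * ((ENNReal.ofReal t)⁻¹ ^ 2 *
      {t | a ≤ γ * t}.indicator (fun _ => ENNReal.ofReal a ^ 2) t) ≤
      ENNReal.ofReal (p / (2 - p) * γ ^ (2 - p)) * ENNReal.ofReal a ^ p := by
  have hp0 : 0 < p := by linarith
  have hp1 : 0 < 2 - p := by linarith
  rcases ha.eq_or_lt with rfl | ha
  · refine le_of_eq_of_le ?_ zero_le
    simp
  have h1 : ∫⁻ t in Set.Ioi (0:ℝ), ENNReal.ofReal (p * t ^ (p - 1)) * ((ENNReal.ofReal t)⁻¹ ^ 2 *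
      {t | a ≤ γ * t}.indicator (fun _ => ENNReal.ofReal a ^ 2) t) =
      ∫⁻ t in Set.Ici (a / γ), ENNReal.ofReal (p * a ^ 2) * ENNReal.ofReal (t ^ (-(2 - p) - 1)) := by
    rw [← lintegral_indicator measurableSet_Ioi, ← lintegral_indicator measurableSet_Ici]
    congr 1; ext t
    by_cases h0 : 0 < t
    · rw [Set.indicator_of_mem (show t ∈ Set.Ioi 0 from h0)]
      by_cases h2 : a ≤ γ * t
      · rw [Set.indicator_of_mem (show t ∈ {t | a ≤ γ * t} from h2),
          Set.indicator_of_mem (show t ∈ Set.Ici (a / γ) from by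
            rw [Set.mem_Ici, div_le_iff₀ hγ]; linarith),
          ← ENNReal.ofReal_inv_of_pos h0, ← ENNReal.ofReal_pow (by positivity),
          ← ENNReal.ofReal_pow (by positivity), ← ENNReal.ofReal_mul (by positivity),
          ← ENNReal.ofReal_mul (by positivity), ← ENNReal.ofReal_mul (by positivity)]
        congr 1
        rw [show -(2 - p) - 1 = p - 1 - (2 : ℕ) by push_cast; ring, Real.rpow_sub_natCast h0.ne']
        field_simp
      · rw [Set.indicator_of_notMem (show t ∉ {t | a ≤ γ * t} from h2),
          Set.indicator_of_notMem (show t ∉ Set.Ici (a / γ) from fun h => h2 (by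
            rw [Set.mem_Ici, div_le_iff₀ hγ] at h; linarith)), mul_zero, mul_zero]
    · rw [Set.indicator_of_notMem (show t ∉ Set.Ioi 0 from h0),
        Set.indicator_of_notMem (show t ∉ Set.Ici (a / γ) from fun h => h0 (by
          have : 0 < a / γ := by positivity
          exact this.trans_le h))]
  rw [h1, setLIntegral_congr Ioi_ae_eq_Ici.symm, lintegral_const_mul' _ _ ENNReal.ofReal_ne_top,
    lint_Ioi_rpow hp1 (by positivity),
    ← ENNReal.ofReal_mul (by positivity), ENNReal.ofReal_rpow_of_nonneg ha.le hp0.le,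
    ← ENNReal.ofReal_mul (by positivity)]
  apply le_of_eq
  congr 1
  have e : a ^ p = a ^ (-(2 - p)) * a ^ 2 := by
    rw [← Real.rpow_natCast a 2, ← Real.rpow_add ha]; congr 1; push_cast; ring
  rw [e, Real.div_rpow ha.le hγ.le, Real.rpow_neg hγ.le]
  field_simp

/-- Marcinkiewicz interpolation in integrated form, with a free truncation parameter `γ`. -/
theorem layer_main {G : Type} [Countable G] {p γ : ℝ} (hp : 1 < p) (hp2 : p < 2) (hγ : 0 < γ)
    (A B : ℝ≥0∞) (u v : G → ℝ) (hu : ∀ x, 0 ≤ u x) (hv : ∀ x, 0 ≤ v x)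
    (h : ∀ t : ℝ, 0 < t → ∑' x, {x | t < u x}.indicator (1 : G → ℝ≥0∞) x ≤
      A * ∑' x, (ENNReal.ofReal t)⁻¹ * {x | γ * t < v x}.indicator (fun x => ENNReal.ofReal (v x)) x +
      B * ∑' x, (ENNReal.ofReal t)⁻¹ ^ 2 *
        {x | v x ≤ γ * t}.indicator (fun x => ENNReal.ofReal (v x) ^ 2) x) :
    ∑' x, ENNReal.ofReal (u x) ^ p ≤ (A * ENNReal.ofReal (p / (p - 1) * γ ^ (1 - p)) +
      B * ENNReal.ofReal (p / (2 - p) * γ ^ (2 - p))) * ∑' x, ENNReal.ofReal (v x) ^ p := by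
  have hp0 : 0 < p := by linarith
  have hm : Measurable fun t : ℝ => ENNReal.ofReal (p * t ^ (p - 1)) := by fun_prop
  have hmi : Measurable fun t : ℝ => (ENNReal.ofReal t)⁻¹ := by fun_prop
  have hm1 : ∀ x, Measurable fun t : ℝ => ENNReal.ofReal (p * t ^ (p - 1)) *
      {t | t < u x}.indicator (1 : ℝ → ℝ≥0∞) t := fun x =>
    hm.mul (measurable_one.indicator measurableSet_Iio)
  have hm2 : ∀ x, Measurable fun t : ℝ => ENNReal.ofReal (p * t ^ (p - 1)) * ((ENNReal.ofReal t)⁻¹ *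
      {t | γ * t < v x}.indicator (fun _ => ENNReal.ofReal (v x)) t) := fun x =>
    hm.mul (hmi.mul (measurable_const.indicator (measurableSet_lt (by fun_prop) (by fun_prop))))
  have hm3 : ∀ x, Measurable fun t : ℝ => ENNReal.ofReal (p * t ^ (p - 1)) * ((ENNReal.ofReal t)⁻¹ ^ 2 *
      {t | v x ≤ γ * t}.indicator (fun _ => ENNReal.ofReal (v x) ^ 2) t) := fun x =>
    hm.mul ((hmi.pow_const 2).mul (measurable_const.indicator (measurableSet_le (by fun_prop) (by fun_prop))))
  calc ∑' x, ENNReal.ofReal (u x) ^ p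
      = ∑' x, ∫⁻ t in Set.Ioi (0:ℝ), ENNReal.ofReal (p * t ^ (p - 1)) * {t | t < u x}.indicator 1 t := by
        congr 1; ext x; rw [layer_a hp0 (hu x)]
    _ = ∫⁻ t in Set.Ioi (0:ℝ), ∑' x, ENNReal.ofReal (p * t ^ (p - 1)) * {t | t < u x}.indicator 1 t :=
        (lintegral_tsum fun x => (hm1 x).aemeasurable).symm
    _ ≤ ∫⁻ t in Set.Ioi (0:ℝ), (A * ∑' x, ENNReal.ofReal (p * t ^ (p - 1)) * ((ENNReal.ofReal t)⁻¹ *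
          {t | γ * t < v x}.indicator (fun _ => ENNReal.ofReal (v x)) t) +
        B * ∑' x, ENNReal.ofReal (p * t ^ (p - 1)) * ((ENNReal.ofReal t)⁻¹ ^ 2 *
          {t | v x ≤ γ * t}.indicator (fun _ => ENNReal.ofReal (v x) ^ 2) t)) := by
        apply setLIntegral_mono' measurableSet_Ioi
        intro t ht
        simp only [ENNReal.tsum_mul_left]
        have h1 := h t ht
        simp only [ENNReal.tsum_mul_left] at h1
        calc _ ≤ _ := mul_le_mul_right h1 (ENNReal.ofReal (p * t ^ (p - 1)))
          _ = _ := by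
            simp only [Set.indicator_apply, Set.mem_ofPred_eq]
            ring
    _ = A * ∑' x, (∫⁻ t in Set.Ioi (0:ℝ), ENNReal.ofReal (p * t ^ (p - 1)) * ((ENNReal.ofReal t)⁻¹ *
          {t | γ * t < v x}.indicator (fun _ => ENNReal.ofReal (v x)) t)) +
        B * ∑' x, ∫⁻ t in Set.Ioi (0:ℝ), ENNReal.ofReal (p * t ^ (p - 1)) * ((ENNReal.ofReal t)⁻¹ ^ 2 *
          {t | v x ≤ γ * t}.indicator (fun _ => ENNReal.ofReal (v x) ^ 2) t) := by
        rw [lintegral_add_left, lintegral_const_mul, lintegral_const_mul,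
          lintegral_tsum fun x => (hm2 x).aemeasurable, lintegral_tsum fun x => (hm3 x).aemeasurable]
        · exact Measurable.tsum hm3
        · exact Measurable.tsum hm2
        · exact (Measurable.tsum hm2).const_mul A
    _ ≤ A * ∑' x, ENNReal.ofReal (p / (p - 1) * γ ^ (1 - p)) * ENNReal.ofReal (v x) ^ p +
        B * ∑' x, ENNReal.ofReal (p / (2 - p) * γ ^ (2 - p)) * ENNReal.ofReal (v x) ^ p := by
        gcongr with x x
        · exact layer_b hp hγ (hv x)
        · exact layer_c hp hp2 hγ (hv x)
    _ = _ := by rw [ENNReal.tsum_mul_left, ENNReal.tsum_mul_left]; ring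

/-! ### Interpolated bounds and summation over the martingale pieces -/

/-- Interpolation between the weak `(1,1)` and `ℓ²` bounds. The parameter `γ` stays free, so that decay
of the `ℓ²` constant `B` can be turned into decay of the `ℓ^p` constant. -/
theorem interp_vecT {G : Type} [AddCommGroup G] [Countable G] {S : Cubes G} {Sh : ℕ → Finset G} {s : ℕ}
    {A B : ℝ≥0∞} {A1 : ℕ} (hSh : ∀ j, (Sh j).card ≤ A1)
    {K : ℕ} {Tk : Fin K → (G → ℝ) →ₗ[ℝ] (G → ℝ)} (hT : ∀ k : Fin K, CZOp S Sh s A B k (Tk k))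
    (F : G → EuclideanSpace ℝ (Fin K)) (hF : F.support.Finite) {p γ : ℝ} (hp : 1 < p) (hp2 : p < 2)
    (hγ : 0 < γ) :
    ∑' x, ‖vecT Tk F x‖ₑ ^ p ≤
      (2 * (A1 + 4 * s * A + 4 * B * S.D) * ENNReal.ofReal (p / (p - 1) * γ ^ (1 - p)) +
        4 * B * ENNReal.ofReal (p / (2 - p) * γ ^ (2 - p))) * ∑' x, ‖F x‖ₑ ^ p := by
  classical
  simp only [← ofReal_norm]
  apply layer_main hp hp2 hγ _ _ _ _ (fun _ => norm_nonneg _) (fun _ => norm_nonneg _)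
  intro t ht
  set W : ℝ≥0∞ := A1 + 4 * s * A + 4 * B * S.D with hW
  -- split `F` at height `γ t`
  set F1 : G → EuclideanSpace ℝ (Fin K) := {x | γ * t < ‖F x‖}.indicator F with hF1
  set F2 : G → EuclideanSpace ℝ (Fin K) := {x | ‖F x‖ ≤ γ * t}.indicator F with hF2
  have hFF : F = fun x => F1 x + F2 x := by
    ext1 x
    by_cases hx : γ * t < ‖F x‖
    · simp only [hF1, hF2]
      rw [Set.indicator_of_mem (show x ∈ {x | γ * t < ‖F x‖} from hx),
        Set.indicator_of_notMem (show x ∉ {x | ‖F x‖ ≤ γ * t} from not_le.2 hx), add_zero]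
    · simp only [hF1, hF2]
      rw [Set.indicator_of_notMem (show x ∉ {x | γ * t < ‖F x‖} from hx),
        Set.indicator_of_mem (show x ∈ {x | ‖F x‖ ≤ γ * t} from not_lt.1 hx), zero_add]
  have hs1 : F1.support.Finite := hF.subset (by rw [hF1, Set.support_indicator]; exact Set.inter_subset_right)
  have hs2 : F2.support.Finite := hF.subset (by rw [hF2, Set.support_indicator]; exact Set.inter_subset_right)
  have hw := weak11 hSh hT F1 hs1 (lam := t / 2) (by positivity)
  have hst := vecT_l2 hT F2 hs2
  set L := ENNReal.ofReal t with hL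
  have hL0 : L ≠ 0 := by rw [hL]; simpa using ht
  have hLt : L ≠ ⊤ := ENNReal.ofReal_ne_top
  have hc : L⁻¹ * L = 1 := ENNReal.inv_mul_cancel hL0 hLt
  have hL2 : (ENNReal.ofReal (t / 2))⁻¹ = 2 * L⁻¹ := by
    rw [ENNReal.ofReal_div_of_pos (by norm_num), ← hL, ENNReal.inv_div (Or.inl (by norm_num)) (Or.inl (by norm_num))]
    norm_num; rw [ENNReal.div_eq_inv_mul, mul_comm]
  have hpt : ∀ x, {x | t < ‖vecT Tk F x‖}.indicator (1 : G → ℝ≥0∞) x ≤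
      {x | ENNReal.ofReal (t / 2) < ‖vecT Tk F1 x‖ₑ}.indicator 1 x +
        4 * (L⁻¹ ^ 2 * ‖vecT Tk F2 x‖ₑ ^ 2) := by
    intro x
    by_cases hx : t < ‖vecT Tk F x‖
    swap
    · rw [Set.indicator_of_notMem (show x ∉ {x | t < ‖vecT Tk F x‖} from hx)]; exact zero_le
    rw [Set.indicator_of_mem (show x ∈ {x | t < ‖vecT Tk F x‖} from hx), Pi.one_apply]
    by_cases h1 : ENNReal.ofReal (t / 2) < ‖vecT Tk F1 x‖ₑ
    · rw [Set.indicator_of_mem (show x ∈ {x | ENNReal.ofReal (t / 2) < ‖vecT Tk F1 x‖ₑ} from h1)]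
      exact le_self_add
    · refine le_trans ?_ le_add_self
      have h2 : t ≤ 2 * ‖vecT Tk F2 x‖ := by
        rw [← ofReal_norm, ENNReal.ofReal_lt_ofReal_iff_of_nonneg (by positivity), not_lt] at h1
        have h3 : vecT Tk F x = vecT Tk F1 x + vecT Tk F2 x := by
          conv_lhs => rw [hFF]
          exact vecT_add Tk F1 F2 x
        rw [h3] at hx
        linarith [norm_add_le (vecT Tk F1 x) (vecT Tk F2 x)]
      have h4 : L ≤ 2 * ‖vecT Tk F2 x‖ₑ := by
        calc L ≤ ENNReal.ofReal (2 * ‖vecT Tk F2 x‖) := ENNReal.ofReal_le_ofReal h2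
          _ = ENNReal.ofReal 2 * ENNReal.ofReal ‖vecT Tk F2 x‖ := ENNReal.ofReal_mul (by norm_num)
          _ = 2 * ‖vecT Tk F2 x‖ₑ := by rw [ofReal_norm]; simp
      calc (1 : ℝ≥0∞) = (L⁻¹ * L) ^ 2 := by rw [hc]; norm_num
        _ ≤ (L⁻¹ * (2 * ‖vecT Tk F2 x‖ₑ)) ^ 2 := by gcongr
        _ = _ := by ring
  calc _ ≤ _ := ENNReal.tsum_le_tsum hpt
    _ = ∑' x, {x | ENNReal.ofReal (t / 2) < ‖vecT Tk F1 x‖ₑ}.indicator 1 x +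
        4 * (L⁻¹ ^ 2 * ∑' x, ‖vecT Tk F2 x‖ₑ ^ 2) := by
        rw [ENNReal.tsum_add, ENNReal.tsum_mul_left, ENNReal.tsum_mul_left]
    _ ≤ W * ((2 * L⁻¹) * ∑' x, ‖F1 x‖ₑ) + 4 * (L⁻¹ ^ 2 * (B * ∑' x, ‖F2 x‖ₑ ^ 2)) := by
        rw [← hL2]; gcongr
    _ = _ := by
        have e1 : ∀ x, ‖F1 x‖ₑ = {x | γ * t < ‖F x‖}.indicator (fun x => ENNReal.ofReal ‖F x‖) x := by
          intro x
          rw [hF1, enorm_indicator_eq_indicator_enorm]; simp only [ofReal_norm]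
        have e2 : ∀ x, ‖F2 x‖ₑ ^ 2 = {x | ‖F x‖ ≤ γ * t}.indicator (fun x => ENNReal.ofReal ‖F x‖ ^ 2) x := by
          intro x
          rw [hF2, enorm_indicator_eq_indicator_enorm]; simp only [ofReal_norm]
          by_cases hx : x ∈ {x | ‖F x‖ ≤ γ * t}
          · rw [Set.indicator_of_mem hx, Set.indicator_of_mem hx]
          · rw [Set.indicator_of_notMem hx, Set.indicator_of_notMem hx]; simp
        simp only [e1, e2, ENNReal.tsum_mul_left]
        ring

/-- Minkowski's inequality for sums of `ℝ≥0∞`-valued functions. -/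
theorem lp_add_le {G : Type} [Countable G] {p : ℝ} (hp : 1 ≤ p) (a b : G → ℝ≥0∞) :
    (∑' x, (a x + b x) ^ p) ^ (1 / p) ≤ (∑' x, a x ^ p) ^ (1 / p) + (∑' x, b x ^ p) ^ (1 / p) := by
  let _ : MeasurableSpace G := ⊤
  have hd : DiscreteMeasurableSpace G := ⟨fun _ => trivial⟩
  have h := ENNReal.lintegral_Lp_add_le (μ := Measure.count) (f := a) (g := b)
    (Measurable.of_discrete).aemeasurable (Measurable.of_discrete).aemeasurable hp
  simpa only [lintegral_count, Pi.add_apply] using h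

theorem lp_sum_le {G : Type} [Countable G] {p : ℝ} (hp : 1 ≤ p) (a : ℕ → G → ℝ≥0∞) (n : ℕ) :
    (∑' x, (∑ s ∈ range n, a s x) ^ p) ^ (1 / p) ≤ ∑ s ∈ range n, (∑' x, a s x ^ p) ^ (1 / p) := by
  have hp0 : 0 < p := by linarith
  induction n with
  | zero => simp [hp0]
  | succ n ih =>
    simp only [sum_range_succ]
    exact (lp_add_le hp _ _).trans (add_le_add ih le_rfl)

theorem lin_le_exp {ρ : ℝ} (hρ : 0 < ρ) : ∃ C : ℝ, 0 < C ∧ ∀ s : ℕ, 1 + (s : ℝ) ≤ C * 2 ^ (ρ * s) := by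
  have hl : 0 < Real.log 2 := Real.log_pos (by norm_num)
  set a := Real.log 2 * ρ with ha
  have ha0 : 0 < a := by positivity
  refine ⟨1 + 1 / a, by positivity, fun s => ?_⟩
  have h1 : a * s + 1 ≤ (2:ℝ) ^ (ρ * s) := by
    rw [Real.rpow_def_of_pos (by norm_num), ← mul_assoc, ← ha]; exact Real.add_one_le_exp _
  have hs : (0 : ℝ) ≤ s := Nat.cast_nonneg s
  calc 1 + (s : ℝ) ≤ (1 + 1 / a) * (a * s + 1) := by
        have : (1 + 1 / a) * (a * s + 1) = a * s + 1 + s + 1 / a := by field_simp; ring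
        rw [this]; have : 0 ≤ a * s := by positivity
        have : 0 < 1 / a := by positivity
        linarith
    _ ≤ _ := by gcongr

/-- Summing the pieces: the geometric decay on `ℓ²` beats the linear growth of the weak `(1,1)`
constants, by interpolation. -/
theorem sum_pieces {G : Type} [AddCommGroup G] [Countable G] {S : Cubes G} {Sh : ℕ → Finset G}
    {A1 : ℕ} (hSh : ∀ j, (Sh j).card ≤ A1) (A B δ : ℝ) (hA : 0 ≤ A) (hB : 0 ≤ B) (hδ : 0 < δ)
    {p : ℝ} (hp : 1 < p) (hp2 : p < 2) :
    ∃ C : ℝ≥0∞, C ≠ ⊤ ∧ ∀ (K : ℕ) (Tk : ℕ → Fin K → (G → ℝ) →ₗ[ℝ] (G → ℝ)),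
      (∀ s (k : Fin K), CZOp S Sh s (ENNReal.ofReal A) (ENNReal.ofReal (B * 2 ^ (-δ * s))) k (Tk s k)) →
      ∀ (F : G → EuclideanSpace ℝ (Fin K)), F.support.Finite → ∀ n : ℕ,
      (∑' x, ‖∑ s ∈ range n, vecT (Tk s) F x‖ₑ ^ p) ^ (1 / p) ≤ C * (∑' x, ‖F x‖ₑ ^ p) ^ (1 / p) := by
  have hp0 : 0 < p := by linarith
  have hp1 : 0 < p - 1 := by linarith
  have hp3 : 0 < 2 - p := by linarith
  set ρ := δ * (p - 1) / 2 with hρ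
  have hρ0 : 0 < ρ := by positivity
  obtain ⟨C1, hC1, hlin⟩ := lin_le_exp (ρ := ρ / 2) (by positivity)
  set C2 : ℝ := 2 * (A1 + 4 * A + 4 * B * S.D) * (p / (p - 1)) + 4 * B * (p / (2 - p)) with hC2
  have hC20 : 0 ≤ C2 := by positivity
  set C3 : ℝ := C2 * C1 with hC3
  have hC30 : 0 ≤ C3 := by positivity
  set r : ℝ := (2 : ℝ) ^ (-(ρ / 2) / p) with hr
  have hr0 : 0 < r := by positivity
  have hr1 : r < 1 := Real.rpow_lt_one_of_one_lt_of_neg (by norm_num) (by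
    apply div_neg_of_neg_of_pos _ hp0; linarith)
  refine ⟨ENNReal.ofReal (C3 ^ (1 / p) * (1 - r)⁻¹), ENNReal.ofReal_ne_top, ?_⟩
  intro K Tk hT F hF n
  have key : ∀ s : ℕ, (∑' x, ‖vecT (Tk s) F x‖ₑ ^ p) ^ (1 / p) ≤
      ENNReal.ofReal (C3 ^ (1 / p) * r ^ s) * (∑' x, ‖F x‖ₑ ^ p) ^ (1 / p) := by
    intro s
    -- this `γ` gains from both terms: `γ ^ (1 - p)` decays, and `2 ^ (-δ s) γ ^ (2 - p)` still does
    set γ : ℝ := 2 ^ (δ / 2 * s) with hγ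
    have hγ0 : 0 < γ := by positivity
    have hs0 : (0:ℝ) ≤ s := Nat.cast_nonneg s
    have h := interp_vecT hSh (hT s) F hF hp hp2 hγ0
    have hnum : 2 * ((A1 : ℝ≥0∞) + 4 * s * ENNReal.ofReal A + 4 * ENNReal.ofReal (B * 2 ^ (-δ * s)) * S.D) *
        ENNReal.ofReal (p / (p - 1) * γ ^ (1 - p)) +
        4 * ENNReal.ofReal (B * 2 ^ (-δ * s)) * ENNReal.ofReal (p / (2 - p) * γ ^ (2 - p)) ≤
        ENNReal.ofReal (C3 * (2 : ℝ) ^ (-(ρ / 2) * s)) := by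
      have e : 2 * ((A1 : ℝ≥0∞) + 4 * s * ENNReal.ofReal A + 4 * ENNReal.ofReal (B * 2 ^ (-δ * s)) * S.D) *
        ENNReal.ofReal (p / (p - 1) * γ ^ (1 - p)) +
        4 * ENNReal.ofReal (B * 2 ^ (-δ * s)) * ENNReal.ofReal (p / (2 - p) * γ ^ (2 - p)) =
        ENNReal.ofReal (2 * (A1 + 4 * s * A + 4 * (B * 2 ^ (-δ * s)) * S.D) * (p / (p - 1) * γ ^ (1 - p)) +
        4 * (B * 2 ^ (-δ * s)) * (p / (2 - p) * γ ^ (2 - p))) := by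
        rw [ENNReal.ofReal_add (by positivity) (by positivity), ENNReal.ofReal_mul (q := p / (p - 1) * γ ^ (1 - p)) (by positivity),
          ENNReal.ofReal_mul (p := 2) (by positivity), ENNReal.ofReal_add (by positivity) (by positivity),
          ENNReal.ofReal_add (by positivity) (by positivity), ENNReal.ofReal_mul (q := A) (by positivity),
          ENNReal.ofReal_mul (q := (s:ℝ)) (by positivity), ENNReal.ofReal_mul (q := (S.D:ℝ)) (by positivity),
          ENNReal.ofReal_mul (p := 4) (q := (B * 2 ^ (-δ * s))) (by positivity),
          ENNReal.ofReal_mul (q := p / (2 - p) * γ ^ (2 - p)) (by positivity),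
          ENNReal.ofReal_mul (p := 4) (q := (B * 2 ^ (-δ * s))) (by positivity)]
        simp
      rw [e]
      apply ENNReal.ofReal_le_ofReal
      have h2 : (2:ℝ) ^ (-δ * s) ≤ 1 := Real.rpow_le_one_of_one_le_of_nonpos (by norm_num) (by nlinarith)
      have g1 : γ ^ (1 - p) = 2 ^ (-ρ * s) := by
        rw [hγ, ← Real.rpow_mul (by norm_num)]; congr 1; rw [hρ]; ring
      have g2 : 2 ^ (-δ * s) * γ ^ (2 - p) ≤ 2 ^ (-ρ * s) := by
        rw [hγ, ← Real.rpow_mul (by norm_num), ← Real.rpow_add (by norm_num)]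
        apply Real.rpow_le_rpow_of_exponent_le (by norm_num)
        rw [hρ]; nlinarith [mul_nonneg hδ.le hs0]
      have hl := hlin s
      have hs1 : 1 ≤ 1 + (s:ℝ) := by linarith
      calc _ = 2 * (A1 + 4 * s * A + 4 * (B * 2 ^ (-δ * s)) * S.D) * (p / (p - 1) * γ ^ (1 - p)) +
        4 * B * (p / (2 - p)) * (2 ^ (-δ * s) * γ ^ (2 - p)) := by ring
        _ ≤ 2 * (A1 * (1 + s) + 4 * (1 + s) * A + 4 * (B * (1 + s)) * S.D) * (p / (p - 1) * 2 ^ (-ρ * s)) +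
        4 * B * (p / (2 - p)) * ((1 + s) * 2 ^ (-ρ * s)) := by
          rw [g1]
          have g3 := g2.trans (le_mul_of_one_le_left (by positivity) hs1)
          refine add_le_add ?_ (mul_le_mul_of_nonneg_left g3 (by positivity))
          gcongr
          · exact le_mul_of_one_le_right (by positivity) hs1
          · linarith
          · linarith
        _ = C2 * ((1 + s) * 2 ^ (-ρ * s)) := by rw [hC2]; ring
        _ ≤ C2 * ((C1 * 2 ^ (ρ / 2 * s)) * 2 ^ (-ρ * s)) := by gcongr
        _ = C3 * (2 ^ (ρ / 2 * s) * 2 ^ (-ρ * s)) := by rw [hC3]; ring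
        _ = _ := by rw [← Real.rpow_add (by norm_num)]; congr 2; ring
    have h3 := h.trans (mul_le_mul_left hnum _)
    calc _ ≤ (ENNReal.ofReal (C3 * (2 : ℝ) ^ (-(ρ / 2) * s)) * ∑' x, ‖F x‖ₑ ^ p) ^ (1 / p) := by gcongr
      _ = ENNReal.ofReal (C3 * (2 : ℝ) ^ (-(ρ / 2) * s)) ^ (1 / p) * (∑' x, ‖F x‖ₑ ^ p) ^ (1 / p) :=
          ENNReal.mul_rpow_of_nonneg _ _ (by positivity)
      _ = _ := by
          congr 1
          rw [ENNReal.ofReal_rpow_of_nonneg (by positivity) (by positivity),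
            Real.mul_rpow hC30 (by positivity)]
          congr 2
          rw [hr, ← Real.rpow_mul_natCast (by norm_num), ← Real.rpow_mul (by norm_num)]
          congr 1; field_simp
  calc _ ≤ (∑' x, (∑ s ∈ range n, ‖vecT (Tk s) F x‖ₑ) ^ p) ^ (1 / p) := by
        gcongr; exact enorm_sum_le _ _
    _ ≤ ∑ s ∈ range n, (∑' x, ‖vecT (Tk s) F x‖ₑ ^ p) ^ (1 / p) := lp_sum_le hp.le _ n
    _ ≤ ∑ s ∈ range n, ENNReal.ofReal (C3 ^ (1 / p) * r ^ s) * (∑' x, ‖F x‖ₑ ^ p) ^ (1 / p) :=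
        sum_le_sum fun s _ => key s
    _ = ENNReal.ofReal (∑ s ∈ range n, C3 ^ (1 / p) * r ^ s) * (∑' x, ‖F x‖ₑ ^ p) ^ (1 / p) := by
        rw [← sum_mul, ENNReal.ofReal_sum_of_nonneg (fun _ _ => by positivity)]
    _ ≤ _ := by
        gcongr
        rw [← mul_sum]
        gcongr
        have := (hasSum_geometric_of_lt_one hr0.le hr1)
        exact sum_le_hasSum _ (fun _ _ => by positivity) this

/-! ### Fourier analysis on the torus -/

/-- Lebesgue measure on the fundamental domain `(-1/2, 1/2]^m` of the torus. -/
def tor (m : ℕ) : Measure (Fin m → ℝ) :=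
  Measure.pi fun _ => volume.restrict (Set.Ioc (-1 / 2 : ℝ) (1 / 2))

theorem tor_eq (m : ℕ) : tor m = volume.restrict (Set.univ.pi fun _ : Fin m => Set.Ioc (-1 / 2 : ℝ) (1 / 2)) := by
  unfold tor
  rw [volume_pi, Measure.restrict_pi_pi]

theorem tor_ae (m : ℕ) : ∀ᵐ θ ∂(tor m), ∀ i, |θ i| ≤ 1 / 2 := by
  rw [tor_eq]
  filter_upwards [ae_restrict_mem (MeasurableSet.univ_pi fun _ => measurableSet_Ioc)] with θ hθ i
  have := hθ i (Set.mem_univ i)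
  rw [Set.mem_Ioc] at this
  exact abs_le.2 ⟨by linarith, this.2⟩

theorem tor_integrable {m : ℕ} {E : Type} [NormedAddCommGroup E] {h : (Fin m → ℝ) → E} (hh : Continuous h) :
    Integrable h (tor m) := by
  rw [tor_eq]
  have hc : IsCompact (Set.univ.pi fun _ : Fin m => Set.Icc (-1 / 2 : ℝ) (1 / 2)) :=
    isCompact_univ_pi fun _ => isCompact_Icc
  have := hh.continuousOn.integrableOn_compact (μ := volume) hc
  exact this.mono_set (Set.pi_mono fun _ _ => Set.Ioc_subset_Icc_self)

theorem continuous_ex : Continuous ex := by unfold ex; fun_prop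

/-- The character `θ ↦ e(a · θ)` of the torus with frequency `a ∈ ℤ^m`. -/
def ch {m : ℕ} (a : Fin m → ℤ) (θ : Fin m → ℝ) : ℂ := ex (∑ i, (a i : ℝ) * θ i)

theorem continuous_ch {m : ℕ} (a : Fin m → ℤ) : Continuous (ch a) := by
  unfold ch; exact continuous_ex.comp (by fun_prop)

theorem ch_add {m : ℕ} (a b : Fin m → ℤ) (θ : Fin m → ℝ) : ch (a + b) θ = ch a θ * ch b θ := by
  unfold ch; rw [← ex_add, ← sum_add_distrib]; congr 1
  apply sum_congr rfl; intro i _; rw [Pi.add_apply]; push_cast; ring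

theorem ch_neg {m : ℕ} (a : Fin m → ℤ) (θ : Fin m → ℝ) : ch (-a) θ = (starRingEnd ℂ) (ch a θ) := by
  unfold ch; rw [conj_ex, ← sum_neg_distrib]; congr 1
  apply sum_congr rfl; intro i _; rw [Pi.neg_apply]; push_cast; ring

theorem ch_sub {m : ℕ} (a b : Fin m → ℤ) (θ : Fin m → ℝ) :
    ch (a - b) θ = ch a θ * (starRingEnd ℂ) (ch b θ) := by
  rw [sub_eq_add_neg, ch_add, ch_neg]

theorem norm_ch {m : ℕ} (a : Fin m → ℤ) (θ : Fin m → ℝ) : ‖ch a θ‖ = 1 := norm_ex _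

theorem integral_ex_int (n : ℤ) (hn : n ≠ 0) :
    ∫ t in Set.Ioc (-1 / 2 : ℝ) (1 / 2), ex (n * t) = 0 := by
  rw [← intervalIntegral.integral_of_le (by norm_num)]
  have hc : (2 * Real.pi * n * Complex.I : ℂ) ≠ 0 := by
    have h1 : (n : ℂ) ≠ 0 := by exact_mod_cast hn
    have h2 : (Real.pi : ℂ) ≠ 0 := by exact_mod_cast Real.pi_ne_zero
    simp [h1, h2]
  have : ∀ t : ℝ, ex (n * t) = Complex.exp ((2 * Real.pi * n * Complex.I) * t) := by
    intro t; unfold ex; congr 1; push_cast; ring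
  simp only [this]
  rw [integral_exp_mul_complex hc]
  have h3 : Complex.exp ((2 * Real.pi * n * Complex.I) * ((1 / 2 : ℝ) : ℂ)) =
      Complex.exp ((2 * Real.pi * n * Complex.I) * ((-1 / 2 : ℝ) : ℂ)) := by
    rw [Complex.exp_eq_exp_iff_exists_int]
    exact ⟨n, by push_cast; ring⟩
  rw [h3]; simp

theorem integral_ch {m : ℕ} (a : Fin m → ℤ) : ∫ θ, ch a θ ∂(tor m) = if a = 0 then 1 else 0 := by
  unfold ch tor
  simp only [ex_sum]
  rw [integral_fintype_prod_eq_prod (fun i t => ex ((a i : ℝ) * t))]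
  split_ifs with h
  · apply prod_eq_one; intro i _
    simp [h, ex_zero]; norm_num
  · obtain ⟨i, hi⟩ := Function.ne_iff.1 h
    exact prod_eq_zero (mem_univ i) (integral_ex_int (a i) hi)

theorem integral_ch_mul {m : ℕ} (a b : Fin m → ℤ) :
    ∫ θ, ch a θ * (starRingEnd ℂ) (ch b θ) ∂(tor m) = if a = b then 1 else 0 := by
  simp only [← ch_sub, integral_ch, sub_eq_zero]

/-- Trigonometric polynomial with coefficients `g` on the finite set `S`. -/
def trig {m : ℕ} (S : Finset (Fin m → ℤ)) (g : (Fin m → ℤ) → ℂ) (θ : Fin m → ℝ) : ℂ :=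
  ∑ y ∈ S, g y * ch y θ

theorem continuous_trig {m : ℕ} (S : Finset (Fin m → ℤ)) (g : (Fin m → ℤ) → ℂ) :
    Continuous (trig S g) := by
  unfold trig; exact continuous_finsetSum _ fun y _ => continuous_const.mul (continuous_ch y)

theorem continuous_conj' {X : Type} [TopologicalSpace X] {f : X → ℂ} (hf : Continuous f) :
    Continuous fun x => (starRingEnd ℂ) (f x) := Complex.continuous_conj.comp hf

theorem integral_mul_trig {m : ℕ} (S : Finset (Fin m → ℤ)) (g : (Fin m → ℤ) → ℂ)
    {h : (Fin m → ℝ) → ℂ} (hh : Continuous h) :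
    ∫ θ, h θ * (starRingEnd ℂ) (trig S g θ) ∂(tor m) =
      ∑ y ∈ S, (starRingEnd ℂ) (g y) * ∫ θ, h θ * (starRingEnd ℂ) (ch y θ) ∂(tor m) := by
  unfold trig
  simp only [map_sum, mul_sum, map_mul]
  rw [integral_finsetSum]
  · apply sum_congr rfl; intro y _
    rw [← integral_const_mul]; congr 1; ext θ; ring
  · intro y _
    exact tor_integrable (hh.mul (continuous_const.mul (continuous_conj' (continuous_ch y))))

theorem normSq_C (z : ℂ) : ((‖z‖ ^ 2 : ℝ) : ℂ) = z * (starRingEnd ℂ) z := by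
  rw [Complex.mul_conj, Complex.normSq_eq_norm_sq]

theorem plancherel {m : ℕ} (S : Finset (Fin m → ℤ)) (g : (Fin m → ℤ) → ℂ) :
    ∫ θ, ‖trig S g θ‖ ^ 2 ∂(tor m) = ∑ y ∈ S, ‖g y‖ ^ 2 := by
  have h : ((∫ θ, ‖trig S g θ‖ ^ 2 ∂(tor m) : ℝ) : ℂ) = ((∑ y ∈ S, ‖g y‖ ^ 2 : ℝ) : ℂ) := by
    rw [← integral_complex_ofReal]
    simp only [normSq_C]
    rw [integral_mul_trig S g (continuous_trig S g), Complex.ofReal_sum]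
    apply sum_congr rfl; intro y hy
    rw [normSq_C, mul_comm]; congr 1
    unfold trig
    simp only [sum_mul]
    rw [integral_finsetSum]
    · simp only [mul_assoc, integral_const_mul, integral_ch_mul]
      simp [hy]
    · intro z _
      exact tor_integrable
        ((continuous_const.mul (continuous_ch z)).mul (continuous_conj' (continuous_ch y)))
  exact_mod_cast h

/-- Bessel's inequality for the Fourier coefficients of a continuous function on the torus. -/
theorem bessel {m : ℕ} (S : Finset (Fin m → ℤ)) {h : (Fin m → ℝ) → ℂ} (hh : Continuous h) :
    ∑ x ∈ S, ‖∫ θ, h θ * (starRingEnd ℂ) (ch x θ) ∂(tor m)‖ ^ 2 ≤ ∫ θ, ‖h θ‖ ^ 2 ∂(tor m) := by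
  set g : (Fin m → ℤ) → ℂ := fun x => ∫ θ, h θ * (starRingEnd ℂ) (ch x θ) ∂(tor m) with hg
  have h1 := plancherel S g
  have h2 := integral_mul_trig S g hh
  have h2' : (∫ θ, h θ * (starRingEnd ℂ) (trig S g θ) ∂(tor m)).re = ∑ y ∈ S, ‖g y‖ ^ 2 := by
    rw [h2, Complex.re_sum]
    apply sum_congr rfl; intro y _
    have : (starRingEnd ℂ) (g y) * g y = ((‖g y‖ ^ 2 : ℝ) : ℂ) := by rw [normSq_C, mul_comm]
    change ((starRingEnd ℂ) (g y) * g y).re = _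
    rw [this, Complex.ofReal_re]
  have hct := continuous_trig S g
  have h3 : (∫ θ, h θ * (starRingEnd ℂ) (trig S g θ) ∂(tor m)).re =
      ∫ θ, (h θ * (starRingEnd ℂ) (trig S g θ)).re ∂(tor m) := by
    have := integral_re (𝕜 := ℂ) (tor_integrable (hh.mul (continuous_conj' hct)))
    exact this.symm
  have h4 : 0 ≤ ∫ θ, (‖h θ‖ ^ 2 - 2 * (h θ * (starRingEnd ℂ) (trig S g θ)).re + ‖trig S g θ‖ ^ 2) ∂(tor m) := by
    apply integral_nonneg
    intro θ
    have : ‖h θ - trig S g θ‖ ^ 2 = ‖h θ‖ ^ 2 - 2 * (h θ * (starRingEnd ℂ) (trig S g θ)).re + ‖trig S g θ‖ ^ 2 := by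
      rw [← Complex.normSq_eq_norm_sq, Complex.normSq_sub, Complex.normSq_eq_norm_sq, Complex.normSq_eq_norm_sq]; ring
    simp only [Pi.zero_apply]
    rw [← this]; positivity
  have i1 : Integrable (fun θ => ‖h θ‖ ^ 2) (tor m) := tor_integrable (by fun_prop)
  have i2 : Integrable (fun θ => 2 * (h θ * (starRingEnd ℂ) (trig S g θ)).re) (tor m) :=
    tor_integrable (continuous_const.mul (Complex.continuous_re.comp (hh.mul (continuous_conj' hct))))
  have i3 : Integrable (fun θ => ‖trig S g θ‖ ^ 2) (tor m) := tor_integrable (by fun_prop)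
  have i12 : Integrable (fun θ => ‖h θ‖ ^ 2 - 2 * (h θ * (starRingEnd ℂ) (trig S g θ)).re) (tor m) :=
    i1.sub i2
  rw [integral_add i12 i3, integral_sub i1 i2, integral_const_mul, ← h3, h2', h1] at h4
  change ∑ x ∈ S, ‖g x‖ ^ 2 ≤ _
  linarith

/-! ### The Fejér bump -/

/-- The Fejér-type bump `(sin(πt/2) / (πt/2))²`, whose Fourier transform is supported in
`[-1/2, 1/2]`. -/
def fej (t : ℝ) : ℝ := Real.sinc (Real.pi * t / 2) ^ 2

/-- The triangle function; its restriction to `[-1/2, 1/2]` is the Fourier transform of `fej`. -/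
def tri (θ : ℝ) : ℝ := 2 * (1 - 2 * |θ|)

theorem continuous_tri : Continuous tri := by unfold tri; fun_prop

theorem hasDerivAt_coe (θ : ℝ) : HasDerivAt (fun θ : ℝ => (θ : ℂ)) 1 θ := by
  simpa using (hasDerivAt_id θ).ofReal_comp

/-- The Fourier inversion formula expressing `fej` through the triangle function. -/
theorem tri_fourier (t : ℝ) :
    ∫ θ in Set.Ioc (-1 / 2 : ℝ) (1 / 2), (tri θ : ℂ) * ex (t * θ) = (fej t : ℂ) := by
  rw [← intervalIntegral.integral_of_le (by norm_num)]
  have hcont : Continuous fun θ : ℝ => (tri θ : ℂ) * ex (t * θ) :=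
    (Complex.continuous_ofReal.comp continuous_tri).mul (continuous_ex.comp (by fun_prop))
  rw [← intervalIntegral.integral_add_adjacent_intervals (b := 0)
    (hcont.intervalIntegrable _ _) (hcont.intervalIntegrable _ _)]
  by_cases ht : t = 0
  · subst ht
    have e1 : ∫ θ in (-1 / 2 : ℝ)..0, (tri θ : ℂ) * ex (0 * θ) = ∫ θ in (-1 / 2 : ℝ)..0, (2 + 4 * θ : ℂ) := by
      apply intervalIntegral.integral_congr
      intro θ hθ
      rw [Set.uIcc_of_le (by norm_num)] at hθ
      simp only [zero_mul, ex_zero, mul_one, tri, abs_of_nonpos hθ.2]; push_cast; ring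
    have e2 : ∫ θ in (0 : ℝ)..(1 / 2), (tri θ : ℂ) * ex (0 * θ) = ∫ θ in (0 : ℝ)..(1 / 2), (2 - 4 * θ : ℂ) := by
      apply intervalIntegral.integral_congr
      intro θ hθ
      rw [Set.uIcc_of_le (by norm_num)] at hθ
      simp only [zero_mul, ex_zero, mul_one, tri, abs_of_nonneg hθ.1]; push_cast; ring
    have hd1 : ∀ θ : ℝ, HasDerivAt (fun θ : ℝ => (2 * θ + 2 * θ ^ 2 : ℂ)) (2 + 4 * θ : ℂ) θ := by
      intro θ
      have h := hasDerivAt_coe θ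
      exact ((h.const_mul (2:ℂ)).add ((h.pow 2).const_mul (2:ℂ))).congr_deriv (by simp; ring)
    have hd2 : ∀ θ : ℝ, HasDerivAt (fun θ : ℝ => (2 * θ - 2 * θ ^ 2 : ℂ)) (2 - 4 * θ : ℂ) θ := by
      intro θ
      have h := hasDerivAt_coe θ
      exact ((h.const_mul (2:ℂ)).sub ((h.pow 2).const_mul (2:ℂ))).congr_deriv (by simp; ring)
    rw [e1, e2, intervalIntegral.integral_eq_sub_of_hasDerivAt (fun θ _ => hd1 θ)
      (Continuous.intervalIntegrable (by fun_prop) _ _),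
      intervalIntegral.integral_eq_sub_of_hasDerivAt (fun θ _ => hd2 θ)
      (Continuous.intervalIntegrable (by fun_prop) _ _)]
    simp [fej]; norm_num
  set b : ℂ := 2 * Real.pi * t * Complex.I with hb
  have hb0 : b ≠ 0 := by
    have h1 : (t : ℂ) ≠ 0 := by exact_mod_cast ht
    have h2 : (Real.pi : ℂ) ≠ 0 := by exact_mod_cast Real.pi_ne_zero
    simp [hb, h1, h2]
  have hex : ∀ θ : ℝ, ex (t * θ) = Complex.exp (b * θ) := by
    intro θ; unfold ex; congr 1; rw [hb]; push_cast; ring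
  have hde : ∀ θ : ℝ, HasDerivAt (fun θ : ℝ => Complex.exp (b * θ)) (b * Complex.exp (b * θ)) θ := by
    intro θ
    have h := hasDerivAt_coe θ
    convert (h.const_mul b).cexp using 1
    simp; ring
  have e1 : ∫ θ in (-1 / 2 : ℝ)..0, (tri θ : ℂ) * ex (t * θ) =
      ∫ θ in (-1 / 2 : ℝ)..0, (2 + 4 * θ : ℂ) * Complex.exp (b * θ) := by
    apply intervalIntegral.integral_congr
    intro θ hθ
    rw [Set.uIcc_of_le (by norm_num)] at hθ
    simp only [hex, tri, abs_of_nonpos hθ.2]; push_cast; ring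
  have e2 : ∫ θ in (0 : ℝ)..(1 / 2), (tri θ : ℂ) * ex (t * θ) =
      ∫ θ in (0 : ℝ)..(1 / 2), (2 - 4 * θ : ℂ) * Complex.exp (b * θ) := by
    apply intervalIntegral.integral_congr
    intro θ hθ
    rw [Set.uIcc_of_le (by norm_num)] at hθ
    simp only [hex, tri, abs_of_nonneg hθ.1]; push_cast; ring
  have hd1 : ∀ θ : ℝ, HasDerivAt (fun θ : ℝ => (((2 + 4 * θ) / b - 4 / b ^ 2 : ℂ)) * Complex.exp (b * θ))
      ((2 + 4 * θ : ℂ) * Complex.exp (b * θ)) θ := by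
    intro θ
    have h := hasDerivAt_coe θ
    exact (((((h.const_mul (4:ℂ)).const_add 2).div_const b).sub_const (4 / b ^ 2)).mul (hde θ)).congr_deriv (by simp; field_simp; ring)
  have hd2 : ∀ θ : ℝ, HasDerivAt (fun θ : ℝ => (((2 - 4 * θ) / b + 4 / b ^ 2 : ℂ)) * Complex.exp (b * θ))
      ((2 - 4 * θ : ℂ) * Complex.exp (b * θ)) θ := by
    intro θ
    have h := hasDerivAt_coe θ
    exact (((((h.const_mul (4:ℂ)).const_sub 2).div_const b).add_const (4 / b ^ 2)).mul (hde θ)).congr_deriv (by simp; field_simp; ring)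
  rw [e1, e2, intervalIntegral.integral_eq_sub_of_hasDerivAt (fun θ _ => hd1 θ)
      (Continuous.intervalIntegrable (by fun_prop) _ _),
      intervalIntegral.integral_eq_sub_of_hasDerivAt (fun θ _ => hd2 θ)
      (Continuous.intervalIntegrable (by fun_prop) _ _)]
  have hs0 : Real.pi * t / 2 ≠ 0 := by
    have := Real.pi_ne_zero; simp [ht, this]
  have hcos : Complex.exp (b * ((1 / 2 : ℝ) : ℂ)) + Complex.exp (b * ((-1 / 2 : ℝ) : ℂ)) =
      ((2 - 4 * Real.sin (Real.pi * t / 2) ^ 2 : ℝ) : ℂ) := by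
    have h1 : b * ((1 / 2 : ℝ) : ℂ) = ((Real.pi * t : ℝ) : ℂ) * Complex.I := by rw [hb]; push_cast; ring
    have h2 : b * ((-1 / 2 : ℝ) : ℂ) = -((Real.pi * t : ℝ) : ℂ) * Complex.I := by rw [hb]; push_cast; ring
    rw [h1, h2, ← Complex.two_cos, ← Complex.ofReal_cos]
    have h3 : Real.cos (Real.pi * t) = 1 - 2 * Real.sin (Real.pi * t / 2) ^ 2 := by
      have := Real.cos_two_mul (Real.pi * t / 2)
      have h4 := Real.sin_sq_add_cos_sq (Real.pi * t / 2)
      rw [show 2 * (Real.pi * t / 2) = Real.pi * t by ring] at this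
      linarith
    rw [h3]; push_cast; ring
  have hb2 : b ^ 2 = -(4 * (Real.pi * t) ^ 2 : ℂ) := by
    rw [hb, mul_pow, Complex.I_sq]; ring
  have hfin : (fej t : ℂ) = -8 / b ^ 2 + 4 / b ^ 2 * ((2 - 4 * Real.sin (Real.pi * t / 2) ^ 2 : ℝ) : ℂ) := by
    unfold fej
    rw [Real.sinc_of_ne_zero hs0, hb2]
    have h1 : (t : ℂ) ≠ 0 := by exact_mod_cast ht
    have h2 : (Real.pi : ℂ) ≠ 0 := by exact_mod_cast Real.pi_ne_zero
    push_cast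
    field_simp
    ring
  rw [hfin, ← hcos]
  simp
  ring

theorem fej_nonneg (t : ℝ) : 0 ≤ fej t := sq_nonneg _

theorem fej_le (t : ℝ) : fej t ≤ 2 / (1 + t ^ 2) := by
  rw [le_div_iff₀ (by positivity)]
  have h1 : fej t ≤ 1 := by
    unfold fej
    have := Real.abs_sinc_le_one (Real.pi * t / 2)
    rw [← sq_abs]; exact pow_le_one₀ (abs_nonneg _) this
  have h2 : fej t * t ^ 2 ≤ 1 := by
    by_cases ht : t = 0
    · simp [ht]
    have hs0 : Real.pi * t / 2 ≠ 0 := by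
      have := Real.pi_ne_zero; simp [ht, this]
    unfold fej
    rw [Real.sinc_of_ne_zero hs0, div_pow, div_mul_eq_mul_div, div_le_one (by positivity)]
    have h3 := Real.sin_sq_le_one (Real.pi * t / 2)
    have h4 := Real.pi_gt_three
    have : t ^ 2 ≤ (Real.pi * t / 2) ^ 2 := by
      rw [show (Real.pi * t / 2) ^ 2 = (Real.pi / 2) ^ 2 * t ^ 2 by ring]
      exact le_mul_of_one_le_left (sq_nonneg t) (by nlinarith)
    nlinarith [sq_nonneg t]
  linarith

theorem quarter_le_fej {t : ℝ} (h0 : 0 ≤ t) (h1 : t ≤ 1) : 1 / 4 ≤ fej t := by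
  unfold fej
  rcases h0.eq_or_lt with rfl | h0
  · simp; norm_num
  have hp := Real.pi_pos
  have h4 := Real.pi_lt_four
  have hs : 0 < Real.pi * t / 2 := by positivity
  rw [Real.sinc_of_ne_zero hs.ne']
  have h := Real.mul_le_sin hs.le (by nlinarith)
  have : 1 / 2 ≤ Real.sin (Real.pi * t / 2) / (Real.pi * t / 2) := by
    rw [le_div_iff₀ hs]
    refine le_trans ?_ h
    have : 1 / 2 ≤ 2 / Real.pi := by rw [div_le_div_iff₀ (by norm_num) hp]; linarith
    exact mul_le_mul_of_nonneg_right this hs.le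
  nlinarith

/-- The integrable weight `(1 + t²)^{-3/4}`. -/
def jp (t : ℝ) : ℝ := (1 + t ^ 2) ^ (-(3 / 4) : ℝ)

theorem jp_pos (t : ℝ) : 0 < jp t := by unfold jp; positivity

theorem fej_le_jp_tail {t T : ℝ} (hT : 1 ≤ T) (h : T ≤ |t|) : fej t ≤ 2 * T ^ (-(1 / 2) : ℝ) * jp t := by
  refine (fej_le t).trans ?_
  have h0 : 0 < 1 + t ^ 2 := by positivity
  have e : (1 + t ^ 2)⁻¹ = (1 + t ^ 2) ^ (-(1 / 4) : ℝ) * jp t := by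
    unfold jp; rw [← Real.rpow_add h0, ← Real.rpow_neg_one]; norm_num
  rw [div_eq_mul_inv, e, mul_assoc]
  have : (1 + t ^ 2) ^ (-(1 / 4) : ℝ) ≤ T ^ (-(1 / 2) : ℝ) := by
    have h2 : T ^ (-(1 / 2) : ℝ) = (T ^ 2) ^ (-(1 / 4) : ℝ) := by
      rw [← Real.rpow_natCast, ← Real.rpow_mul (by linarith)]; norm_num
    rw [h2]
    apply Real.rpow_le_rpow_of_nonpos (by positivity) _ (by norm_num)
    rw [← sq_abs t]; nlinarith
  have := jp_pos t
  gcongr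

theorem fej_le_jp (t : ℝ) : fej t ≤ 2 * jp t := by
  refine (fej_le t).trans ?_
  have h0 : 0 < 1 + t ^ 2 := by positivity
  rw [div_eq_mul_inv, ← Real.rpow_neg_one]
  unfold jp
  gcongr
  · nlinarith [sq_nonneg t]
  · norm_num

theorem sum_jp : ∃ C : ℝ, 1 ≤ C ∧ ∀ (v : ℝ) (A : Finset ℤ), ∑ a ∈ A, jp (v - a) ≤ C := by
  classical
  have hs : Summable fun n : ℤ => |(n : ℝ)| ^ (-(3 / 2) : ℝ) :=
    Real.summable_abs_int_rpow (by norm_num)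
  have hs2 : Summable fun n : ℤ => (if n = 0 then 1 else 0 : ℝ) + |(n : ℝ)| ^ (-(3 / 2) : ℝ) :=
    (summable_of_ne_finset_zero (s := {0}) (by simp +contextual)).add hs
  set C0 := ∑' n : ℤ, ((if n = 0 then 1 else 0 : ℝ) + |(n : ℝ)| ^ (-(3 / 2) : ℝ)) with hC0
  refine ⟨max 1 (3 * C0), le_max_left _ _, fun v A => le_max_of_le_right ?_⟩
  have hpt : ∀ a : ℤ, jp (v - a) ≤ 3 * ((if a - ⌊v⌋ = 0 then 1 else 0 : ℝ) + |((a - ⌊v⌋ : ℤ) : ℝ)| ^ (-(3 / 2) : ℝ)) := by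
    intro a
    set b : ℤ := a - ⌊v⌋ with hb
    have hva : v - a = Int.fract v - b := by
      rw [hb]; push_cast; rw [← Int.self_sub_floor]; ring
    have hf0 := Int.fract_nonneg v
    have hf1 := Int.fract_lt_one v
    have h1 : 1 + (b : ℝ) ^ 2 ≤ 3 * (1 + (v - a) ^ 2) := by
      rw [hva]; nlinarith [sq_nonneg ((b : ℝ) - 2 * Int.fract v), sq_nonneg (Int.fract v - b)]
    have h2 : jp (v - a) ≤ 3 * jp b := by
      have h3 : (1 + (v - a) ^ 2) ^ (-(3 / 4) : ℝ) ≤ ((1 + (b : ℝ) ^ 2) / 3) ^ (-(3 / 4) : ℝ) := by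
        apply Real.rpow_le_rpow_of_nonpos (by positivity) _ (by norm_num)
        linarith
      unfold jp
      refine h3.trans ?_
      rw [Real.div_rpow (by positivity) (by norm_num), div_eq_inv_mul]
      gcongr
      rw [← Real.rpow_neg (by norm_num), neg_neg]
      calc (3 : ℝ) ^ (3 / 4 : ℝ) ≤ 3 ^ (1 : ℝ) := Real.rpow_le_rpow_of_exponent_le (by norm_num) (by norm_num)
        _ = 3 := Real.rpow_one 3
    refine h2.trans ?_
    gcongr
    split_ifs with h0
    · rw [h0]; simp [jp]
    · rw [zero_add]
      have hb0 : (0 : ℝ) < |(b : ℝ)| := abs_pos.2 (by exact_mod_cast h0)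
      have : |(b : ℝ)| ^ (-(3 / 2) : ℝ) = (|(b : ℝ)| ^ 2) ^ (-(3 / 4) : ℝ) := by
        rw [← Real.rpow_natCast, ← Real.rpow_mul hb0.le]; norm_num
      rw [this]
      unfold jp
      apply Real.rpow_le_rpow_of_nonpos (by positivity) _ (by norm_num)
      rw [sq_abs]; linarith
  calc ∑ a ∈ A, jp (v - a) ≤ _ := sum_le_sum fun a _ => hpt a
    _ = 3 * ∑ n ∈ A.image (fun a => a - ⌊v⌋), ((if n = 0 then 1 else 0 : ℝ) + |(n : ℝ)| ^ (-(3 / 2) : ℝ)) := by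
        rw [← mul_sum, sum_image (by intro x _ y _ h; simpa using h)]
    _ ≤ 3 * C0 := by
        gcongr
        exact hs2.sum_le_tsum _ (fun n _ => by split_ifs <;> positivity)

theorem sum_prod_jp : ∃ C : ℝ, 1 ≤ C ∧ ∀ (m : ℕ) (v : Fin m → ℝ) (A : Finset (Fin m → ℤ)),
    ∑ a ∈ A, ∏ i, jp (v i - a i) ≤ C ^ m := by
  classical
  obtain ⟨C, hC, h⟩ := sum_jp
  refine ⟨C, hC, fun m v A => ?_⟩
  calc _ ≤ ∑ a ∈ Fintype.piFinset (fun i => A.image fun a => a i), ∏ i, jp (v i - a i) := by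
        apply sum_le_sum_of_subset_of_nonneg
        · intro a ha
          rw [Fintype.mem_piFinset]; intro i; exact mem_image_of_mem _ ha
        · intro a _ _; exact prod_nonneg fun i _ => (jp_pos _).le
    _ = ∏ i, ∑ b ∈ A.image (fun a => a i), jp (v i - b) := by
        rw [prod_univ_sum]
    _ ≤ ∏ _i : Fin m, C := prod_le_prod (fun i _ => sum_nonneg fun b _ => (jp_pos _).le) fun i _ => h _ _
    _ = C ^ m := by simp

/-! ### The smoothed averaging kernel -/

/-- The point `(n^{c_i})_i` of the curve with `n = P + 1 + j`. -/
def cpt {m : ℕ} (c : Fin m → ℝ) (P j : ℕ) (i : Fin m) : ℝ := ((P : ℝ) + 1 + j) ^ c i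

/-- The exponential sum of the averaging operator with `N = 2P`. -/
def Sx {m : ℕ} (c : Fin m → ℝ) (P : ℕ) (θ : Fin m → ℝ) : ℂ :=
  (2 * P : ℂ)⁻¹ * ∑ j ∈ range P, ex (∑ i, θ i * cpt c P j i)

/-- The averaging kernel with `N = 2P`, smoothed at unit scale by the bump `fej` in each variable. -/
def Kk {m : ℕ} (c : Fin m → ℝ) (P : ℕ) (a : Fin m → ℤ) : ℝ :=
  (2 * P : ℝ)⁻¹ * ∑ j ∈ range P, ∏ i, fej (cpt c P j i - a i)

/-- A box containing the support of the unsmoothed kernel well inside. -/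
def bx {m : ℕ} (c : Fin m → ℝ) (P : ℕ) : Finset (Fin m → ℤ) :=
  Fintype.piFinset fun i => Finset.Icc (-⌊2 * (2 * P : ℝ) ^ c i⌋) ⌊2 * (2 * P : ℝ) ^ c i⌋

theorem mem_bx {m : ℕ} {c : Fin m → ℝ} {P : ℕ} {a : Fin m → ℤ} :
    a ∈ bx c P ↔ ∀ i, |(a i : ℝ)| ≤ 2 * (2 * P : ℝ) ^ c i := by
  unfold bx
  rw [Fintype.mem_piFinset]
  refine forall_congr' fun i => ?_
  rw [Finset.mem_Icc, abs_le, Int.le_floor, neg_le, Int.le_floor]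
  push_cast
  constructor
  · rintro ⟨h1, h2⟩; exact ⟨by linarith, h2⟩
  · rintro ⟨h1, h2⟩; exact ⟨by linarith, h2⟩

theorem Kk_nonneg {m : ℕ} (c : Fin m → ℝ) (P : ℕ) (a : Fin m → ℤ) : 0 ≤ Kk c P a := by
  unfold Kk
  have : 0 ≤ ∑ j ∈ range P, ∏ i, fej (cpt c P j i - a i) :=
    sum_nonneg fun j _ => prod_nonneg fun i _ => fej_nonneg _
  positivity

theorem cpt_pos {m : ℕ} (c : Fin m → ℝ) (P j : ℕ) (i : Fin m) : 0 < cpt c P j i := by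
  unfold cpt; positivity

theorem cpt_le {m : ℕ} {c : Fin m → ℝ} (hpos : ∀ i, 0 < c i) {P j : ℕ} (hj : j < P) (i : Fin m) :
    cpt c P j i ≤ (2 * P : ℝ) ^ c i := by
  unfold cpt
  apply Real.rpow_le_rpow (by positivity) _ (hpos i).le
  have : (j : ℝ) + 1 ≤ P := by exact_mod_cast hj
  linarith

theorem continuous_Sx {m : ℕ} (c : Fin m → ℝ) (P : ℕ) : Continuous (Sx c P) := by
  unfold Sx
  refine continuous_const.mul (continuous_finsetSum _ fun j _ => continuous_ex.comp (by fun_prop))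

/-- The multiplier of the unit scale smoothing. -/
def Phi {m : ℕ} (θ : Fin m → ℝ) : ℂ := ∏ i, (tri (θ i) : ℂ)

theorem continuous_Phi {m : ℕ} : Continuous (Phi (m := m)) := by
  unfold Phi
  refine continuous_finsetProd _ fun i _ => Complex.continuous_ofReal.comp (continuous_tri.comp (continuous_apply i))

theorem norm_Phi_le {m : ℕ} {θ : Fin m → ℝ} (hθ : ∀ i, |θ i| ≤ 1 / 2) : ‖Phi θ‖ ≤ 2 ^ m := by
  unfold Phi
  rw [norm_prod]
  calc _ ≤ ∏ _i : Fin m, (2 : ℝ) := by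
        apply prod_le_prod (fun _ _ => norm_nonneg _)
        intro i _
        rw [Complex.norm_real, Real.norm_eq_abs, tri]
        have := abs_nonneg (θ i); have := hθ i
        rw [abs_of_nonneg (by linarith)]; linarith
    _ = _ := by simp

theorem prod_fej_eq {m : ℕ} (v : Fin m → ℝ) (a : Fin m → ℤ) :
    ((∏ i, fej (v i - a i) : ℝ) : ℂ) =
      ∫ θ, Phi θ * ex (∑ i, θ i * v i) * (starRingEnd ℂ) (ch a θ) ∂(tor m) := by
  have : ∀ θ : Fin m → ℝ, Phi θ * ex (∑ i, θ i * v i) * (starRingEnd ℂ) (ch a θ) =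
      ∏ i, (tri (θ i) : ℂ) * ex ((v i - a i) * θ i) := by
    intro θ
    unfold Phi ch
    rw [conj_ex, mul_assoc, ← ex_add, prod_mul_distrib, ← ex_sum]
    congr 2
    rw [← sum_neg_distrib, ← sum_add_distrib]; apply sum_congr rfl; intro i _; ring
  simp only [this]
  unfold tor
  rw [integral_fintype_prod_eq_prod (fun i (t : ℝ) => (tri t : ℂ) * ex ((v i - a i) * t))]
  simp only [tri_fourier]
  push_cast; rfl

/-- The smoothed kernel is the sequence of Fourier coefficients of `Phi * Sx`. -/
theorem Kk_eq {m : ℕ} (c : Fin m → ℝ) (P : ℕ) (a : Fin m → ℤ) :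
    (Kk c P a : ℂ) = ∫ θ, Phi θ * Sx c P θ * (starRingEnd ℂ) (ch a θ) ∂(tor m) := by
  have : ∀ θ : Fin m → ℝ, Phi θ * Sx c P θ * (starRingEnd ℂ) (ch a θ) =
      (2 * P : ℂ)⁻¹ * ∑ j ∈ range P, Phi θ * ex (∑ i, θ i * cpt c P j i) * (starRingEnd ℂ) (ch a θ) := by
    intro θ; unfold Sx; rw [← sum_mul, ← mul_sum]; ring
  simp only [this]
  rw [integral_const_mul, integral_finsetSum]
  · simp only [← prod_fej_eq]
    unfold Kk; push_cast; rfl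
  · intro j _
    exact tor_integrable ((continuous_Phi.mul (continuous_ex.comp (by fun_prop))).mul
      (continuous_conj' (continuous_ch a)))

/-- The `ℓ²` norm of the convolution with the smoothed kernel, estimated by Plancherel and Bessel. -/
theorem Kk_l2 {m : ℕ} (c : Fin m → ℝ) (P : ℕ) (X S : Finset (Fin m → ℤ)) (g : (Fin m → ℤ) → ℂ) :
    ∑ x ∈ X, ‖∑ y ∈ S, (Kk c P (x - y) : ℂ) * g y‖ ^ 2 ≤
      4 ^ m * ∫ θ, ‖Sx c P θ‖ ^ 2 * ‖trig S g θ‖ ^ 2 ∂(tor m) := by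
  have hc : Continuous fun θ : Fin m → ℝ => Phi θ * Sx c P θ * trig S g θ :=
    (continuous_Phi.mul (continuous_Sx c P)).mul (continuous_trig S g)
  have h := bessel X hc
  have e : ∀ x, ∫ θ, Phi θ * Sx c P θ * trig S g θ * (starRingEnd ℂ) (ch x θ) ∂(tor m) =
      ∑ y ∈ S, (Kk c P (x - y) : ℂ) * g y := by
    intro x
    simp only [Kk_eq, ← integral_mul_const]
    rw [← integral_finsetSum]
    · congr 1; ext θ
      simp only [ch_sub, trig, map_mul, Complex.conj_conj, mul_sum, sum_mul]
      apply sum_congr rfl; intro y _; ring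
    · intro y _
      exact (tor_integrable ((continuous_Phi.mul (continuous_Sx c P)).mul
        (continuous_conj' (continuous_ch _)))).mul_const _
  simp only [e] at h
  refine h.trans ?_
  rw [← integral_const_mul]
  have hS := continuous_Sx c P
  have hT := continuous_trig S g
  refine integral_mono_ae (tor_integrable (by fun_prop)) (tor_integrable (by fun_prop)) ?_
  filter_upwards [tor_ae m] with θ hθ
  rw [norm_mul, norm_mul, mul_pow, mul_pow, mul_assoc]
  gcongr
  calc ‖Phi θ‖ ^ 2 ≤ (2 ^ m) ^ 2 := by gcongr; exact norm_Phi_le hθ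
    _ = 4 ^ m := by rw [← pow_mul, mul_comm, pow_mul]; norm_num

theorem norm_Sx_le {m : ℕ} (c : Fin m → ℝ) {P : ℕ} (hP : 1 ≤ P) (θ : Fin m → ℝ) : ‖Sx c P θ‖ ≤ 1 := by
  unfold Sx
  have h := norm_sum_ex_le P (fun j => ∑ i, θ i * cpt c P j i)
  have hP' : (1 : ℝ) ≤ P := by exact_mod_cast hP
  rw [norm_mul, norm_inv, norm_mul, Complex.norm_natCast]
  simp only [Complex.norm_ofNat]
  rw [inv_mul_le_iff₀ (by positivity)]
  linarith

theorem Kk_sum : ∃ C : ℝ, 1 ≤ C ∧ ∀ (m : ℕ) (c : Fin m → ℝ) (P : ℕ) (A : Finset (Fin m → ℤ)),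
    ∑ a ∈ A, Kk c P a ≤ C ^ m := by
  obtain ⟨C, hC, h⟩ := sum_prod_jp
  refine ⟨2 * C, by linarith, fun m c P A => ?_⟩
  have h1 : ∑ a ∈ A, Kk c P a = (2 * P : ℝ)⁻¹ * ∑ j ∈ range P, ∑ a ∈ A, ∏ i, fej (cpt c P j i - a i) := by
    unfold Kk; rw [← mul_sum, sum_comm]
  have h2 : ∀ j, ∑ a ∈ A, ∏ i, fej (cpt c P j i - a i) ≤ (2 * C) ^ m := by
    intro j
    calc _ ≤ ∑ a ∈ A, ∏ i, (2 * jp (cpt c P j i - a i)) :=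
          sum_le_sum fun a _ => prod_le_prod (fun _ _ => fej_nonneg _) fun i _ => fej_le_jp _
      _ = 2 ^ m * ∑ a ∈ A, ∏ i, jp (cpt c P j i - a i) := by
          rw [mul_sum]; simp only [prod_mul_distrib]; simp
      _ ≤ 2 ^ m * C ^ m := by gcongr; exact h _ _ _
      _ = _ := by rw [mul_pow]
  rw [h1]
  calc _ ≤ (2 * P : ℝ)⁻¹ * ∑ j ∈ range P, (2 * C) ^ m := by gcongr with j _; exact h2 j
    _ = (2 * P : ℝ)⁻¹ * P * (2 * C) ^ m := by rw [sum_const, card_range, nsmul_eq_mul]; ring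
    _ ≤ 1 * (2 * C) ^ m := by
        gcongr
        rcases Nat.eq_zero_or_pos P with rfl | hP
        · simp
        · have : (0:ℝ) < P := by exact_mod_cast hP
          rw [inv_mul_le_iff₀ (by positivity)]; linarith
    _ = _ := one_mul _

/-- The smoothed kernel has mass `O(P^{-c₀/2})` outside the box `bx c P`. -/
theorem Kk_tail : ∃ C : ℝ, 1 ≤ C ∧ ∀ (m : ℕ) (c : Fin m → ℝ), ∀ c0 > 0, (∀ i, c0 ≤ c i) → ∀ P : ℕ, 1 ≤ P →
    ∀ A : Finset (Fin m → ℤ), (∀ a ∈ A, a ∉ bx c P) →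
    ∑ a ∈ A, Kk c P a ≤ C ^ m * (P : ℝ) ^ (-(c0 / 2)) := by
  obtain ⟨C, hC, h⟩ := sum_prod_jp
  refine ⟨2 * C, by linarith, fun m c c0 hc0 hc P hP A hA => ?_⟩
  have hP' : (1 : ℝ) ≤ P := by exact_mod_cast hP
  have h1 : ∑ a ∈ A, Kk c P a = (2 * P : ℝ)⁻¹ * ∑ j ∈ range P, ∑ a ∈ A, ∏ i, fej (cpt c P j i - a i) := by
    unfold Kk; rw [← mul_sum, sum_comm]
  have h2 : ∀ j ∈ range P, ∑ a ∈ A, ∏ i, fej (cpt c P j i - a i) ≤ (2 * C) ^ m * (P : ℝ) ^ (-(c0 / 2)) := by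
    intro j hj
    have hj' : j < P := mem_range.1 hj
    calc _ ≤ ∑ a ∈ A, (P : ℝ) ^ (-(c0 / 2)) * ∏ i, (2 * jp (cpt c P j i - a i)) := by
          refine sum_le_sum fun a ha => ?_
          have := hA a ha
          rw [mem_bx] at this
          push Not at this
          obtain ⟨i0, hi0⟩ := this
          rw [← mul_prod_erase univ _ (mem_univ i0), ← mul_prod_erase univ (fun i => 2 * jp (cpt c P j i - a i)) (mem_univ i0),
            ← mul_assoc]
          have hT1 : 1 ≤ (P : ℝ) ^ c0 := Real.one_le_rpow hP' hc0.le
          have hT2 : (P : ℝ) ^ c0 ≤ |cpt c P j i0 - a i0| := by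
            have e1 := cpt_le (fun i => hc0.trans_le (hc i)) hj' i0
            have e2 := cpt_pos c P j i0
            have e3 : (P : ℝ) ^ c0 ≤ (2 * P : ℝ) ^ c i0 := by
              calc (P : ℝ) ^ c0 ≤ (2 * P : ℝ) ^ c0 := Real.rpow_le_rpow (by positivity) (by linarith) hc0.le
                _ ≤ _ := Real.rpow_le_rpow_of_exponent_le (by linarith) (hc i0)
            have e4 := abs_sub_abs_le_abs_sub (a i0 : ℝ) (cpt c P j i0)
            rw [abs_sub_comm, abs_of_pos e2] at e4
            linarith
          have hf := fej_le_jp_tail hT1 hT2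
          rw [← Real.rpow_mul (by positivity)] at hf
          refine mul_le_mul ?_ (prod_le_prod (fun _ _ => fej_nonneg _) fun i _ => fej_le_jp _)
            (prod_nonneg fun _ _ => fej_nonneg _) (by have := jp_pos (cpt c P j i0 - a i0); positivity)
          refine hf.trans (le_of_eq ?_)
          rw [show c0 * -(1 / 2) = -(c0 / 2) by ring]; ring
      _ = 2 ^ m * (P : ℝ) ^ (-(c0 / 2)) * ∑ a ∈ A, ∏ i, jp (cpt c P j i - a i) := by
          rw [mul_sum]; simp only [prod_mul_distrib]; simp
          refine sum_congr rfl fun a _ => by ring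
      _ ≤ 2 ^ m * (P : ℝ) ^ (-(c0 / 2)) * C ^ m := by gcongr; exact h _ _ _
      _ = _ := by rw [mul_pow]; ring
  rw [h1]
  calc _ ≤ (2 * P : ℝ)⁻¹ * ∑ j ∈ range P, (2 * C) ^ m * (P : ℝ) ^ (-(c0 / 2)) := by
        gcongr with j hj; exact h2 j hj
    _ = (2 * P : ℝ)⁻¹ * P * ((2 * C) ^ m * (P : ℝ) ^ (-(c0 / 2))) := by rw [sum_const, card_range, nsmul_eq_mul]; ring
    _ ≤ 1 * ((2 * C) ^ m * (P : ℝ) ^ (-(c0 / 2))) := by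
        gcongr
        rw [inv_mul_le_iff₀ (by positivity)]; linarith
    _ = _ := one_mul _

/-- The averages along the curve are dominated by convolution with the truncated smoothed kernel. -/
theorem avg_le_Kk {m : ℕ} {c : Fin m → ℝ} (hpos : ∀ i, 0 < c i) (P : ℕ) (f : (Fin m → ℤ) → ℝ)
    (hf : ∀ x, 0 ≤ f x) (x : Fin m → ℤ) :
    (2 * P : ℝ)⁻¹ * ∑ j ∈ range P, f (x - fun i => ⌊cpt c P j i⌋) ≤
      4 ^ m * ∑ a ∈ bx c P, Kk c P a * f (x - a) := by
  have h1 : ∑ a ∈ bx c P, Kk c P a * f (x - a) =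
      (2 * P : ℝ)⁻¹ * ∑ j ∈ range P, ∑ a ∈ bx c P, (∏ i, fej (cpt c P j i - a i)) * f (x - a) := by
    unfold Kk
    rw [sum_comm, mul_sum]
    apply sum_congr rfl; intro a _
    rw [← sum_mul]; ring
  rw [h1, mul_left_comm]
  gcongr
  rw [mul_sum]
  refine sum_le_sum fun j hj => ?_
  set b : Fin m → ℤ := fun i => ⌊cpt c P j i⌋ with hb
  have hmem : b ∈ bx c P := by
    rw [mem_bx]; intro i
    have e1 := cpt_le hpos (mem_range.1 hj) i
    have e2 := cpt_pos c P j i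
    have e3 : (0 : ℤ) ≤ ⌊cpt c P j i⌋ := Int.floor_nonneg.2 e2.le
    rw [hb, abs_of_nonneg (by exact_mod_cast e3)]
    have := Int.floor_le (cpt c P j i)
    linarith
  have h2 := single_le_sum (f := fun a => (∏ i, fej (cpt c P j i - a i)) * f (x - a))
    (fun a _ => mul_nonneg (prod_nonneg fun _ _ => fej_nonneg _) (hf _)) hmem
  have h3 : (1 / 4 : ℝ) ^ m ≤ ∏ i, fej (cpt c P j i - b i) := by
    calc (1 / 4 : ℝ) ^ m = ∏ _i : Fin m, (1 / 4 : ℝ) := by simp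
      _ ≤ _ := by
        apply prod_le_prod (fun _ _ => by norm_num)
        intro i _
        apply quarter_le_fej
        · have := Int.floor_le (cpt c P j i); rw [hb]; linarith
        · have := Int.lt_floor_add_one (cpt c P j i); rw [hb]; linarith
  have h4 : 1 ≤ 4 ^ m * ∏ i, fej (cpt c P j i - b i) := by
    calc (1 : ℝ) = 4 ^ m * (1 / 4) ^ m := by rw [← mul_pow]; norm_num
      _ ≤ _ := by gcongr
  calc f (x - b) ≤ (4 ^ m * ∏ i, fej (cpt c P j i - b i)) * f (x - b) :=
        le_mul_of_one_le_left (hf _) h4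
    _ ≤ _ := by rw [mul_assoc]; gcongr

/-! ### Comparison of the exponential sums with box averages -/

/-- The box `∏ [0, M_i)` in `ℤ^m`. -/
def rbox {m : ℕ} (M : Fin m → ℕ) : Finset (Fin m → ℤ) := Fintype.piFinset fun i => Finset.Ico 0 (M i : ℤ)

theorem mem_rbox {m : ℕ} {M : Fin m → ℕ} {a : Fin m → ℤ} : a ∈ rbox M ↔ ∀ i, 0 ≤ a i ∧ a i < M i := by
  simp [rbox, Fintype.mem_piFinset]

theorem card_rbox {m : ℕ} (M : Fin m → ℕ) : (rbox M).card = ∏ i, M i := by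
  simp [rbox, Fintype.card_piFinset]

/-- The Fourier transform of the normalised indicator of a box. -/
def etaHat {m : ℕ} (M : Fin m → ℕ) (θ : Fin m → ℝ) : ℂ := ((rbox M).card : ℂ)⁻¹ * ∑ b ∈ rbox M, ch b θ

theorem continuous_etaHat {m : ℕ} (M : Fin m → ℕ) : Continuous (etaHat M) := by
  unfold etaHat
  exact continuous_const.mul (continuous_finsetSum _ fun b _ => continuous_ch b)

/-- Box averages barely change frequencies that are small compared with the inverse side lengths. -/
theorem etaHat_near_one {m : ℕ} {M : Fin m → ℕ} (hM : ∀ i, 1 ≤ M i) (θ : Fin m → ℝ) :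
    ‖etaHat M θ - 1‖ ≤ 2 * Real.pi * ∑ i, M i * |θ i| := by
  have hc : (0 : ℝ) < (rbox M).card := by
    rw [card_rbox]; exact_mod_cast prod_pos fun i _ => hM i
  have hc' : ((rbox M).card : ℂ) ≠ 0 := by exact_mod_cast hc.ne'
  have e : etaHat M θ - 1 = ((rbox M).card : ℂ)⁻¹ * ∑ b ∈ rbox M, (ch b θ - 1) := by
    unfold etaHat
    rw [sum_sub_distrib, mul_sub, sum_const, nsmul_eq_mul, mul_one, inv_mul_cancel₀ hc']
  rw [e, norm_mul, norm_inv, Complex.norm_natCast, inv_mul_le_iff₀ hc]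
  calc _ ≤ ∑ b ∈ rbox M, ‖ch b θ - 1‖ := norm_sum_le _ _
    _ ≤ ∑ b ∈ rbox M, 2 * Real.pi * ∑ i, M i * |θ i| := by
        refine sum_le_sum fun b hb => (norm_ex_sub_one_le _).trans ?_
        have hp := Real.pi_pos
        gcongr
        refine (abs_sum_le_sum_abs _ _).trans (sum_le_sum fun i _ => ?_)
        rw [abs_mul]
        gcongr
        have := mem_rbox.1 hb i
        rw [abs_of_nonneg (by exact_mod_cast this.1)]
        exact_mod_cast this.2.le
    _ = _ := by rw [sum_const, nsmul_eq_mul]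

/-- The box lengths at the scale halfway (on the logarithmic scale) between the cubes of
generation `k - s` and those of generation `k`. -/
def Ml {m : ℕ} (c : Fin m → ℝ) (k s : ℕ) (i : Fin m) : ℕ := ⌈(2 : ℝ) ^ (((k : ℝ) - s / 2) * c i)⌉₊

theorem le_Ml {m : ℕ} (c : Fin m → ℝ) (k s : ℕ) (i : Fin m) :
    (2 : ℝ) ^ (((k : ℝ) - s / 2) * c i) ≤ Ml c k s i := Nat.le_ceil _

theorem one_le_Ml {m : ℕ} (c : Fin m → ℝ) (k s : ℕ) (i : Fin m) : 1 ≤ Ml c k s i :=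
  Nat.one_le_ceil_iff.2 (by positivity)

theorem Ml_le {m : ℕ} {c : Fin m → ℝ} (hpos : ∀ i, 0 < c i) {k s : ℕ} (hs : s ≤ k) (i : Fin m) :
    (Ml c k s i : ℝ) ≤ 2 * (2 : ℝ) ^ (((k : ℝ) - s / 2) * c i) := by
  have h1 : 1 ≤ (2 : ℝ) ^ (((k : ℝ) - s / 2) * c i) := by
    apply Real.one_le_rpow (by norm_num)
    have : (s : ℝ) ≤ k := by exact_mod_cast hs
    have h2 : (0 : ℝ) ≤ k - s / 2 := by have : (0:ℝ) ≤ s := Nat.cast_nonneg s; linarith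
    exact mul_nonneg h2 (hpos i).le
  have := (Nat.ceil_lt_add_one (a := (2 : ℝ) ^ (((k : ℝ) - s / 2) * c i)) (by positivity)).le
  unfold Ml; linarith

/-- Off the frequencies where a box average at an intermediate scale is bounded below, the
exponential sum is small. -/
theorem Sx_split {m : ℕ} (hm : 0 < m) (c : Fin m → ℝ) (hpos : ∀ i, 0 < c i) (hinj : Function.Injective c)
    (hni : ∀ i, ∀ k : ℤ, c i ≠ (k : ℝ)) :
    ∃ C ε : ℝ, 0 < C ∧ 0 < ε ∧ ∀ k s : ℕ, s ≤ k → ∀ θ : Fin m → ℝ, (∀ i, |θ i| ≤ 1 / 2) →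
      ‖Sx c (2 ^ k) θ‖ ^ 2 ≤ C * 2 ^ (-ε * s) + 4 * ‖etaHat (Ml c k s) θ‖ ^ 2 := by
  obtain ⟨C, δ, hC, hδ, -, hES⟩ := expsum_curve hm c hpos hinj hni
  obtain ⟨c0, hc0, hc⟩ : ∃ c0 > 0, ∀ i, c0 ≤ c i := by
    have : Nonempty (Fin m) := ⟨⟨0, hm⟩⟩
    obtain ⟨i0, hi0⟩ := Finite.exists_min c
    exact ⟨c i0, hpos i0, hi0⟩
  have hp := Real.pi_pos
  have hm' : (0 : ℝ) < m := by exact_mod_cast hm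
  set Y : ℝ := 16 * Real.pi * m with hY
  have hY0 : 0 < Y := by positivity
  refine ⟨(C ^ 2 + 1) * Y ^ (2 * δ), c0 * δ, by positivity, by positivity, ?_⟩
  intro k s hs θ hθ
  have hP : 1 ≤ 2 ^ k := Nat.one_le_two_pow
  have hS1 := norm_Sx_le c hP θ
  have hS1' : ‖Sx c (2 ^ k) θ‖ ^ 2 ≤ 1 := pow_le_one₀ (norm_nonneg _) hS1
  set X : ℝ := 2 ^ ((s : ℝ) * c0 / 2) / Y with hX
  have hX0 : 0 < X := by positivity
  have hPc : ∀ i, (((2 ^ k : ℕ) : ℝ)) ^ c i = 2 ^ ((k : ℝ) * c i) := by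
    intro i; push_cast; rw [← Real.rpow_natCast, ← Real.rpow_mul (by norm_num)]
  -- either all frequencies are low and the box average is at least `1/2`, or the exponential sum
  -- has a power saving in `X`
  by_cases hcase : ∀ i, (((2 ^ k : ℕ) : ℝ)) ^ c i * |θ i| ≤ X
  · have h1 : ‖etaHat (Ml c k s) θ - 1‖ ≤ 1 / 2 := by
      refine (etaHat_near_one (one_le_Ml c k s) θ).trans ?_
      have h2 : ∀ i, (Ml c k s i : ℝ) * |θ i| ≤ 2 / Y := by
        intro i
        have h3 := hcase i
        rw [hPc] at h3
        calc (Ml c k s i : ℝ) * |θ i| ≤ 2 * (2 : ℝ) ^ (((k : ℝ) - s / 2) * c i) * |θ i| := by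
              gcongr; exact Ml_le hpos hs i
          _ = 2 * 2 ^ (-((s : ℝ) / 2 * c i)) * (2 ^ ((k : ℝ) * c i) * |θ i|) := by
              rw [show ((k : ℝ) - s / 2) * c i = -((s : ℝ) / 2 * c i) + k * c i by ring, Real.rpow_add (by norm_num)]
              ring
          _ ≤ 2 * 2 ^ (-((s : ℝ) * c0 / 2)) * X := by
              gcongr
              · norm_num
              · have : (0:ℝ) ≤ s := Nat.cast_nonneg s
                have := hc i
                nlinarith
          _ = 2 / Y := by
              rw [hX, Real.rpow_neg (by norm_num)]; field_simp
      calc _ ≤ 2 * Real.pi * ∑ _i : Fin m, 2 / Y := by gcongr with i; exact h2 i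
        _ = 1 / 4 := by
            rw [sum_const, card_univ, Fintype.card_fin, nsmul_eq_mul, hY]; field_simp; norm_num
        _ ≤ 1 / 2 := by norm_num
    have h2 : 1 / 2 ≤ ‖etaHat (Ml c k s) θ‖ := by
      have := norm_sub_norm_le (1 : ℂ) (etaHat (Ml c k s) θ)
      rw [norm_one, norm_sub_rev] at this; linarith
    have h3 : 1 ≤ 4 * ‖etaHat (Ml c k s) θ‖ ^ 2 := by nlinarith
    have : 0 ≤ (C ^ 2 + 1) * Y ^ (2 * δ) * 2 ^ (-(c0 * δ) * (s : ℝ)) := by positivity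
    linarith
  · push Not at hcase
    obtain ⟨i0, hi0⟩ := hcase
    have h1 : ‖Sx c (2 ^ k) θ‖ ^ 2 ≤ (C ^ 2 + 1) * X ^ (-(2 * δ)) := by
      rcases le_or_gt 1 X with h | h
      · have h2 := hES (2 ^ k) hP θ (fun i => (hθ i).trans (by norm_num)) X h ⟨i0, hi0.le⟩
        have h3 : ‖Sx c (2 ^ k) θ‖ ≤ C * X ^ (-δ) := by
          unfold Sx
          rw [norm_mul, norm_inv, norm_mul, Complex.norm_natCast]
          simp only [Complex.norm_ofNat]
          have hP' : (1 : ℝ) ≤ ((2 ^ k : ℕ) : ℝ) := by exact_mod_cast hP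
          rw [inv_mul_le_iff₀ (by positivity)]
          refine h2.trans ?_
          have : 0 ≤ C * ((2 ^ k : ℕ) : ℝ) * X ^ (-δ) := by positivity
          linarith
        calc _ ≤ (C * X ^ (-δ)) ^ 2 := by gcongr
          _ = C ^ 2 * X ^ (-(2 * δ)) := by
              rw [mul_pow, ← Real.rpow_mul_natCast hX0.le]; congr 2; push_cast; ring
          _ ≤ _ := by gcongr; linarith
      · have : 1 ≤ X ^ (-(2 * δ)) := Real.one_le_rpow_of_pos_of_le_one_of_nonpos hX0 h.le (by linarith)
        nlinarith [sq_nonneg C]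
    have h2 : X ^ (-(2 * δ)) = Y ^ (2 * δ) * 2 ^ (-(c0 * δ) * (s : ℝ)) := by
      rw [hX, Real.div_rpow (by positivity) hY0.le, ← Real.rpow_mul (by norm_num), Real.rpow_neg hY0.le,
        div_inv_eq_mul, mul_comm]
      congr 2; ring
    rw [h2, ← mul_assoc] at h1
    have : 0 ≤ 4 * ‖etaHat (Ml c k s) θ‖ ^ 2 := by positivity
    linarith

/-- Averaging over translates by a box. -/
def etaConv {m : ℕ} (M : Fin m → ℕ) (g : (Fin m → ℤ) → ℝ) (x : Fin m → ℤ) : ℝ :=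
  ((rbox M).card : ℝ)⁻¹ * ∑ b ∈ rbox M, g (x - b)

theorem etaHat_mul_trig {m : ℕ} (M : Fin m → ℕ) (S Z : Finset (Fin m → ℤ)) (g : (Fin m → ℤ) → ℝ)
    (hg : ∀ y, y ∉ S → g y = 0) (hZ : ∀ y ∈ S, ∀ b ∈ rbox M, y + b ∈ Z) (θ : Fin m → ℝ) :
    etaHat M θ * trig S (fun y => (g y : ℂ)) θ = trig Z (fun x => (etaConv M g x : ℂ)) θ := by
  classical
  have h1 : ∀ b ∈ rbox M, ch b θ * trig S (fun y => (g y : ℂ)) θ = ∑ x ∈ Z, (g (x - b) : ℂ) * ch x θ := by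
    intro b hb
    unfold trig
    rw [mul_sum]
    have : ∑ x ∈ Z, (g (x - b) : ℂ) * ch x θ = ∑ x ∈ S.image (fun y => y + b), (g (x - b) : ℂ) * ch x θ := by
      symm
      apply sum_subset
      · intro x hx
        obtain ⟨y, hy, rfl⟩ := mem_image.1 hx
        exact hZ y hy b hb
      · intro x _ hx
        rw [hg (x - b), Complex.ofReal_zero, zero_mul]
        intro h; exact hx (mem_image.2 ⟨x - b, h, by simp⟩)
    rw [this, sum_image (by intro x _ y _ h; simpa using h)]
    apply sum_congr rfl; intro y _
    rw [ch_add, add_sub_cancel_right]; ring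
  unfold etaHat
  rw [mul_assoc, sum_mul, sum_congr rfl h1, sum_comm]
  unfold trig etaConv
  rw [mul_sum]
  apply sum_congr rfl; intro x _
  push_cast; rw [← sum_mul]; ring

/-- On `ℓ²`, convolution with the smoothed kernel is controlled by a small multiple of the identity
and by averages over boxes of intermediate scale. -/
theorem Kk_l2_split {m : ℕ} (hm : 0 < m) (c : Fin m → ℝ) (hpos : ∀ i, 0 < c i) (hinj : Function.Injective c)
    (hni : ∀ i, ∀ k : ℤ, c i ≠ (k : ℝ)) :
    ∃ C ε : ℝ, 0 < C ∧ 0 < ε ∧ ∀ k s : ℕ, s ≤ k → ∀ (X S Z : Finset (Fin m → ℤ)) (g : (Fin m → ℤ) → ℝ),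
      (∀ y, y ∉ S → g y = 0) → (∀ y ∈ S, ∀ b ∈ rbox (Ml c k s), y + b ∈ Z) →
      ∑ x ∈ X, (∑ y ∈ S, Kk c (2 ^ k) (x - y) * g y) ^ 2 ≤
        C * 2 ^ (-ε * s) * ∑ y ∈ S, g y ^ 2 + C * ∑ x ∈ Z, etaConv (Ml c k s) g x ^ 2 := by
  obtain ⟨C, ε, hC, hε, h⟩ := Sx_split hm c hpos hinj hni
  refine ⟨4 ^ m * (C + 4), ε, by positivity, hε, ?_⟩
  intro k s hs X S Z g hg hZ
  set gc : (Fin m → ℤ) → ℂ := fun y => (g y : ℂ) with hgc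
  have h1 := Kk_l2 c (2 ^ k) X S gc
  have e1 : ∀ x, ‖∑ y ∈ S, (Kk c (2 ^ k) (x - y) : ℂ) * gc y‖ ^ 2 = (∑ y ∈ S, Kk c (2 ^ k) (x - y) * g y) ^ 2 := by
    intro x
    rw [hgc]
    have : ∑ y ∈ S, (Kk c (2 ^ k) (x - y) : ℂ) * (g y : ℂ) = ((∑ y ∈ S, Kk c (2 ^ k) (x - y) * g y : ℝ) : ℂ) := by
      push_cast; rfl
    simp only [this, Complex.norm_real, Real.norm_eq_abs, sq_abs]
  simp only [e1] at h1
  refine h1.trans ?_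
  have hS := continuous_Sx c (2 ^ k)
  have hT := continuous_trig S gc
  have hE := continuous_etaHat (Ml c k s)
  have hT2 := continuous_trig Z (fun x => (etaConv (Ml c k s) g x : ℂ))
  have h2 : ∫ θ, ‖Sx c (2 ^ k) θ‖ ^ 2 * ‖trig S gc θ‖ ^ 2 ∂(tor m) ≤
      ∫ θ, (C * 2 ^ (-ε * s) * ‖trig S gc θ‖ ^ 2 +
        4 * ‖trig Z (fun x => (etaConv (Ml c k s) g x : ℂ)) θ‖ ^ 2) ∂(tor m) := by
    refine integral_mono_ae (tor_integrable (by fun_prop)) (tor_integrable (by fun_prop)) ?_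
    filter_upwards [tor_ae m] with θ hθ
    have h3 := h k s hs θ hθ
    rw [← etaHat_mul_trig (Ml c k s) S Z g hg hZ θ, norm_mul, mul_pow]
    calc _ ≤ (C * 2 ^ (-ε * s) + 4 * ‖etaHat (Ml c k s) θ‖ ^ 2) * ‖trig S gc θ‖ ^ 2 := by gcongr
      _ = _ := by ring
  have i1 : Integrable (fun θ => C * 2 ^ (-ε * s) * ‖trig S gc θ‖ ^ 2) (tor m) := tor_integrable (by fun_prop)
  have i2 : Integrable (fun θ => 4 * ‖trig Z (fun x => (etaConv (Ml c k s) g x : ℂ)) θ‖ ^ 2) (tor m) :=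
    tor_integrable (by fun_prop)
  rw [integral_add i1 i2, integral_const_mul, integral_const_mul, plancherel, plancherel] at h2
  simp only [hgc, Complex.norm_real, Real.norm_eq_abs, sq_abs] at h2
  have h0 : 0 ≤ ∑ y ∈ S, g y ^ 2 := sum_nonneg fun _ _ => sq_nonneg _
  have h0' : 0 ≤ ∑ x ∈ Z, etaConv (Ml c k s) g x ^ 2 := sum_nonneg fun _ _ => sq_nonneg _
  calc _ ≤ 4 ^ m * (C * 2 ^ (-ε * s) * ∑ y ∈ S, g y ^ 2 + 4 * ∑ x ∈ Z, etaConv (Ml c k s) g x ^ 2) := by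
        gcongr
    _ ≤ 4 ^ m * ((C + 4) * 2 ^ (-ε * s) * ∑ y ∈ S, g y ^ 2 + (C + 4) * ∑ x ∈ Z, etaConv (Ml c k s) g x ^ 2) := by
        gcongr <;> linarith
    _ = _ := by ring

/-! ### Box averages of functions with mean zero on small cells -/

/-- Schur's test for finite sums. -/
theorem schur_fin {α β : Type} (X : Finset α) (S : Finset β) (κ : α → β → ℝ) (hκ : ∀ x y, 0 ≤ κ x y)
    {a b : ℝ} (ha0 : 0 ≤ a) (ha : ∀ x ∈ X, ∑ y ∈ S, κ x y ≤ a) (hb : ∀ y ∈ S, ∑ x ∈ X, κ x y ≤ b)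
    (g : β → ℝ) (u : α → ℝ) (hu : ∀ x ∈ X, |u x| ≤ ∑ y ∈ S, κ x y * |g y|) :
    ∑ x ∈ X, u x ^ 2 ≤ a * b * ∑ y ∈ S, g y ^ 2 := by
  calc ∑ x ∈ X, u x ^ 2 ≤ ∑ x ∈ X, a * ∑ y ∈ S, κ x y * g y ^ 2 := by
        refine sum_le_sum fun x hx => ?_
        have h1 : (∑ y ∈ S, κ x y * |g y|) ^ 2 ≤ (∑ y ∈ S, κ x y) * ∑ y ∈ S, κ x y * g y ^ 2 := by
          apply Finset.sum_sq_le_sum_mul_sum_of_sq_le_mul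
          · intro y _; exact hκ x y
          · intro y _; exact mul_nonneg (hκ x y) (sq_nonneg _)
          · intro y _; rw [mul_pow, sq_abs]; apply le_of_eq; ring
        calc u x ^ 2 = |u x| ^ 2 := (sq_abs _).symm
          _ ≤ (∑ y ∈ S, κ x y * |g y|) ^ 2 := by
              gcongr; exact hu x hx
          _ ≤ _ := h1
          _ ≤ _ := mul_le_mul_of_nonneg_right (ha x hx)
                (sum_nonneg fun y _ => mul_nonneg (hκ x y) (sq_nonneg _))
    _ = a * ∑ y ∈ S, (∑ x ∈ X, κ x y) * g y ^ 2 := by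
        rw [← mul_sum, sum_comm]; simp only [sum_mul]
    _ ≤ a * ∑ y ∈ S, b * g y ^ 2 := by
        apply mul_le_mul_of_nonneg_left _ ha0
        exact sum_le_sum fun y hy => mul_le_mul_of_nonneg_right (hb y hy) (sq_nonneg _)
    _ = _ := by rw [← mul_sum]; ring

/-- Number of points of a box in which the side in direction `i` is replaced by a set of `L i` points. -/
theorem card_face {m : ℕ} (M L : Fin m → ℕ) (hM : ∀ i, 1 ≤ M i) (i : Fin m) (I : Finset ℤ) (hI : I.card = L i) :
    ((Fintype.piFinset fun j => if j = i then I else Finset.Ico 0 (M j : ℤ)).card : ℝ) =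
      (L i / M i) * ∏ j, (M j : ℝ) := by
  rw [Fintype.card_piFinset]
  push_cast
  have : ∀ j, (((if j = i then I else Finset.Ico 0 (M j : ℤ)).card : ℕ) : ℝ) =
      (if j = i then (L i / M i : ℝ) else 1) * M j := by
    intro j
    have : (M i : ℝ) ≠ 0 := by have := hM i; positivity
    split_ifs with h
    · subst h; rw [hI]; field_simp
    · simp
  rw [prod_congr rfl fun j _ => this j, prod_mul_distrib, prod_ite_eq' univ i]
  simp

/-- The convolution with a box of side lengths `M` of a function with mean zero on cells of smaller
side lengths `L` is small; `r` maps each point to the lower corner of its cell. -/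
theorem etaConv_l2 {m : ℕ} (M L : Fin m → ℕ) (hM : ∀ i, 1 ≤ M i) (r : (Fin m → ℤ) → (Fin m → ℤ))
    (hr : ∀ y i, 0 ≤ y i - r y i ∧ y i - r y i < L i) (S Z : Finset (Fin m → ℤ)) (g : (Fin m → ℤ) → ℝ)
    (hg : ∀ y, y ∉ S → g y = 0) (hg0 : ∀ φ : (Fin m → ℤ) → ℝ, ∑ y ∈ S, g y * φ (r y) = 0) :
    ∑ x ∈ Z, etaConv M g x ^ 2 ≤
      (∏ i, (1 + L i / M i : ℝ)) * (2 * ∑ i, (L i / M i : ℝ)) * ∑ y ∈ S, g y ^ 2 := by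
  classical
  set V : ℝ := ∏ i, (M i : ℝ) with hV
  have hV0 : 0 < V := prod_pos fun i _ => by have := hM i; positivity
  have hcard : ((rbox M).card : ℝ) = V := by rw [card_rbox]; push_cast; rfl
  set e : (Fin m → ℤ) → ℝ := fun a => if a ∈ rbox M then 1 else 0 with he
  have heq : ∀ x, etaConv M g x = V⁻¹ * ∑ y ∈ S, g y * e (x - y) := by
    intro x
    unfold etaConv
    rw [hcard]
    congr 1
    simp only [he, mul_ite, mul_one, mul_zero]
    rw [← sum_filter]
    have : ∑ b ∈ rbox M, g (x - b) = ∑ b ∈ (rbox M).filter (fun b => x - b ∈ S), g (x - b) := by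
      rw [sum_filter]
      refine sum_congr rfl fun b _ => ?_
      split_ifs with h
      · rfl
      · exact hg _ h
    rw [this]
    refine sum_bij' (fun b _ => x - b) (fun y _ => x - y) ?_ ?_ ?_ ?_ ?_
    · intro b hb; simp only [mem_filter] at hb ⊢; exact ⟨hb.2, by simpa using hb.1⟩
    · intro b hb; simp only [mem_filter] at hb ⊢; exact ⟨hb.2, by simpa using hb.1⟩
    · intro b _; simp
    · intro b _; simp
    · intro b _; rfl
  have heq2 : ∀ x, etaConv M g x = ∑ y ∈ S, V⁻¹ * (e (x - y) - e (x - r y)) * g y := by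
    intro x
    have h0 := hg0 (fun z => e (x - z))
    rw [heq, ← sub_zero (∑ y ∈ S, g y * e (x - y)), ← h0, ← sum_sub_distrib, mul_sum]
    exact sum_congr rfl fun y _ => by ring
  have hnn : ∀ x y, 0 ≤ V⁻¹ * |e (x - y) - e (x - r y)| := fun x y => by positivity
  -- by the mean zero property, `e (x - y)` may be replaced by `e (x - y) - e (x - r y)`, which
  -- vanishes unless `x - y` is close to the boundary of the box
  have key := schur_fin Z S (fun x y => V⁻¹ * |e (x - y) - e (x - r y)|) hnn
    (a := ∏ i, (1 + L i / M i : ℝ)) (b := 2 * ∑ i, (L i / M i : ℝ)) (by positivity) ?_ ?_ g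
    (fun x => etaConv M g x) ?_
  · exact key
  · intro x _
    have hsub : ∀ y ∈ S, V⁻¹ * |e (x - y) - e (x - r y)| ≤
        V⁻¹ * if x - y ∈ Fintype.piFinset (fun i => Finset.Ico (-(L i : ℤ)) (M i)) then 1 else 0 := by
      intro y _
      apply mul_le_mul_of_nonneg_left _ (by positivity)
      by_cases h : x - y ∈ Fintype.piFinset (fun i => Finset.Ico (-(L i : ℤ)) (M i))
      · rw [if_pos h]
        simp only [he]
        split_ifs <;> norm_num
      · rw [if_neg h]
        have h1 : x - y ∉ rbox M := by
          intro h'; apply h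
          rw [mem_rbox] at h'
          simp only [Fintype.mem_piFinset, mem_Ico]
          intro i; have := h' i; constructor <;> omega
        have h2 : x - r y ∉ rbox M := by
          intro h'; apply h
          rw [mem_rbox] at h'
          simp only [Fintype.mem_piFinset, mem_Ico]
          intro i; have := h' i; have := hr y i; simp only [Pi.sub_apply] at *; constructor <;> omega
        simp [he, h1, h2]
    refine (sum_le_sum hsub).trans ?_
    rw [← mul_sum, inv_mul_le_iff₀ hV0, ← sum_filter, sum_const, nsmul_eq_mul, mul_one]
    calc ((S.filter fun y => x - y ∈ Fintype.piFinset (fun i => Finset.Ico (-(L i : ℤ)) (M i))).card : ℝ)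
        ≤ ((Fintype.piFinset (fun i => Finset.Ico (-(L i : ℤ)) (M i))).card : ℝ) := by
          norm_cast
          apply card_le_card_of_injOn (fun y => x - y)
          · intro y hy; simp only [coe_filter, Set.mem_ofPred_eq] at hy; exact hy.2
          · intro y _ z _ h; simpa using h
      _ = ∏ i, ((M i : ℝ) + L i) := by
          rw [Fintype.card_piFinset]; push_cast
          refine prod_congr rfl fun i _ => ?_
          rw [Int.card_Ico]
          have : ((M i : ℤ) - -(L i : ℤ)).toNat = M i + L i := by omega
          rw [this]; push_cast; rfl
      _ = _ := by
          rw [hV, ← prod_mul_distrib]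
          refine prod_congr rfl fun i _ => ?_
          have : (M i : ℝ) ≠ 0 := by have := hM i; positivity
          field_simp
  · intro y _
    have hsub : ∀ x ∈ Z, V⁻¹ * |e (x - y) - e (x - r y)| ≤ V⁻¹ * ∑ i,
        ((if x - y ∈ Fintype.piFinset (fun j => if j = i then Finset.Ico ((M i : ℤ) - L i) (M i) else Finset.Ico 0 (M j : ℤ)) then 1 else 0)
        + (if x - r y ∈ Fintype.piFinset (fun j => if j = i then Finset.Ico 0 (L i : ℤ) else Finset.Ico 0 (M j : ℤ)) then (1:ℝ) else 0)) := by
      intro x _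
      apply mul_le_mul_of_nonneg_left _ (by positivity)
      have hpos : ∀ i ∈ (univ : Finset (Fin m)), (0:ℝ) ≤
        ((if x - y ∈ Fintype.piFinset (fun j => if j = i then Finset.Ico ((M i : ℤ) - L i) (M i) else Finset.Ico 0 (M j : ℤ)) then 1 else 0)
        + (if x - r y ∈ Fintype.piFinset (fun j => if j = i then Finset.Ico 0 (L i : ℤ) else Finset.Ico 0 (M j : ℤ)) then (1:ℝ) else 0)) := by
        intro i _; positivity
      by_cases h1 : x - y ∈ rbox M <;> by_cases h2 : x - r y ∈ rbox M
      · simp only [he, h1, h2, if_true, sub_self, abs_zero]; exact sum_nonneg hpos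
      · have hab : |e (x - y) - e (x - r y)| = 1 := by simp [he, h1, h2]
        rw [hab]
        rw [mem_rbox] at h1 h2
        push Not at h2
        obtain ⟨i, hi⟩ := h2
        refine le_trans ?_ (single_le_sum hpos (mem_univ i))
        rw [if_pos]
        · split_ifs <;> norm_num
        · rw [Fintype.mem_piFinset]
          intro j
          split_ifs with hj
          · subst hj
            have := h1 j; have := hr y j; simp only [Pi.sub_apply, mem_Ico] at *
            have := hi (by omega)
            constructor <;> omega
          · exact mem_Ico.2 (h1 j)
      · have hab : |e (x - y) - e (x - r y)| = 1 := by simp [he, h1, h2]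
        rw [hab]
        rw [mem_rbox] at h1 h2
        push Not at h1
        obtain ⟨i, hi⟩ := h1
        refine le_trans ?_ (single_le_sum hpos (mem_univ i))
        rw [if_pos (c := x - r y ∈ _)]
        · split_ifs <;> norm_num
        · rw [Fintype.mem_piFinset]
          intro j
          split_ifs with hj
          · subst hj
            have := h2 j; have := hr y j; simp only [Pi.sub_apply, mem_Ico] at *
            refine ⟨by omega, ?_⟩
            by_contra hcon
            have := hi (by omega)
            omega
          · exact mem_Ico.2 (h2 j)
      · simp only [he, h1, h2, if_false, sub_self, abs_zero]; exact sum_nonneg hpos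
    refine (sum_le_sum hsub).trans ?_
    have hcount : ∀ (A : Finset (Fin m → ℤ)) (w : Fin m → ℤ), ∑ x ∈ Z, (if x - w ∈ A then (1:ℝ) else 0) ≤ A.card := by
      intro A w
      rw [← sum_filter, sum_const, nsmul_eq_mul, mul_one]
      norm_cast
      apply card_le_card_of_injOn (fun x => x - w)
      · intro y hy; simp only [coe_filter, Set.mem_ofPred_eq] at hy; exact hy.2
      · intro y _ z _ h; simpa using h
    rw [← mul_sum, inv_mul_le_iff₀ hV0, sum_comm, mul_sum, mul_sum]
    refine sum_le_sum fun i _ => ?_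
    rw [sum_add_distrib]
    refine (add_le_add (hcount _ _) (hcount _ _)).trans ?_
    rw [card_face M L hM i _ (by rw [Int.card_Ico]; omega), card_face M L hM i _ (by rw [Int.card_Ico]; omega)]
    apply le_of_eq; ring
  · intro x _
    rw [heq2]
    refine (abs_sum_le_sum_abs _ _).trans (sum_le_sum fun y _ => ?_)
    rw [abs_mul, abs_mul, abs_of_pos (inv_pos.2 hV0)]

/-! ### Anisotropic dyadic cubes in `ℤ^m` -/

/-- Side lengths of the anisotropic dyadic cubes of generation `j`: powers of two comparable to
`2 ^ (j * c i)`. -/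
def side {m : ℕ} (c : Fin m → ℝ) (j : ℕ) (i : Fin m) : ℕ := 2 ^ ⌊(j : ℝ) * c i⌋₊

theorem side_pos {m : ℕ} (c : Fin m → ℝ) (j : ℕ) (i : Fin m) : 0 < side c j i := by
  unfold side; positivity

theorem side_le {m : ℕ} {c : Fin m → ℝ} (hpos : ∀ i, 0 < c i) (j : ℕ) (i : Fin m) :
    (side c j i : ℝ) ≤ 2 ^ ((j : ℝ) * c i) := by
  unfold side
  push_cast
  rw [← Real.rpow_natCast]
  apply Real.rpow_le_rpow_of_exponent_le (by norm_num)
  exact Nat.floor_le (mul_nonneg (Nat.cast_nonneg _) (hpos i).le)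

theorem le_side {m : ℕ} (c : Fin m → ℝ) (j : ℕ) (i : Fin m) :
    (2 : ℝ) ^ ((j : ℝ) * c i) ≤ 2 * side c j i := by
  unfold side
  push_cast
  rw [← Real.rpow_natCast, mul_comm (2:ℝ) (2 ^ _), ← Real.rpow_add_one (by norm_num)]
  apply Real.rpow_le_rpow_of_exponent_le (by norm_num)
  exact (Nat.lt_floor_add_one _).le

theorem side_dvd {m : ℕ} {c : Fin m → ℝ} (hpos : ∀ i, 0 < c i) (j : ℕ) (i : Fin m) :
    side c j i ∣ side c (j + 1) i := by
  unfold side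
  apply pow_dvd_pow
  apply Nat.floor_le_floor
  have := hpos i
  push_cast
  nlinarith

theorem side_succ_le {m : ℕ} {c : Fin m → ℝ} (hpos : ∀ i, 0 < c i) (j : ℕ) (i : Fin m) :
    side c (j + 1) i ≤ 2 ^ (⌈c i⌉₊ + 1) * side c j i := by
  unfold side
  rw [← pow_add]
  apply Nat.pow_le_pow_right (by norm_num)
  apply Nat.le_of_lt_succ
  have h := hpos i
  rw [Nat.floor_lt (mul_nonneg (Nat.cast_nonneg _) h.le)]
  push_cast
  have h1 := Nat.lt_floor_add_one ((j : ℝ) * c i)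
  have h2 := Nat.le_ceil (c i)
  nlinarith

/-- The cube of generation `j` containing `x`. -/
def cell {m : ℕ} (c : Fin m → ℝ) (j : ℕ) (x : Fin m → ℤ) : Finset (Fin m → ℤ) :=
  Fintype.piFinset fun i => Finset.Ico (side c j i * (x i / side c j i)) (side c j i * (x i / side c j i) + side c j i)

theorem mem_cell {m : ℕ} {c : Fin m → ℝ} {j : ℕ} {x y : Fin m → ℤ} :
    y ∈ cell c j x ↔ ∀ i, y i / side c j i = x i / side c j i := by
  unfold cell
  rw [Fintype.mem_piFinset]
  refine forall_congr' fun i => ?_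
  have h : (0 : ℤ) < side c j i := by exact_mod_cast side_pos c j i
  rw [mem_Ico, Int.ediv_eq_iff_of_pos h]
  constructor
  · rintro ⟨h1, h2⟩; constructor <;> nlinarith
  · rintro ⟨h1, h2⟩; constructor <;> nlinarith

/-- The system of anisotropic dyadic cubes adapted to the curve `(t ^ c₁, …, t ^ c_m)`. -/
def aniso {m : ℕ} (hm : 0 < m) (c : Fin m → ℝ) (hpos : ∀ i, 0 < c i) : Cubes (Fin m → ℤ) where
  Q := cell c
  V j := ∏ i, side c j i
  D := ∏ i, 2 ^ (⌈c i⌉₊ + 1)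
  self_mem j x := mem_cell.2 fun i => rfl
  eq_of_mem := by
    intro j x y h
    rw [mem_cell] at h
    unfold cell
    simp only [h]
  mono := by
    intro j x y h
    rw [mem_cell] at h ⊢
    intro i
    obtain ⟨d, hd⟩ := side_dvd hpos j i
    have h0 : (0 : ℤ) ≤ side c j i := by positivity
    rw [hd]; push_cast
    rw [← Int.ediv_ediv_of_nonneg h0, ← Int.ediv_ediv_of_nonneg h0, h i]
  card_eq := by
    intro j x
    unfold cell
    rw [Fintype.card_piFinset]
    simp
  V_succ := by
    intro j
    rw [← prod_mul_distrib]
    exact prod_le_prod' fun i _ => side_succ_le hpos j i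
  V_large := by
    intro M
    set i0 : Fin m := ⟨0, hm⟩
    refine ⟨⌈(M + 1) / c i0⌉₊, fun j hj => ?_⟩
    have h := hpos i0
    have h1 : (M + 1) / c i0 ≤ j := (Nat.le_ceil _).trans (by exact_mod_cast hj)
    rw [div_le_iff₀ h] at h1
    have h2 := Nat.lt_floor_add_one ((j : ℝ) * c i0)
    have h3 : ⌊(j : ℝ) * c i0⌋₊ ≤ side c j i0 := Nat.lt_two_pow_self.le
    have h4 : side c j i0 ≤ ∏ i, side c j i :=
      single_le_prod' (f := fun i => side c j i) (fun i _ => side_pos c j i) (mem_univ i0)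
    have h5 : (⌊(j : ℝ) * c i0⌋₊ : ℝ) ≤ ((∏ i, side c j i : ℕ) : ℝ) := by exact_mod_cast h3.trans h4
    linarith
  zero := by
    intro x
    unfold cell
    have : ∀ i, side c 0 i = 1 := by intro i; simp [side]
    simp only [this]
    ext y
    rw [Fintype.mem_piFinset, mem_singleton, funext_iff]
    refine forall_congr' fun i => ?_
    rw [mem_Ico]
    push_cast
    rw [Int.ediv_one]
    omega

/-- The lattice vectors joining a cube of generation `j` to its near neighbours. -/
def shifts {m : ℕ} (c : Fin m → ℝ) (j : ℕ) : Finset (Fin m → ℤ) :=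
  (Fintype.piFinset fun _ : Fin m => Finset.Icc (-5 : ℤ) 5).image fun e i => side c j i * e i

theorem card_shifts {m : ℕ} (c : Fin m → ℝ) (j : ℕ) : (shifts c j).card ≤ 11 ^ m := by
  unfold shifts
  refine card_image_le.trans ?_
  rw [Fintype.card_piFinset]
  simp

/-- Translation by a vector of `bx c (2 ^ k)` moves a cube of larger generation `j` only into its near
neighbours. -/
theorem exists_shift {m : ℕ} {c : Fin m → ℝ} (hpos : ∀ i, 0 < c i) {k j : ℕ} (hkj : k < j) {x a : Fin m → ℤ}
    (ha : a ∈ bx c (2 ^ k)) : ∃ h ∈ shifts c j, x - h ∈ cell c j (x - a) := by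
  refine ⟨fun i => side c j i * (x i / side c j i - (x - a) i / side c j i), ?_, ?_⟩
  · unfold shifts
    rw [mem_image]
    refine ⟨fun i => x i / side c j i - (x - a) i / side c j i, ?_, rfl⟩
    rw [Fintype.mem_piFinset]
    intro i
    have h0 : (0 : ℤ) < side c j i := by exact_mod_cast side_pos c j i
    have h1 := mem_bx.1 ha i
    have h2 : |(a i : ℝ)| ≤ 4 * side c j i := by
      refine h1.trans ?_
      have h3 : (2 * ((2 ^ k : ℕ) : ℝ)) ^ c i ≤ 2 ^ ((j : ℝ) * c i) := by
        push_cast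
        rw [← pow_succ', ← Real.rpow_natCast, ← Real.rpow_mul (by norm_num)]
        apply Real.rpow_le_rpow_of_exponent_le (by norm_num)
        apply mul_le_mul_of_nonneg_right _ (hpos i).le
        exact_mod_cast hkj
      have := le_side c j i
      linarith
    have h2' : |a i| ≤ 4 * side c j i := by exact_mod_cast h2
    rw [abs_le] at h2'
    have d1 := Int.mul_ediv_add_emod (x i) (side c j i)
    have d2 := Int.emod_nonneg (x i) h0.ne'
    have d3 := Int.emod_lt_of_pos (x i) h0
    have e1 := Int.mul_ediv_add_emod ((x - a) i) (side c j i)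
    have e2 := Int.emod_nonneg ((x - a) i) h0.ne'
    have e3 := Int.emod_lt_of_pos ((x - a) i) h0
    simp only [Pi.sub_apply] at e1 e2 e3 ⊢
    rw [mem_Icc]
    constructor
    · by_contra hcon
      push Not at hcon
      nlinarith
    · by_contra hcon
      push Not at hcon
      nlinarith
  · rw [mem_cell]
    intro i
    have h0 : (side c j i : ℤ) ≠ 0 := by exact_mod_cast (side_pos c j i).ne'
    simp only [Pi.sub_apply]
    rw [sub_eq_add_neg, ← mul_neg, Int.add_mul_ediv_left _ _ h0]
    ring

/-! ### Martingale pieces and truncated convolution -/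

/-- Convolution with the smoothed kernel, truncated to the box `bx c (2 ^ k)`. -/
def kap {m : ℕ} (c : Fin m → ℝ) (k : ℕ) : ((Fin m → ℤ) → ℝ) →ₗ[ℝ] ((Fin m → ℤ) → ℝ) where
  toFun f x := ∑ a ∈ bx c (2 ^ k), Kk c (2 ^ k) a * f (x - a)
  map_add' f g := by ext x; simp [mul_add, sum_add_distrib]
  map_smul' r f := by ext x; simp [mul_sum]; exact sum_congr rfl fun a _ => by ring

theorem kap_apply {m : ℕ} (c : Fin m → ℝ) (k : ℕ) (f : (Fin m → ℤ) → ℝ) (x : Fin m → ℤ) :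
    kap c k f x = ∑ a ∈ bx c (2 ^ k), Kk c (2 ^ k) a * f (x - a) := rfl

/-- The averaging operator of generation `j` as a linear map. -/
def Cubes.El {G : Type} (S : Cubes G) (j : ℕ) : (G → ℝ) →ₗ[ℝ] (G → ℝ) where
  toFun f := S.E j f
  map_add' f g := S.E_add j f g
  map_smul' r f := S.E_smul j r f

/-- The martingale pieces of the identity below generation `k`:
`id = E_k + ∑_{1 ≤ s ≤ k} (E_{k-s} - E_{k-s+1})`. -/
def Cubes.U {G : Type} (S : Cubes G) (k s : ℕ) : (G → ℝ) →ₗ[ℝ] (G → ℝ) :=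
  if s = 0 then S.El k else if s ≤ k then S.El (k - s) - S.El (k - s + 1) else 0

theorem Cubes.U_zero {G : Type} (S : Cubes G) (k : ℕ) (f : G → ℝ) : S.U k 0 f = S.E k f := by
  simp [Cubes.U, Cubes.El]

theorem Cubes.U_pos {G : Type} (S : Cubes G) {k s : ℕ} (h0 : s ≠ 0) (hs : s ≤ k) (f : G → ℝ) :
    S.U k s f = S.E (k - s) f - S.E (k - s + 1) f := by
  simp [Cubes.U, Cubes.El, h0, hs]

theorem Cubes.U_big {G : Type} (S : Cubes G) {k s : ℕ} (hs : k < s) : S.U k s = 0 := by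
  unfold Cubes.U; rw [if_neg (by omega), if_neg (by omega)]

theorem Cubes.sum_U {G : Type} (S : Cubes G) (k n : ℕ) (hn : k < n) (f : G → ℝ) :
    ∑ s ∈ range n, S.U k s f = f := by
  have h : ∀ r ≤ k, ∑ s ∈ range (r + 1), S.U k s f = S.E (k - r) f := by
    intro r
    induction r with
    | zero => intro _; simp [S.U_zero]
    | succ r ih =>
      intro hr
      rw [sum_range_succ, ih (by omega), S.U_pos (by omega) hr]
      have : k - (r + 1) + 1 = k - r := by omega
      rw [this]; abel
  have h1 : ∑ s ∈ range n, S.U k s f = ∑ s ∈ range (k + 1), S.U k s f := by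
    symm
    apply sum_subset
    · intro s hs; simp only [mem_range] at *; omega
    · intro s _ hs
      simp only [mem_range] at hs
      rw [S.U_big (by omega)]; rfl
  rw [h1, h k le_rfl, Nat.sub_self, S.E_zero]

theorem Cubes.U_van {G : Type} [Nonempty G] (S : Cubes G) {k s j : ℕ} {b : G → ℝ} (hb : S.E j b = 0) (hj : j + s ≤ k) :
    S.U k s b = 0 := by
  have h : ∀ i, j ≤ i → S.E i b = 0 := by
    intro i hi
    rw [← S.E_tower hi, hb]; ext x; simp [Cubes.E]
  by_cases h0 : s = 0
  · subst h0; rw [S.U_zero]; exact h k (by omega)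
  · rw [S.U_pos h0 (by omega), h _ (by omega), h _ (by omega), sub_zero]

theorem Cubes.U_supp {G : Type} (S : Cubes G) {k s j : ℕ} {b : G → ℝ} {Ω : Set G} (hkj : k < j)
    (hΩ : ∀ x ∈ Ω, ∀ y ∈ S.Q j x, y ∈ Ω) (hb : b.support ⊆ Ω) : (S.U k s b).support ⊆ Ω := by
  have h : ∀ i, i ≤ j → ∀ x, x ∉ Ω → S.E i b x = 0 := by
    intro i hi x hx
    rw [← Set.indicator_eq_self.2 hb, S.E_indicator fun z hz y hy => hΩ z hz y (S.mono' hi z hy)]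
    exact Set.indicator_of_notMem hx _
  intro x hx
  by_contra hx'
  apply hx
  rcases Nat.lt_or_ge k s with hs | hs
  · rw [S.U_big hs]; rfl
  by_cases h0 : s = 0
  · subst h0; rw [S.U_zero]; exact h k (by omega) x hx'
  · rw [S.U_pos h0 hs, Pi.sub_apply, h _ (by omega) x hx', h _ (by omega) x hx', sub_zero]

theorem Cubes.U_fin {G : Type} [Nonempty G] (S : Cubes G) {k s : ℕ} {b : G → ℝ} (hb : b.support.Finite) :
    (S.U k s b).support.Finite := by
  rcases Nat.lt_or_ge k s with hs | hs
  · rw [S.U_big hs]; simp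
  by_cases h0 : s = 0
  · subst h0; rw [S.U_zero]; exact S.E_support k hb
  · rw [S.U_pos h0 hs]
    exact ((S.E_support _ hb).union (S.E_support _ hb)).subset (Function.support_sub _ _)

theorem Cubes.U_l1 {G : Type} [Nonempty G] (S : Cubes G) (k s : ℕ) (f : G → ℝ) :
    ∑' x, ‖S.U k s f x‖ₑ ≤ 2 * ∑' x, ‖f x‖ₑ := by
  rw [two_mul]
  rcases Nat.lt_or_ge k s with hs | hs
  · rw [S.U_big hs]; simp
  by_cases h0 : s = 0
  · subst h0; rw [S.U_zero]; exact (S.tsum_E_le k f).trans le_self_add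
  · rw [S.U_pos h0 hs]
    calc _ ≤ ∑' x, (‖S.E (k - s) f x‖ₑ + ‖S.E (k - s + 1) f x‖ₑ) := ENNReal.tsum_le_tsum fun x => enorm_sub_le
      _ = _ := ENNReal.tsum_add
      _ ≤ _ := add_le_add (S.tsum_E_le _ f) (S.tsum_E_le _ f)

theorem Cubes.U_l2 {G : Type} [Nonempty G] (S : Cubes G) (k s : ℕ) (f : G → ℝ) :
    ∑' x, ‖S.U k s f x‖ₑ ^ 2 ≤ 4 * ∑' x, ‖f x‖ₑ ^ 2 := by
  have h4 : (4 : ℝ≥0∞) * ∑' x, ‖f x‖ₑ ^ 2 = 2 * (∑' x, ‖f x‖ₑ ^ 2 + ∑' x, ‖f x‖ₑ ^ 2) := by ring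
  rcases Nat.lt_or_ge k s with hs | hs
  · rw [S.U_big hs]; simp
  by_cases h0 : s = 0
  · subst h0; rw [S.U_zero]
    refine (S.tsum_E_sq_le k f).trans ?_
    calc _ = 1 * ∑' x, ‖f x‖ₑ ^ 2 := (one_mul _).symm
      _ ≤ _ := by apply mul_le_mul_left; norm_num
  · rw [S.U_pos h0 hs, h4]
    calc _ ≤ ∑' x, 2 * (‖S.E (k - s) f x‖ₑ ^ 2 + ‖S.E (k - s + 1) f x‖ₑ ^ 2) := by
          refine ENNReal.tsum_le_tsum fun x => ?_
          rw [Pi.sub_apply]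
          simp only [← ofReal_norm, Real.norm_eq_abs]
          rw [← ENNReal.ofReal_pow (abs_nonneg _), ← ENNReal.ofReal_pow (abs_nonneg _),
            ← ENNReal.ofReal_pow (abs_nonneg _), ← ENNReal.ofReal_add (by positivity) (by positivity),
            ← ENNReal.ofReal_ofNat, ← ENNReal.ofReal_mul (by norm_num)]
          apply ENNReal.ofReal_le_ofReal
          simp only [sq_abs]
          nlinarith [sq_nonneg (S.E (k - s) f x + S.E (k - s + 1) f x)]
      _ = 2 * (∑' x, ‖S.E (k - s) f x‖ₑ ^ 2 + ∑' x, ‖S.E (k - s + 1) f x‖ₑ ^ 2) := by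
          rw [ENNReal.tsum_mul_left, ENNReal.tsum_add]
      _ ≤ _ := mul_le_mul_right (add_le_add (S.tsum_E_sq_le _ f) (S.tsum_E_sq_le _ f)) _

/-- A finitely supported function with zero averages over the cells has sum zero. -/
theorem Cubes.sum_eq_zero_of_E {G : Type} [Nonempty G] (S : Cubes G) (j : ℕ) (u : G → ℝ) (hu : S.E j u = 0)
    (A : Finset G) (hA : ∀ y, y ∉ A → u y = 0) : ∑ y ∈ A, u y = 0 := by
  classical
  set B := A.biUnion (S.Q j) with hB
  have hAB : A ⊆ B := fun y hy => mem_biUnion.2 ⟨y, hy, S.self_mem j y⟩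
  have hBQ : ∀ y ∈ B, S.Q j y ⊆ B := by
    intro y hy z hz
    obtain ⟨w, hw, hyw⟩ := mem_biUnion.1 hy
    exact mem_biUnion.2 ⟨w, hw, by rwa [S.eq_of_mem hyw] at hz⟩
  have hV : (S.V j : ℝ) ≠ 0 := by exact_mod_cast (S.V_pos j).ne'
  have hE : ∀ z, ∑ y ∈ S.Q j z, u y = 0 := by
    intro z
    have := congrFun hu z
    simpa [Cubes.E, hV] using this
  rw [sum_subset hAB fun y _ hy => hA y hy]
  have h1 : (S.V j : ℝ) * ∑ y ∈ B, u y = ∑ y ∈ B, ∑ z ∈ B, if z ∈ S.Q j y then u y else 0 := by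
    rw [mul_sum]
    refine sum_congr rfl fun y hy => ?_
    rw [← sum_filter, sum_const, nsmul_eq_mul]
    congr 2
    rw [← S.card_eq j y]
    congr 1
    ext z
    simp only [mem_filter]
    exact ⟨fun h => ⟨hBQ y hy h, h⟩, fun h => h.2⟩
  have h2 : (S.V j : ℝ) * ∑ y ∈ B, u y = 0 := by
    rw [h1, sum_comm]
    refine sum_eq_zero fun z hz => ?_
    rw [← sum_filter, ← hE z]
    refine sum_congr ?_ fun _ _ => rfl
    ext y
    simp only [mem_filter]
    exact ⟨fun h => S.mem_comm.1 h.2, fun h => ⟨hBQ z hz h, S.mem_comm.1 h⟩⟩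
  exact (mul_eq_zero.1 h2).resolve_left hV

theorem kap_l1 : ∃ C : ℝ, 1 ≤ C ∧ ∀ (m : ℕ) (c : Fin m → ℝ) (k : ℕ) (f : (Fin m → ℤ) → ℝ),
    ∑' x, ‖kap c k f x‖ₑ ≤ ENNReal.ofReal (C ^ m) * ∑' x, ‖f x‖ₑ := by
  obtain ⟨C, hC, h⟩ := Kk_sum
  refine ⟨C, hC, fun m c k f => ?_⟩
  calc ∑' x, ‖kap c k f x‖ₑ ≤ ∑' x, ∑ a ∈ bx c (2 ^ k), ENNReal.ofReal (Kk c (2 ^ k) a) * ‖f (x - a)‖ₑ := by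
        refine ENNReal.tsum_le_tsum fun x => ?_
        rw [kap_apply]
        refine (enorm_sum_le _ _).trans (sum_le_sum fun a _ => ?_)
        rw [enorm_mul, Real.enorm_of_nonneg (Kk_nonneg c _ a)]
    _ = ∑ a ∈ bx c (2 ^ k), ENNReal.ofReal (Kk c (2 ^ k) a) * ∑' x, ‖f x‖ₑ := by
        rw [Summable.tsum_finsetSum (fun _ _ => ENNReal.summable)]
        refine sum_congr rfl fun a _ => ?_
        rw [ENNReal.tsum_mul_left]
        congr 1
        exact (Equiv.subRight a).tsum_eq (fun x => ‖f x‖ₑ)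
    _ ≤ _ := by
        rw [← sum_mul, ← ENNReal.ofReal_sum_of_nonneg fun a _ => Kk_nonneg c _ a]
        exact mul_le_mul_left (ENNReal.ofReal_le_ofReal (h m c _ _)) _

theorem kap_eq {m : ℕ} (c : Fin m → ℝ) (k : ℕ) (g : (Fin m → ℤ) → ℝ) (S : Finset (Fin m → ℤ))
    (hg : ∀ y, y ∉ S → g y = 0) (x : Fin m → ℤ) :
    kap c k g x = ∑ y ∈ S, (if x - y ∈ bx c (2 ^ k) then Kk c (2 ^ k) (x - y) else 0) * g y := by
  classical
  rw [kap_apply]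
  simp only [ite_mul, zero_mul]
  rw [← sum_filter]
  have : ∑ a ∈ bx c (2 ^ k), Kk c (2 ^ k) a * g (x - a) =
      ∑ a ∈ (bx c (2 ^ k)).filter (fun a => x - a ∈ S), Kk c (2 ^ k) a * g (x - a) := by
    rw [sum_filter]
    refine sum_congr rfl fun a _ => ?_
    split_ifs with h
    · rfl
    · rw [hg _ h, mul_zero]
  rw [this]
  refine sum_bij' (fun b _ => x - b) (fun y _ => x - y) ?_ ?_ ?_ ?_ ?_
  · intro b hb; simp only [mem_filter] at hb ⊢; exact ⟨hb.2, by simpa using hb.1⟩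
  · intro b hb; simp only [mem_filter] at hb ⊢; exact ⟨hb.2, by simpa using hb.1⟩
  · intro b _; simp
  · intro b _; simp
  · intro b _; simp

/-- Reduction of `ℓ²` bounds for `kap` to finite sums. -/
theorem kap_l2_of_fin {m : ℕ} (c : Fin m → ℝ) (k : ℕ) (g : (Fin m → ℤ) → ℝ) (S : Finset (Fin m → ℤ))
    {a : ℝ} (ha0 : 0 ≤ a)
    (ha : ∀ X : Finset (Fin m → ℤ), ∑ x ∈ X, kap c k g x ^ 2 ≤ a * ∑ y ∈ S, g y ^ 2) :
    ∑' x, ‖kap c k g x‖ₑ ^ 2 ≤ ENNReal.ofReal a * ∑' x, ‖g x‖ₑ ^ 2 := by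
  have e : ∀ r : ℝ, ‖r‖ₑ ^ 2 = ENNReal.ofReal (r ^ 2) := by
    intro r
    rw [← ofReal_norm, ← ENNReal.ofReal_pow (norm_nonneg _), Real.norm_eq_abs, sq_abs]
  simp only [e]
  rw [ENNReal.tsum_eq_iSup_sum]
  refine iSup_le fun X => ?_
  rw [← ENNReal.ofReal_sum_of_nonneg fun _ _ => sq_nonneg _]
  refine (ENNReal.ofReal_le_ofReal (ha X)).trans ?_
  rw [ENNReal.ofReal_mul ha0, ENNReal.ofReal_sum_of_nonneg fun _ _ => sq_nonneg _]
  exact mul_le_mul_right (ENNReal.sum_le_tsum S) _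

/-- The sum of a kernel over differences with one variable fixed. -/
theorem sum_diff_le {m : ℕ} (φ : (Fin m → ℤ) → ℝ) {C : ℝ} (h : ∀ A : Finset (Fin m → ℤ), ∑ a ∈ A, φ a ≤ C)
    (X : Finset (Fin m → ℤ)) : (∀ y, ∑ x ∈ X, φ (x - y) ≤ C) ∧ ∀ x, ∑ y ∈ X, φ (x - y) ≤ C := by
  classical
  constructor
  · intro y
    rw [← sum_image (s := X) (g := fun x => x - y) (f := φ) (fun a _ b _ hab => by simpa using hab)]
    exact h _
  · intro x
    rw [← sum_image (s := X) (g := fun y => x - y) (f := φ) (fun a _ b _ hab => by simpa using hab)]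
    exact h _

theorem kap_l2 : ∃ C : ℝ, 1 ≤ C ∧ ∀ (m : ℕ) (c : Fin m → ℝ) (k : ℕ) (g : (Fin m → ℤ) → ℝ), g.support.Finite →
    ∑' x, ‖kap c k g x‖ₑ ^ 2 ≤ ENNReal.ofReal (C ^ m * C ^ m) * ∑' x, ‖g x‖ₑ ^ 2 := by
  classical
  obtain ⟨C, hC, h⟩ := Kk_sum
  refine ⟨C, hC, fun m c k g hgf => ?_⟩
  have hg : ∀ y, y ∉ hgf.toFinset → g y = 0 := by intro y hy; simpa using hy
  refine kap_l2_of_fin c k g hgf.toFinset (by positivity) fun X => ?_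
  set φ : (Fin m → ℤ) → ℝ := fun a => if a ∈ bx c (2 ^ k) then Kk c (2 ^ k) a else 0 with hφ
  have hφ0 : ∀ a, 0 ≤ φ a := by
    intro a; simp only [hφ]; split_ifs
    · exact Kk_nonneg _ _ _
    · exact le_rfl
  have hφC : ∀ A : Finset (Fin m → ℤ), ∑ a ∈ A, φ a ≤ C ^ m := by
    intro A
    simp only [hφ]; rw [← sum_filter]; exact h m c _ _
  apply schur_fin X hgf.toFinset (fun x y => φ (x - y)) (fun x y => hφ0 _) (by positivity)
    (fun x _ => (sum_diff_le φ hφC _).2 x) (fun y _ => (sum_diff_le φ hφC _).1 y)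
  intro x _
  rw [kap_eq c k g _ hg]
  refine (abs_sum_le_sum_abs _ _).trans (sum_le_sum fun y _ => ?_)
  rw [abs_mul]
  change |φ (x - y)| * _ ≤ _
  rw [abs_of_nonneg (hφ0 _)]

/-! ### Geometric decay of the martingale pieces -/

/-- Cells of generation `k - s + 1` are small compared with the boxes of intermediate scale. -/
theorem ratio_le {m : ℕ} {c : Fin m → ℝ} (hpos : ∀ i, 0 < c i) {c0 : ℝ} (hc0 : ∀ i, c0 ≤ c i)
    {k s : ℕ} (hs : s ≤ k) (i : Fin m) :
    (side c (k - s + 1) i : ℝ) / Ml c k s i ≤ 2 ^ (∑ i, c i) * 2 ^ (-(c0 / 2) * s) := by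
  have hM := le_Ml c k s i
  have hM0 : (0 : ℝ) < Ml c k s i := lt_of_lt_of_le (by positivity) hM
  rw [div_le_iff₀ hM0]
  refine (side_le hpos _ i).trans ?_
  refine le_trans ?_ (mul_le_mul_of_nonneg_left hM (by positivity))
  rw [← Real.rpow_add (by norm_num), ← Real.rpow_add (by norm_num)]
  apply Real.rpow_le_rpow_of_exponent_le (by norm_num)
  have h1 : c i ≤ ∑ i, c i := single_le_sum (fun i _ => (hpos i).le) (mem_univ i)
  have h2 := hc0 i
  have hsr : (0 : ℝ) ≤ s := Nat.cast_nonneg s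
  push_cast [Nat.cast_sub hs]
  nlinarith

/-- The key `ℓ²` estimate. The martingale difference has mean zero on the cells of generation
`k - s + 1`, so its averages over larger boxes are small, and away from the frequencies seen by
these box averages the exponential sum itself is small. The truncation of the kernel costs only
`O(2^{-k c₀/2})`, which is acceptable because `s ≤ k`. -/
theorem piece_l2 {m : ℕ} (hm : 0 < m) (c : Fin m → ℝ) (hpos : ∀ i, 0 < c i) (hinj : Function.Injective c)
    (hni : ∀ i, ∀ k : ℤ, c i ≠ (k : ℝ)) :
    ∃ B δ : ℝ, 0 ≤ B ∧ 0 < δ ∧ ∀ (s k : ℕ) (f : (Fin m → ℤ) → ℝ), f.support.Finite →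
      ∑' x, ‖kap c k ((aniso hm c hpos).U k s f) x‖ₑ ^ 2 ≤
        ENNReal.ofReal (B * 2 ^ (-δ * s)) * ∑' x, ‖f x‖ₑ ^ 2 := by
  classical
  obtain ⟨C, ε, hC, hε, hsplit⟩ := Kk_l2_split hm c hpos hinj hni
  obtain ⟨Ct, hCt, htail⟩ := Kk_tail
  obtain ⟨C0, hC0, hk2⟩ := kap_l2
  have : Nonempty (Fin m) := ⟨⟨0, hm⟩⟩
  obtain ⟨i0, hi0⟩ := Finite.exists_min c
  set c0 := c i0 with hc0
  have hc0p : 0 < c0 := hpos i0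
  set δ := min ε (c0 / 2) with hδ
  have hδ0 : 0 < δ := lt_min hε (by positivity)
  set W : ℝ := 2 ^ (∑ i, c i) with hW
  have hW0 : 0 < W := by positivity
  set B1 : ℝ := 2 * C + 2 * C * ((1 + W) ^ m * (2 * (m * W))) + 2 * (Ct ^ m * Ct ^ m) with hB1
  have hB10 : 0 ≤ B1 := by positivity
  set S := aniso hm c hpos with hS
  refine ⟨4 * (B1 + C0 ^ m * C0 ^ m), δ, by positivity, hδ0, fun s k f hf => ?_⟩
  have hfin := S.U_fin (k := k) (s := s) hf
  have reduce : ∀ a : ℝ, 0 ≤ a → a ≤ (B1 + C0 ^ m * C0 ^ m) * 2 ^ (-δ * s) →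
      ∑' x, ‖kap c k (S.U k s f) x‖ₑ ^ 2 ≤ ENNReal.ofReal a * ∑' x, ‖S.U k s f x‖ₑ ^ 2 →
      ∑' x, ‖kap c k (S.U k s f) x‖ₑ ^ 2 ≤
        ENNReal.ofReal (4 * (B1 + C0 ^ m * C0 ^ m) * 2 ^ (-δ * s)) * ∑' x, ‖f x‖ₑ ^ 2 := by
    intro a ha0 ha h
    calc _ ≤ _ := h
      _ ≤ ENNReal.ofReal a * (4 * ∑' x, ‖f x‖ₑ ^ 2) := mul_le_mul_right (S.U_l2 k s f) _
      _ = ENNReal.ofReal (4 * a) * ∑' x, ‖f x‖ₑ ^ 2 := by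
          rw [ENNReal.ofReal_mul (by norm_num), ENNReal.ofReal_ofNat]; ring
      _ ≤ _ := by
          apply mul_le_mul_left
          apply ENNReal.ofReal_le_ofReal
          linarith
  rcases Nat.lt_or_ge k s with hs | hs
  · rw [S.U_big hs]; simp
  by_cases h0 : s = 0
  · subst h0
    refine reduce (C0 ^ m * C0 ^ m) (by positivity) ?_ (hk2 m c k _ hfin)
    simp; exact hB10
  refine reduce (B1 * 2 ^ (-δ * s)) (by positivity) ?_ ?_
  · apply mul_le_mul_of_nonneg_right _ (by positivity)
    have : 0 ≤ C0 ^ m * C0 ^ m := by positivity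
    linarith
  set g := S.U k s f with hg
  set Y := hfin.toFinset with hY
  have hgY : ∀ y, y ∉ Y → g y = 0 := by intro y hy; simpa [hY] using hy
  refine kap_l2_of_fin c k g Y (by positivity) fun X => ?_
  set G2 := ∑ y ∈ Y, g y ^ 2 with hG2
  have hG20 : 0 ≤ G2 := sum_nonneg fun _ _ => sq_nonneg _
  set M := Ml c k s with hM
  set L := side c (k - s + 1) with hL
  set Z := Y.biUnion fun y => (rbox M).image fun b => y + b with hZ
  have hexp : ∀ e : ℝ, δ ≤ e → (2 : ℝ) ^ (-e * s) ≤ 2 ^ (-δ * s) := by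
    intro e he
    apply Real.rpow_le_rpow_of_exponent_le (by norm_num)
    have : (0 : ℝ) ≤ s := Nat.cast_nonneg s
    nlinarith
  have hfull := hsplit k s hs X Y Z g hgY (by
    intro y hy b hb
    exact mem_biUnion.2 ⟨y, hy, mem_image.2 ⟨b, hb, rfl⟩⟩)
  -- mean zero of the martingale difference on the cells of generation `k - s + 1`
  have hE0 : S.E (k - s + 1) g = 0 := by
    rw [hg, S.U_pos h0 hs, S.E_sub, S.E_tower (by omega), S.E_tower le_rfl, sub_self]
  have heta := etaConv_l2 M L (one_le_Ml c k s) (fun y i => L i * (y i / L i)) (by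
      intro y i
      have hp : (0 : ℤ) < L i := by exact_mod_cast side_pos c _ i
      have d1 := Int.mul_ediv_add_emod (y i) (L i)
      have d2 := Int.emod_nonneg (y i) hp.ne'
      have d3 := Int.emod_lt_of_pos (y i) hp
      constructor <;> linarith) Y Z g hgY (by
      intro φ
      apply S.sum_eq_zero_of_E (k - s + 1) (fun y => g y * φ (fun i => L i * (y i / L i))) _ Y
      · intro y hy; simp only [hgY y hy, zero_mul]
      · ext x
        have hx := congrFun hE0 x
        simp only [Cubes.E, smul_eq_mul, Pi.zero_apply] at hx ⊢
        have : ∑ y ∈ S.Q (k - s + 1) x, g y * φ (fun i => L i * (y i / L i)) =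
            (∑ y ∈ S.Q (k - s + 1) x, g y) * φ (fun i => L i * (x i / L i)) := by
          rw [sum_mul]
          refine sum_congr rfl fun y hy => ?_
          have h1 := mem_cell.1 (show y ∈ cell c (k - s + 1) x from hy)
          congr 2
          ext i
          rw [hL, h1 i]
        rw [this, ← mul_assoc, hx, zero_mul])
  have hrat : ∀ i, (L i : ℝ) / M i ≤ W * 2 ^ (-(c0 / 2) * s) := ratio_le hpos hi0 hs
  have hdec : (2 : ℝ) ^ (-(c0 / 2) * s) ≤ 1 := by
    apply Real.rpow_le_one_of_one_le_of_nonpos (by norm_num)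
    have : (0 : ℝ) ≤ s := Nat.cast_nonneg s
    nlinarith
  have hq : (∏ i, (1 + L i / M i : ℝ)) * (2 * ∑ i, (L i / M i : ℝ)) ≤
      (1 + W) ^ m * (2 * (m * W)) * 2 ^ (-δ * s) := by
    have h1 : (∏ i, (1 + L i / M i : ℝ)) ≤ (1 + W) ^ m := by
      calc _ ≤ ∏ _i : Fin m, (1 + W) := by
            refine prod_le_prod (fun i _ => by positivity) fun i _ => ?_
            have := hrat i
            nlinarith
        _ = _ := by simp
    have h2 : ∑ i, (L i / M i : ℝ) ≤ m * W * 2 ^ (-δ * s) := by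
      calc _ ≤ ∑ _i : Fin m, W * 2 ^ (-δ * s) := by
            refine sum_le_sum fun i _ => (hrat i).trans ?_
            exact mul_le_mul_of_nonneg_left (hexp _ (min_le_right _ _)) hW0.le
        _ = _ := by simp; ring
    calc _ ≤ (1 + W) ^ m * (2 * (m * W * 2 ^ (-δ * s))) := by
          apply mul_le_mul h1 _ (by positivity) (by positivity)
          linarith
      _ = _ := by ring
  have hT := htail m c c0 hc0p hi0 (2 ^ k) Nat.one_le_two_pow
  -- the part of the kernel removed by the truncation
  set φ : (Fin m → ℤ) → ℝ := fun a => if a ∈ bx c (2 ^ k) then 0 else Kk c (2 ^ k) a with hφ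
  have hφ0 : ∀ a, 0 ≤ φ a := by
    intro a; simp only [hφ]; split_ifs
    · exact le_rfl
    · exact Kk_nonneg _ _ _
  set D : ℝ := Ct ^ m * ((2 ^ k : ℕ) : ℝ) ^ (-(c0 / 2)) with hD
  have hφC : ∀ A : Finset (Fin m → ℤ), ∑ a ∈ A, φ a ≤ D := by
    intro A
    have : ∑ a ∈ A, φ a = ∑ a ∈ A.filter (fun a => a ∉ bx c (2 ^ k)), Kk c (2 ^ k) a := by
      rw [sum_filter]
      refine sum_congr rfl fun a _ => ?_
      simp only [hφ]; split_ifs <;> rfl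
    rw [this]
    exact hT _ fun a ha => (mem_filter.1 ha).2
  have hD0 : 0 ≤ D := by positivity
  have hpw : ((2 ^ k : ℕ) : ℝ) ^ (-(c0 / 2)) ≤ 2 ^ (-(c0 / 2) * s) := by
    push_cast
    rw [← Real.rpow_natCast, ← Real.rpow_mul (by norm_num)]
    apply Real.rpow_le_rpow_of_exponent_le (by norm_num)
    have : (s : ℝ) ≤ k := by exact_mod_cast hs
    nlinarith
  have hDD : D * D ≤ Ct ^ m * Ct ^ m * 2 ^ (-δ * s) := by
    have h1 : D ≤ Ct ^ m * 2 ^ (-δ * s) :=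
      mul_le_mul_of_nonneg_left (hpw.trans (hexp _ (min_le_right _ _))) (by positivity)
    have h2 : D ≤ Ct ^ m := by
      calc D ≤ Ct ^ m * 1 := mul_le_mul_of_nonneg_left (hpw.trans hdec) (by positivity)
        _ = _ := mul_one _
    calc D * D ≤ Ct ^ m * (Ct ^ m * 2 ^ (-δ * s)) := mul_le_mul h2 h1 hD0 (by positivity)
      _ = _ := by ring
  have htl : ∑ x ∈ X, (∑ y ∈ Y, φ (x - y) * g y) ^ 2 ≤ D * D * G2 := by
    apply schur_fin X Y (fun x y => φ (x - y)) (fun x y => hφ0 _) hD0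
      (fun x _ => (sum_diff_le φ hφC _).2 x) (fun y _ => (sum_diff_le φ hφC _).1 y) g
      (fun x => ∑ y ∈ Y, φ (x - y) * g y)
    intro x _
    refine (abs_sum_le_sum_abs _ _).trans (sum_le_sum fun y _ => ?_)
    rw [abs_mul, abs_of_nonneg (hφ0 _)]
  calc ∑ x ∈ X, kap c k g x ^ 2 ≤ ∑ x ∈ X, (2 * (∑ y ∈ Y, Kk c (2 ^ k) (x - y) * g y) ^ 2 +
        2 * (∑ y ∈ Y, φ (x - y) * g y) ^ 2) := by
        refine sum_le_sum fun x _ => ?_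
        have h1 : kap c k g x = ∑ y ∈ Y, Kk c (2 ^ k) (x - y) * g y - ∑ y ∈ Y, φ (x - y) * g y := by
          rw [kap_eq c k g Y hgY, ← sum_sub_distrib]
          refine sum_congr rfl fun y _ => ?_
          simp only [hφ]; split_ifs <;> ring
        rw [h1]
        nlinarith [sq_nonneg (∑ y ∈ Y, Kk c (2 ^ k) (x - y) * g y + ∑ y ∈ Y, φ (x - y) * g y)]
    _ = 2 * ∑ x ∈ X, (∑ y ∈ Y, Kk c (2 ^ k) (x - y) * g y) ^ 2 +
        2 * ∑ x ∈ X, (∑ y ∈ Y, φ (x - y) * g y) ^ 2 := by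
        rw [sum_add_distrib, mul_sum, mul_sum]
    _ ≤ 2 * (C * 2 ^ (-ε * s) * G2 + C * ∑ x ∈ Z, etaConv M g x ^ 2) + 2 * (D * D * G2) := by
        linarith
    _ ≤ 2 * (C * 2 ^ (-δ * s) * G2 + C * ((1 + W) ^ m * (2 * (m * W)) * 2 ^ (-δ * s) * G2)) +
        2 * (Ct ^ m * Ct ^ m * 2 ^ (-δ * s) * G2) := by
        have a1 : C * 2 ^ (-ε * s) * G2 ≤ C * 2 ^ (-δ * s) * G2 :=
          mul_le_mul_of_nonneg_right (mul_le_mul_of_nonneg_left (hexp _ (min_le_left _ _)) hC.le) hG20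
        have a2 := mul_le_mul_of_nonneg_left (heta.trans (mul_le_mul_of_nonneg_right hq hG20)) hC.le
        have a3 := mul_le_mul_of_nonneg_right hDD hG20
        linarith
    _ = B1 * 2 ^ (-δ * s) * G2 := by rw [hB1]; ring

/-- The smoothed averages, composed with the martingale pieces, satisfy the hypotheses of the
Calderón–Zygmund argument with geometric decay in `s`. -/
theorem czop_pieces {m : ℕ} (hm : 0 < m) (c : Fin m → ℝ) (hpos : ∀ i, 0 < c i) (hinj : Function.Injective c)
    (hni : ∀ i, ∀ k : ℤ, c i ≠ (k : ℝ)) :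
    ∃ A B δ : ℝ, 0 ≤ A ∧ 0 ≤ B ∧ 0 < δ ∧ ∀ (s k : ℕ),
      CZOp (aniso hm c hpos) (shifts c) s (ENNReal.ofReal A) (ENNReal.ofReal (B * 2 ^ (-δ * s))) k
        (kap c k ∘ₗ (aniso hm c hpos).U k s) := by
  obtain ⟨C, hC, h1⟩ := kap_l1
  obtain ⟨B, δ, hB, hδ, h2⟩ := piece_l2 hm c hpos hinj hni
  refine ⟨C ^ m * 2, B, δ, by positivity, hB, hδ, fun s k => ⟨?_, ?_, ?_, ?_⟩⟩
  · intro f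
    rw [ENNReal.ofReal_mul (by positivity), ENNReal.ofReal_ofNat, mul_assoc]
    exact (h1 m c k _).trans (mul_le_mul_right (Cubes.U_l1 _ k s f) _)
  · exact h2 s k
  · intro b j hb hj
    rw [LinearMap.comp_apply, Cubes.U_van _ hb hj, map_zero]
  · intro b j Ω hkj hΩ hb x hx
    have hU := Cubes.U_supp (aniso hm c hpos) (s := s) hkj hΩ hb
    rw [LinearMap.comp_apply, kap_apply] at hx
    obtain ⟨a, ha, hne⟩ := exists_ne_zero_of_sum_ne_zero hx
    have hxa : x - a ∈ Ω := hU (right_ne_zero_of_mul hne)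
    obtain ⟨h, hh, hxh⟩ := exists_shift hpos hkj (x := x) ha
    exact ⟨h, hh, hΩ _ hxa _ hxh⟩

/-! ### The range `1 < p < 2` -/

/-- The lattice points `(⌊n ^ c₁⌋, …, ⌊n ^ c_m⌋)` with `n = 2 ^ k + 1 + j`. -/
def gam {m : ℕ} (c : Fin m → ℝ) (k j : ℕ) : Fin m → ℤ := fun i => ⌊cpt c (2 ^ k) j i⌋

/-- The upper-half average at scale `2 ^ (k + 1)`, acting on `ℝ≥0∞`-valued functions. -/
def av {m : ℕ} (c : Fin m → ℝ) (k : ℕ) (u : (Fin m → ℤ) → ℝ≥0∞) (x : Fin m → ℤ) : ℝ≥0∞ :=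
  (2 * 2 ^ k : ℝ≥0∞)⁻¹ * ∑ j ∈ range (2 ^ k), u (x - gam c k j)

/-- The formal adjoint of `av c k`. -/
def avT {m : ℕ} (c : Fin m → ℝ) (k : ℕ) (u : (Fin m → ℤ) → ℝ≥0∞) (x : Fin m → ℤ) : ℝ≥0∞ :=
  (2 * 2 ^ k : ℝ≥0∞)⁻¹ * ∑ j ∈ range (2 ^ k), u (x + gam c k j)

/-- The Euclidean norm of the first `K` entries. -/
def nm (K : ℕ) (v : ℕ → ℝ≥0∞) : ℝ≥0∞ := (∑ k ∈ range K, v k ^ 2) ^ (1 / 2 : ℝ)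

theorem nm_sq (K : ℕ) (v : ℕ → ℝ≥0∞) : nm K v ^ 2 = ∑ k ∈ range K, v k ^ 2 := by
  unfold nm
  rw [← ENNReal.rpow_natCast, ← ENNReal.rpow_mul]
  norm_num

theorem nm_le_iff {K : ℕ} {v : ℕ → ℝ≥0∞} {t : ℝ≥0∞} : nm K v ≤ t ↔ ∑ k ∈ range K, v k ^ 2 ≤ t ^ 2 := by
  rw [← nm_sq, ENNReal.pow_le_pow_left_iff two_ne_zero]

theorem le_nm {K : ℕ} (v : ℕ → ℝ≥0∞) {k : ℕ} (hk : k < K) : v k ≤ nm K v := by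
  rw [← ENNReal.pow_le_pow_left_iff two_ne_zero, nm_sq]
  exact single_le_sum (f := fun k => v k ^ 2) (fun _ _ => zero_le) (mem_range.2 hk)

/-- The `ℓ^p(ℓ²)` norm of the first `K` functions of a sequence. -/
def mx {m : ℕ} (p : ℝ) (K : ℕ) (u : ℕ → (Fin m → ℤ) → ℝ≥0∞) : ℝ≥0∞ :=
  (∑' x, nm K (fun k => u k x) ^ p) ^ (1 / p)

theorem mx_le_of_fin {m : ℕ} {p : ℝ} (hp : 0 < p) {K : ℕ} {v : ℕ → (Fin m → ℤ) → ℝ≥0∞} {R : ℝ≥0∞}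
    (h : ∀ X : Finset (Fin m → ℤ), (∑ x ∈ X, nm K (fun k => v k x) ^ p) ^ (1 / p) ≤ R) : mx p K v ≤ R := by
  unfold mx
  rw [one_div, ENNReal.rpow_inv_le_iff hp, ENNReal.tsum_eq_iSup_sum]
  refine iSup_le fun X => ?_
  rw [← ENNReal.rpow_inv_le_iff hp, ← one_div]
  exact h X

theorem ne_top_of_mx {m : ℕ} {p : ℝ} (hp : 0 < p) {K : ℕ} {u : ℕ → (Fin m → ℤ) → ℝ≥0∞}
    (h : mx p K u ≠ ⊤) {k : ℕ} (hk : k < K) (x : Fin m → ℤ) : u k x ≠ ⊤ := by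
  intro hu
  apply h
  have h1 : nm K (fun k => u k x) = ⊤ := by
    have := le_nm (fun k => u k x) hk
    simp only [hu, top_le_iff] at this
    exact this
  have h2 : ∑' x, nm K (fun k => u k x) ^ p = ⊤ := by
    rw [← top_le_iff]
    refine le_trans ?_ (ENNReal.le_tsum x)
    rw [h1, ENNReal.top_rpow_of_pos hp]
  unfold mx
  rw [h2, ENNReal.top_rpow_of_pos (by positivity)]

/-- Boundedness of the vector-valued averages on `ℓ^p(ℓ²)`, uniformly in the number `K` of scales. -/
def AvBound {m : ℕ} (c : Fin m → ℝ) (p : ℝ) : Prop :=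
  ∃ C : ℝ≥0∞, C ≠ ⊤ ∧ ∀ (K : ℕ) (u : ℕ → (Fin m → ℤ) → ℝ≥0∞),
    mx p K (fun k => av c k (u k)) ≤ C * mx p K u

/-- The averages are dominated by convolutions with the truncated smoothed kernels, which split into
the martingale pieces summed in `sum_pieces`. -/
theorem avBound_low {m : ℕ} (hm : 0 < m) (c : Fin m → ℝ) (hpos : ∀ i, 0 < c i) (hinj : Function.Injective c)
    (hni : ∀ i, ∀ k : ℤ, c i ≠ (k : ℝ)) {p : ℝ} (hp : 1 < p) (hp2 : p < 2) : AvBound c p := by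
  classical
  have hp0 : 0 < p := by linarith
  obtain ⟨A, B, δ, hA, hB, hδ, hop⟩ := czop_pieces hm c hpos hinj hni
  obtain ⟨C, hC, hmain⟩ := sum_pieces (S := aniso hm c hpos) (card_shifts c) A B δ hA hB hδ hp hp2
  refine ⟨4 ^ m * C + 1, by simp [ENNReal.mul_eq_top, hC], fun K u => ?_⟩
  by_cases hR : mx p K u = ⊤
  · rw [hR, ENNReal.mul_top (by simp)]; exact le_top
  have hfin := fun k (hk : k < K) x => ne_top_of_mx hp0 hR hk x
  refine le_trans ?_ (mul_le_mul_left (le_self_add : 4 ^ m * C ≤ 4 ^ m * C + 1) _)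
  refine mx_le_of_fin hp0 fun X => ?_
  -- the values of the averages on `X` only depend on the functions on the finite set `Y`
  set Y := X.biUnion fun x => (range K).biUnion fun k => (range (2 ^ k)).image fun j => x - gam c k j with hY
  set fk : ℕ → (Fin m → ℤ) → ℝ := fun k y => if y ∈ Y then (u k y).toReal else 0 with hfk
  have hfk0 : ∀ k y, 0 ≤ fk k y := by
    intro k y; simp only [hfk]; split_ifs
    · exact ENNReal.toReal_nonneg
    · exact le_rfl
  have hfku : ∀ k < K, ∀ y, ‖fk k y‖ₑ ≤ u k y := by
    intro k hk y
    rw [Real.enorm_of_nonneg (hfk0 k y)]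
    simp only [hfk]; split_ifs
    · rw [ENNReal.ofReal_toReal (hfin k hk y)]
    · simp
  set F : (Fin m → ℤ) → EuclideanSpace ℝ (Fin K) := fun y => WithLp.toLp 2 fun k => fk k y with hF
  have hFs : F.support.Finite := by
    refine Y.finite_toSet.subset fun y hy => ?_
    by_contra hyY
    apply hy
    ext k
    simp only [hF, hfk]
    rw [if_neg (by simpa using hyY)]; rfl
  have hS := hmain K (fun s k => kap c k ∘ₗ (aniso hm c hpos).U k s) (fun s k => hop s k) F hFs K
  set Sx : (Fin m → ℤ) → EuclideanSpace ℝ (Fin K) :=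
    fun x => ∑ s ∈ range K, vecT (fun k : Fin K => kap c k ∘ₗ (aniso hm c hpos).U k s) F x with hSx
  have hcomp : ∀ x (k : Fin K), Sx x k = kap c k (fk k) x := by
    intro x k
    have h1 : Sx x k = ∑ s ∈ range K, kap c k ((aniso hm c hpos).U k s (fk k)) x := by
      simp only [hSx, WithLp.ofLp_sum, Finset.sum_apply]
      rfl
    rw [h1, ← Finset.sum_apply, ← map_sum, Cubes.sum_U _ _ _ k.2]
  have hav : ∀ x ∈ X, ∀ k : Fin K, av c k (u k) x ≤ 4 ^ m * ‖Sx x k‖ₑ := by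
    intro x hx k
    have h1 := avg_le_Kk hpos (2 ^ (k : ℕ)) (fk k) (hfk0 k) x
    have h2 : av c k (u k) x = ENNReal.ofReal ((2 * ((2 ^ (k : ℕ) : ℕ) : ℝ))⁻¹ *
        ∑ j ∈ range (2 ^ (k : ℕ)), fk k (x - fun i => ⌊cpt c (2 ^ (k : ℕ)) j i⌋)) := by
      rw [ENNReal.ofReal_mul (by positivity), ENNReal.ofReal_sum_of_nonneg fun _ _ => hfk0 _ _,
        ENNReal.ofReal_inv_of_pos (by positivity)]
      unfold av
      congr 1
      · congr 1
        rw [ENNReal.ofReal_mul (by norm_num), ENNReal.ofReal_natCast]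
        simp
      · refine sum_congr rfl fun j hj => ?_
        have hmem : x - gam c k j ∈ Y := by
          rw [hY]
          exact mem_biUnion.2 ⟨x, hx, mem_biUnion.2 ⟨k, mem_range.2 k.2, mem_image.2 ⟨j, hj, rfl⟩⟩⟩
        change _ = ENNReal.ofReal (fk k (x - gam c k j))
        simp only [hfk]
        rw [if_pos hmem, ENNReal.ofReal_toReal (hfin k k.2 _)]
    rw [h2, hcomp]
    refine (ENNReal.ofReal_le_ofReal h1).trans ?_
    rw [ENNReal.ofReal_mul (by positivity), kap_apply, ENNReal.ofReal_pow (by norm_num), ENNReal.ofReal_ofNat]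
    exact mul_le_mul_right (Real.ofReal_le_enorm _) _
  have hnm : ∀ x ∈ X, nm K (fun k => av c k (u k) x) ≤ 4 ^ m * ‖Sx x‖ₑ := by
    intro x hx
    rw [nm_le_iff, mul_pow, enorm_sq_eq, mul_sum, Finset.sum_range]
    refine sum_le_sum fun k _ => ?_
    rw [← mul_pow]
    exact pow_le_pow_left' (hav x hx k) 2
  calc (∑ x ∈ X, nm K (fun k => av c k (u k) x) ^ p) ^ (1 / p)
      ≤ (∑ x ∈ X, (4 ^ m * ‖Sx x‖ₑ) ^ p) ^ (1 / p) := by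
        apply ENNReal.rpow_le_rpow _ (by positivity)
        exact sum_le_sum fun x hx => ENNReal.rpow_le_rpow (hnm x hx) hp0.le
    _ ≤ (∑' x, (4 ^ m * ‖Sx x‖ₑ) ^ p) ^ (1 / p) := by
        apply ENNReal.rpow_le_rpow _ (by positivity)
        exact ENNReal.sum_le_tsum X
    _ = 4 ^ m * (∑' x, ‖Sx x‖ₑ ^ p) ^ (1 / p) := by
        simp only [ENNReal.mul_rpow_of_nonneg _ _ hp0.le]
        rw [ENNReal.tsum_mul_left, ENNReal.mul_rpow_of_nonneg _ _ (by positivity), ← ENNReal.rpow_mul,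
          mul_one_div_cancel hp0.ne', ENNReal.rpow_one]
    _ ≤ 4 ^ m * (C * (∑' x, ‖F x‖ₑ ^ p) ^ (1 / p)) := mul_le_mul_right hS _
    _ ≤ 4 ^ m * (C * mx p K u) := by
        apply mul_le_mul_right
        apply mul_le_mul_right
        apply ENNReal.rpow_le_rpow _ (by positivity)
        refine ENNReal.tsum_le_tsum fun x => ENNReal.rpow_le_rpow ?_ hp0.le
        rw [← ENNReal.pow_le_pow_left_iff two_ne_zero, enorm_sq_eq, nm_sq, Finset.sum_range]
        exact sum_le_sum fun k _ => pow_le_pow_left' (hfku k k.2 x) 2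
    _ = _ := (mul_assoc _ _ _).symm

/-! ### The exponent `2` and duality -/

/-- The adjoint of an average is the average itself conjugated by the reflection `x ↦ -x`. -/
theorem avT_eq {m : ℕ} (c : Fin m → ℝ) (k : ℕ) (w : (Fin m → ℤ) → ℝ≥0∞) (x : Fin m → ℤ) :
    avT c k w x = av c k (fun y => w (-y)) (-x) := by
  unfold avT av
  congr 1
  refine sum_congr rfl fun j _ => ?_
  congr 1
  abel

theorem mx_neg {m : ℕ} (p : ℝ) (K : ℕ) (v : ℕ → (Fin m → ℤ) → ℝ≥0∞) :
    mx p K (fun k x => v k (-x)) = mx p K v := by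
  unfold mx
  congr 1
  exact (Equiv.neg (Fin m → ℤ)).tsum_eq (fun x => nm K (fun k => v k x) ^ p)

theorem avT_bound {m : ℕ} {c : Fin m → ℝ} {p : ℝ} {C : ℝ≥0∞} {K : ℕ}
    (h : ∀ u : ℕ → (Fin m → ℤ) → ℝ≥0∞, mx p K (fun k => av c k (u k)) ≤ C * mx p K u)
    (w : ℕ → (Fin m → ℤ) → ℝ≥0∞) : mx p K (fun k => avT c k (w k)) ≤ C * mx p K w := by
  have h1 := h fun k y => w k (-y)
  rw [mx_neg] at h1
  refine le_trans (le_of_eq ?_) h1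
  rw [← mx_neg p K fun k => av c k fun y => w k (-y)]
  congr 1
  ext k x
  exact avT_eq c k (w k) x

/-- Hölder's inequality for the pairing of `ℓ^p(ℓ²)` with `ℓ^q(ℓ²)`. -/
theorem holder_mx {m : ℕ} {p q : ℝ} (hpq : p.HolderConjugate q) (K : ℕ) (a b : ℕ → (Fin m → ℤ) → ℝ≥0∞) :
    ∑' x, ∑ k ∈ range K, a k x * b k x ≤ mx p K a * mx q K b := by
  have h1 : ∀ x, ∑ k ∈ range K, a k x * b k x ≤ nm K (fun k => a k x) * nm K (fun k => b k x) := by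
    intro x
    have := ENNReal.inner_le_Lp_mul_Lq (range K) (fun k => a k x) (fun k => b k x) Real.HolderConjugate.two_two
    simpa only [nm, ENNReal.rpow_two] using this
  refine (ENNReal.tsum_le_tsum h1).trans ?_
  rw [ENNReal.tsum_eq_iSup_sum]
  refine iSup_le fun X => ?_
  refine (ENNReal.inner_le_Lp_mul_Lq X _ _ hpq).trans ?_
  exact mul_le_mul' (ENNReal.rpow_le_rpow (ENNReal.sum_le_tsum X) (one_div_nonneg.2 hpq.nonneg))
    (ENNReal.rpow_le_rpow (ENNReal.sum_le_tsum X) (one_div_nonneg.2 hpq.symm.nonneg))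

theorem av_adj {m : ℕ} (c : Fin m → ℝ) (k : ℕ) (w u : (Fin m → ℤ) → ℝ≥0∞) :
    ∑' x, w x * av c k u x = ∑' x, avT c k w x * u x := by
  have e1 : ∀ x, w x * av c k u x = (2 * 2 ^ k : ℝ≥0∞)⁻¹ * ∑ j ∈ range (2 ^ k), w x * u (x - gam c k j) := by
    intro x; unfold av; rw [← mul_sum]; ring
  have e2 : ∀ x, avT c k w x * u x = (2 * 2 ^ k : ℝ≥0∞)⁻¹ * ∑ j ∈ range (2 ^ k), w (x + gam c k j) * u x := by
    intro x; unfold avT; rw [← sum_mul]; ring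
  simp only [e1, e2]
  rw [ENNReal.tsum_mul_left, ENNReal.tsum_mul_left, Summable.tsum_finsetSum (fun _ _ => ENNReal.summable),
    Summable.tsum_finsetSum (fun _ _ => ENNReal.summable)]
  congr 1
  refine sum_congr rfl fun j _ => ?_
  rw [← (Equiv.addRight (gam c k j)).tsum_eq]
  simp

theorem inv_mul_le_one' (k : ℕ) : (2 * 2 ^ k : ℝ≥0∞)⁻¹ * 2 ^ k ≤ 1 := by
  rw [mul_comm, ← div_eq_mul_inv]
  apply ENNReal.div_le_of_le_mul
  rw [one_mul, two_mul]
  exact le_self_add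

theorem tsum_av_le {m : ℕ} (c : Fin m → ℝ) (k : ℕ) (u : (Fin m → ℤ) → ℝ≥0∞) :
    ∑' x, av c k u x ≤ ∑' x, u x := by
  unfold av
  rw [ENNReal.tsum_mul_left, Summable.tsum_finsetSum (fun _ _ => ENNReal.summable)]
  have : ∀ j ∈ range (2 ^ k), ∑' x, u (x - gam c k j) = ∑' x, u x :=
    fun j _ => (Equiv.subRight (gam c k j)).tsum_eq u
  rw [sum_congr rfl this, sum_const, card_range, nsmul_eq_mul, ← mul_assoc]
  push_cast
  calc _ ≤ 1 * ∑' x, u x := mul_le_mul_left (inv_mul_le_one' k) _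
    _ = _ := one_mul _

/-- Jensen's inequality for the averages, whose weights have total mass at most one. -/
theorem av_sq_le {m : ℕ} (c : Fin m → ℝ) (k : ℕ) (u : (Fin m → ℤ) → ℝ≥0∞) (x : Fin m → ℤ) :
    av c k u x ^ 2 ≤ av c k (fun y => u y ^ 2) x := by
  unfold av
  have h := ENNReal.inner_le_Lp_mul_Lq (range (2 ^ k)) (fun _ => (1 : ℝ≥0∞)) (fun j => u (x - gam c k j))
    Real.HolderConjugate.two_two
  have h2 := pow_le_pow_left' h 2
  rw [mul_pow, ← ENNReal.rpow_natCast, ← ENNReal.rpow_natCast, ← ENNReal.rpow_natCast, ← ENNReal.rpow_mul, ← ENNReal.rpow_mul] at h2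
  norm_num at h2
  rw [mul_pow, sq ((2 * 2 ^ k : ℝ≥0∞)⁻¹), mul_assoc]
  apply mul_le_mul_right
  calc _ ≤ (2 * 2 ^ k : ℝ≥0∞)⁻¹ * (2 ^ k * ∑ j ∈ range (2 ^ k), u (x - gam c k j) ^ 2) := mul_le_mul_right h2 _
    _ ≤ 1 * ∑ j ∈ range (2 ^ k), u (x - gam c k j) ^ 2 := by
        rw [← mul_assoc]; exact mul_le_mul_left (inv_mul_le_one' k) _
    _ = _ := one_mul _

theorem avBound_two {m : ℕ} (c : Fin m → ℝ) : AvBound c 2 := by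
  refine ⟨1, by simp, fun K u => ?_⟩
  rw [one_mul]
  unfold mx
  apply ENNReal.rpow_le_rpow _ (by positivity)
  simp only [ENNReal.rpow_two, nm_sq]
  rw [Summable.tsum_finsetSum (fun _ _ => ENNReal.summable), Summable.tsum_finsetSum (fun _ _ => ENNReal.summable)]
  refine sum_le_sum fun k _ => ?_
  exact (ENNReal.tsum_le_tsum (av_sq_le c k (u k))).trans (tsum_av_le c k _)

/-- Duality: the bound for an exponent `q` implies that for the conjugate exponent `p > 2`. -/
theorem avBound_high {m : ℕ} {c : Fin m → ℝ} {p q : ℝ} (hp : 2 < p) (hpq : p.HolderConjugate q)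
    (hq : AvBound c q) : AvBound c p := by
  classical
  obtain ⟨C, hC, h⟩ := hq
  have hp0 : 0 < p := by linarith
  have hq0 : 0 < q := hpq.symm.pos
  refine ⟨C + 1, by simp [hC], fun K u => ?_⟩
  by_cases hR : mx p K u = ⊤
  · rw [hR, ENNReal.mul_top (by simp)]; exact le_top
  have hfin := fun k (hk : k < K) x => ne_top_of_mx hp0 hR hk x
  refine le_trans ?_ (mul_le_mul_left (le_self_add : C ≤ C + 1) _)
  refine mx_le_of_fin hp0 fun X => ?_
  set R := mx p K u with hRd
  set H : (Fin m → ℤ) → ℝ≥0∞ := fun x => nm K (fun k => av c k (u k) x) with hH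
  have hav : ∀ k < K, ∀ x, av c k (u k) x ≠ ⊤ := by
    intro k hk x
    unfold av
    apply ENNReal.mul_ne_top
    · simp
    · exact ENNReal.sum_ne_top.2 fun j _ => hfin k hk _
  have hHf : ∀ x, H x ≠ ⊤ := by
    intro x
    simp only [hH, nm]
    apply ENNReal.rpow_ne_top_of_nonneg (by norm_num)
    exact ENNReal.sum_ne_top.2 fun k hk => ENNReal.pow_ne_top (hav k (mem_range.1 hk) x)
  set T := ∑ x ∈ X, H x ^ p with hT
  change T ^ (1 / p) ≤ C * R
  have hTf : T ≠ ⊤ := ENNReal.sum_ne_top.2 fun x _ => ENNReal.rpow_ne_top_of_nonneg hp0.le (hHf x)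
  -- the extremal function for the pairing with the averages
  set w : ℕ → (Fin m → ℤ) → ℝ≥0∞ := fun k x => if x ∈ X then H x ^ (p - 2) * av c k (u k) x else 0 with hw
  have hpow : ∀ x, H x ^ (p - 2) * H x ^ 2 = H x ^ p := by
    intro x
    rw [← ENNReal.rpow_two, ← ENNReal.rpow_add_of_nonneg _ _ (by linarith) (by norm_num)]
    congr 1; ring
  have h1 : T ≤ ∑' x, ∑ k ∈ range K, w k x * av c k (u k) x := by
    refine le_trans (le_of_eq ?_) (ENNReal.sum_le_tsum X)
    refine sum_congr rfl fun x hx => ?_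
    simp only [hw, if_pos hx]
    rw [← hpow, hH, nm_sq, mul_sum]
    exact sum_congr rfl fun k _ => by ring
  have h2 : ∑' x, ∑ k ∈ range K, w k x * av c k (u k) x = ∑' x, ∑ k ∈ range K, avT c k (w k) x * u k x := by
    rw [Summable.tsum_finsetSum (fun _ _ => ENNReal.summable), Summable.tsum_finsetSum (fun _ _ => ENNReal.summable)]
    exact sum_congr rfl fun k _ => av_adj c k (w k) (u k)
  have h3 := holder_mx hpq.symm K (fun k => avT c k (w k)) u
  have h4 : mx q K w ≤ T ^ (1 / q) := by
    unfold mx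
    apply ENNReal.rpow_le_rpow _ (by positivity)
    have : ∀ x, nm K (fun k => w k x) ^ q ≤ if x ∈ X then H x ^ p else 0 := by
      intro x
      by_cases hx : x ∈ X
      · rw [if_pos hx]
        have e : nm K (fun k => w k x) ≤ H x ^ (p - 1) := by
          have e1 : H x ^ (p - 1) = H x ^ (p - 2) * H x := by
            nth_rewrite 3 [← ENNReal.rpow_one (H x)]
            rw [← ENNReal.rpow_add_of_nonneg _ _ (by linarith) (by norm_num)]
            congr 1; ring
          rw [nm_le_iff, e1, mul_pow, hH, nm_sq, mul_sum]
          refine sum_le_sum fun k _ => ?_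
          simp only [hw, if_pos hx, mul_pow]
          exact le_rfl
        refine (ENNReal.rpow_le_rpow e hq0.le).trans (le_of_eq ?_)
        rw [← ENNReal.rpow_mul, hpq.sub_one_mul_conj]
      · rw [if_neg hx]
        simp [hw, if_neg hx, nm, hq0]
    refine (ENNReal.tsum_le_tsum this).trans (le_of_eq ?_)
    rw [hT, tsum_eq_sum (s := X)]
    · exact sum_congr rfl fun x hx => if_pos hx
    · intro x hx; exact if_neg hx
  have h5 : T ≤ C * R * T ^ (1 / q) := by
    calc T ≤ mx q K (fun k => avT c k (w k)) * R := h1.trans (h2.le.trans h3)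
      _ ≤ C * T ^ (1 / q) * R := by
          apply mul_le_mul_left
          exact (avT_bound (h K) w).trans (mul_le_mul_right h4 _)
      _ = _ := by ring
  by_cases hT0 : T = 0
  · rw [hT0, ENNReal.zero_rpow_of_pos (by positivity)]; exact zero_le
  have h6 : T = T ^ (1 / p) * T ^ (1 / q) := by
    rw [← ENNReal.rpow_add _ _ hT0 hTf, one_div, one_div, hpq.inv_add_inv_eq_one, ENNReal.rpow_one]
  have hq1 : T ^ (1 / q) ≠ 0 := by
    rw [Ne, ENNReal.rpow_eq_zero_iff]; simp [hT0, hTf]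
  have hq2 : T ^ (1 / q) ≠ ⊤ := ENNReal.rpow_ne_top_of_nonneg (by positivity) hTf
  calc T ^ (1 / p) = T ^ (1 / p) * T ^ (1 / q) * (T ^ (1 / q))⁻¹ := by
        rw [mul_assoc, ENNReal.mul_inv_cancel hq1 hq2, mul_one]
    _ ≤ C * R * T ^ (1 / q) * (T ^ (1 / q))⁻¹ := by
        apply mul_le_mul_left; rw [← h6]; exact h5
    _ = C * R := by rw [mul_assoc, ENNReal.mul_inv_cancel hq1 hq2, mul_one]

/-! ### Conclusion -/

/-- Passage to absolute values. -/
theorem enorm_Atil_le {m : ℕ} (c : Fin m → ℝ) (k : ℕ) (f : (Fin m → ℤ) → ℂ) (x : Fin m → ℤ) :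
    ‖Atil m c (2 ^ (k + 1)) f x‖ₑ ≤ av c k (fun y => ‖f y‖ₑ) x := by
  classical
  unfold Atil av
  rw [enorm_mul]
  have hN : (2 ^ (k + 1) : ℕ) = 2 * 2 ^ k := by rw [pow_succ]; ring
  apply mul_le_mul'
  · rw [enorm_inv (Nat.cast_ne_zero.2 (by positivity))]
    apply le_of_eq
    rw [← ofReal_norm, Complex.norm_natCast, ENNReal.ofReal_natCast, hN]
    push_cast; rfl
  · rw [← sum_filter]
    refine (enorm_sum_le _ _).trans (le_of_eq ?_)
    symm
    -- the summands with `n > N / 2` are those with `n = 2 ^ k + 1 + j`, `j < 2 ^ k`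
    refine sum_bij (fun j _ => 2 ^ k + 1 + j) ?_ ?_ ?_ ?_
    · intro j hj
      simp only [mem_range, mem_filter, mem_Icc] at hj ⊢
      omega
    · intro a _ b _ hab; omega
    · intro n hn
      simp only [mem_filter, mem_Icc] at hn
      exact ⟨n - 2 ^ k - 1, by simp only [mem_range]; omega, by omega⟩
    · intro j _
      congr 3
      ext i
      unfold gam cpt
      push_cast
      rfl

theorem avBound_all {m : ℕ} (hm : 0 < m) (c : Fin m → ℝ) (hpos : ∀ i, 0 < c i) (hinj : Function.Injective c)
    (hni : ∀ i, ∀ k : ℤ, c i ≠ (k : ℝ)) {p : ℝ} (hp : 1 < p) : AvBound c p := by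
  rcases lt_trichotomy p 2 with h | h | h
  · exact avBound_low hm c hpos hinj hni hp h
  · rw [h]; exact avBound_two c
  · have hpq := Real.HolderConjugate.conjExponent hp
    refine avBound_high h hpq (avBound_low hm c hpos hinj hni hpq.symm.lt ?_)
    unfold Real.conjExponent
    rw [div_lt_iff₀ (by linarith)]
    linarith

/-- vector-valued maximal estimate along dyadic scales,
Lemma 6.2 of the paper: for non-integer `0 < c₁ < ⋯ < c_m` and `p ∈ (1,∞)`
there is `C = C(c₁,…,c_m,m,p)` such that for every collection
`{f_k}_{k=1}^∞` of functions on `ℤ^m`,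
`‖(∑_k |Ã_{2^k} f_k|²)^{1/2}‖_{ℓ^p} ≤ C ‖(∑_k |f_k|²)^{1/2}‖_{ℓ^p}`. -/
theorem stmt17 {m : ℕ} (hm : 0 < m) (c : Fin m → ℝ)
    (hpos : ∀ i, 0 < c i) (hmono : StrictMono c)
    (hni : ∀ i, ∀ k : ℤ, c i ≠ (k : ℝ))
    (p : ℝ) (hp : 1 < p) :
    ∃ C : ℝ, 0 < C ∧ ∀ f : ℕ → (Fin m → ℤ) → ℂ,
      lpZE m p (fun x =>
          (∑' k : ℕ, (‖Atil m c (2 ^ (k + 1)) (f k) x‖₊ : ℝ≥0∞) ^ (2 : ℝ)) ^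
            (2 : ℝ)⁻¹) ≤
        ENNReal.ofReal C * lpZE m p (fun x =>
          (∑' k : ℕ, (‖f k x‖₊ : ℝ≥0∞) ^ (2 : ℝ)) ^ (2 : ℝ)⁻¹) := by
  obtain ⟨C, hC, h⟩ := avBound_all hm c hpos hmono.injective hni hp
  have hp0 : 0 < p := by linarith
  refine ⟨C.toReal + 1, by positivity, fun f => ?_⟩
  have hCC : C ≤ ENNReal.ofReal (C.toReal + 1) := by
    rw [← ENNReal.ofReal_toReal hC]
    apply ENNReal.ofReal_le_ofReal
    rw [ENNReal.toReal_ofReal ENNReal.toReal_nonneg]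
    linarith
  refine le_trans ?_ (mul_le_mul_left hCC _)
  set R : ℝ≥0∞ := lpZE m p (fun x => (∑' k : ℕ, (‖f k x‖₊ : ℝ≥0∞) ^ (2 : ℝ)) ^ (2 : ℝ)⁻¹) with hR
  have hmx : ∀ K, mx p K (fun k x => ‖f k x‖ₑ) ≤ R := by
    intro K
    rw [hR]
    unfold mx lpZE nm
    simp only [one_div]
    apply ENNReal.rpow_le_rpow _ (by positivity)
    refine ENNReal.tsum_le_tsum fun x => ENNReal.rpow_le_rpow ?_ hp0.le
    apply ENNReal.rpow_le_rpow _ (by positivity)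
    simp only [ENNReal.rpow_two]
    exact ENNReal.sum_le_tsum (range K)
  unfold lpZE
  rw [ENNReal.rpow_inv_le_iff hp0, ENNReal.tsum_eq_iSup_sum]
  refine iSup_le fun X => ?_
  -- pass to the limit in the number of scales
  have hlim : Tendsto (fun K : ℕ => ∑ x ∈ X, ((∑ k ∈ range K,
      (‖Atil m c (2 ^ (k + 1)) (f k) x‖₊ : ℝ≥0∞) ^ (2 : ℝ)) ^ (2 : ℝ)⁻¹) ^ p) atTop
      (nhds (∑ x ∈ X, ((∑' k : ℕ, (‖Atil m c (2 ^ (k + 1)) (f k) x‖₊ : ℝ≥0∞) ^ (2 : ℝ)) ^ (2 : ℝ)⁻¹) ^ p)) := by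
    refine tendsto_finsetSum X fun x _ => ?_
    exact ((ENNReal.continuous_rpow_const.tendsto _).comp
      ((ENNReal.continuous_rpow_const.tendsto _).comp (ENNReal.tendsto_nat_tsum _)))
  refine le_of_tendsto' hlim fun K => ?_
  rw [← ENNReal.rpow_inv_le_iff hp0]
  calc _ ≤ mx p K (fun k => av c k fun y => ‖f k y‖ₑ) := by
        unfold mx nm
        simp only [one_div]
        apply ENNReal.rpow_le_rpow _ (by positivity)
        refine le_trans (sum_le_sum fun x _ => ?_) (ENNReal.sum_le_tsum X)
        apply ENNReal.rpow_le_rpow _ hp0.le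
        apply ENNReal.rpow_le_rpow _ (by positivity)
        simp only [ENNReal.rpow_two]
        exact sum_le_sum fun k _ => pow_le_pow_left' (enorm_Atil_le c k (f k) x) 2
    _ ≤ C * mx p K (fun k x => ‖f k x‖ₑ) := h K _
    _ ≤ C * R := mul_le_mul_right (hmx K) _

end
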